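/- arXiv:2309.09228 — 9 statements merged into one kernel-verified Lean document; each statement's English description precedes it below -/
import Mathlib

section
/- Let ℓ ≥ 1 be an integer and let G be a connected finite simple graph with n vertices, where n > 3ℓ. Construct a graph G' from G by adding 2ℓ new vertices x₁, …, x_{2ℓ}, each adjacent to every vertex of G (and to no other new vertex). Then G' is Hamiltonian-ℓ-linked if and only if the vertices of G can be covered by ℓ pairwise vertex-disjoint paths. -/
/-!
Linked implies cover: ask for a linkage that pairs up the `2ℓ` new vertices with each other. All
new vertices are then ends of the `ℓ` paths, so deleting the ends leaves `ℓ` disjoint paths of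
`G`, and these are nonempty because new vertices are pairwise nonadjacent (`exists_interior`).

Cover implies linked: let `T` be the set of terminals that are vertices of `G`, so `|T| ≤ 2ℓ`.
Cutting each path of the cover just before each of its vertices in `T` produces paths that begin
at a terminal and contain no other, and at most one free path, without terminals, for each path of
the cover. Since `n ≥ 3ℓ`, at least `ℓ` vertices lie outside `T`, so as long as there are fewer
than `ℓ` free paths some path has at least two vertices and can be cut once more to give another
free path (`IsCutting.succ`). This gives exactly `ℓ` nonempty free paths together with one path
starting at each vertex of `T` (`exists_segments`).

There are as many terminals as new vertices, so there is a bijection `g` from terminals to new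
vertices that fixes every terminal that is a new vertex. The path for the pair `i` consists of the
terminal path of `s i` (empty if `s i` is new), `g (s i)`, the `i`-th free path, `g (t i)`, and the
terminal path of `t i` in reverse (empty if `t i` is new). Consecutive pieces can be joined because
new vertices are adjacent to all vertices of `G`.
-/

open SimpleGraph

/-- `G` has a cover of all its vertices by `m` pairwise vertex-disjoint paths. -/
def HasPathCover {V : Type*} (G : SimpleGraph V) (m : ℕ) : Prop :=
  ∃ (s t : Fin m → V) (P : ∀ i, G.Walk (s i) (t i)),
    (∀ i, (P i).IsPath) ∧
    (∀ i j, i ≠ j → ∀ v, v ∈ (P i).support → v ∉ (P j).support) ∧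
    (∀ v, ∃ i, v ∈ (P i).support)

/-- `G` is Hamiltonian-`ℓ`-linked: it has at least `2ℓ` vertices and for every `2ℓ` distinct
vertices `s₁, …, s_ℓ, t₁, …, t_ℓ` there are `ℓ` pairwise vertex-disjoint paths
`P i : s i — t i` covering all vertices of `G`. -/
def HamiltonianLinked {V : Type*} [Fintype V] (G : SimpleGraph V) (ℓ : ℕ) : Prop :=
  2 * ℓ ≤ Fintype.card V ∧
    ∀ s t : Fin ℓ → V, Function.Injective (Sum.elim s t) →
      ∃ P : ∀ i, G.Walk (s i) (t i),
        (∀ i, (P i).IsPath) ∧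
        (∀ i j, i ≠ j → ∀ v, v ∈ (P i).support → v ∉ (P j).support) ∧
        (∀ v, ∃ i, v ∈ (P i).support)

/-- `G'` obtained from `G` by adding `2ℓ` new vertices `x₁, …, x_{2ℓ}`, each adjacent to
every vertex of `G` and to no other new vertex. -/
def extDominating {V : Type*} (G : SimpleGraph V) (ℓ : ℕ) : SimpleGraph (V ⊕ Fin (2 * ℓ)) :=
  SimpleGraph.fromRel (fun p q =>
    (∃ u v, p = Sum.inl u ∧ q = Sum.inl v ∧ G.Adj u v) ∨
    (∃ (x : Fin (2 * ℓ)) (u : V), p = Sum.inr x ∧ q = Sum.inl u))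

/-! ### Paths from vertex lists, and adjacency in `G'` -/

/-- The path with vertex list `l`, with prescribed endpoints. -/
theorem exists_path_of_list {V : Type*} {G : SimpleGraph V} {a b : V} (l : List V)
    (hc : l.IsChain G.Adj) (hn : l.Nodup) (ha : l.head? = some a) (hb : l.getLast? = some b) :
    ∃ p : G.Walk a b, p.IsPath ∧ p.support = l := by
  have hne : l ≠ [] := by rintro rfl; simp at ha
  obtain rfl : l.head hne = a := by
    rw [List.head?_eq_some_head hne] at ha; exact Option.some.inj ha
  obtain rfl : l.getLast hne = b := by
    rw [List.getLast?_eq_some_getLast hne] at hb; exact Option.some.inj hb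
  refine ⟨Walk.ofSupport l hne hc, ?_, Walk.support_ofSupport hne hc⟩
  rw [Walk.isPath_def, Walk.support_ofSupport]
  exact hn

theorem extDominating_adj_inl {V : Type*} {G : SimpleGraph V} {ℓ : ℕ} {u v : V} :
    (extDominating G ℓ).Adj (Sum.inl u) (Sum.inl v) ↔ G.Adj u v := by
  simp only [extDominating, SimpleGraph.fromRel_adj]
  constructor
  · rintro ⟨-, h⟩
    simp only [Sum.inl.injEq, reduceCtorEq, false_and, exists_false, or_false] at h
    rcases h with ⟨a, b, rfl, rfl, h⟩ | ⟨a, b, rfl, rfl, h⟩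
    · exact h
    · exact h.symm
  · intro h
    exact ⟨fun e => h.ne (Sum.inl.inj e), .inl (.inl ⟨u, v, rfl, rfl, h⟩)⟩

theorem extDominating_adj_inr_inl {V : Type*} {G : SimpleGraph V} {ℓ : ℕ} (x : Fin (2 * ℓ))
    (v : V) : (extDominating G ℓ).Adj (Sum.inr x) (Sum.inl v) := by
  simp [extDominating]

theorem extDominating_adj_inl_inr {V : Type*} {G : SimpleGraph V} {ℓ : ℕ} (x : Fin (2 * ℓ))
    (v : V) : (extDominating G ℓ).Adj (Sum.inl v) (Sum.inr x) :=
  (extDominating_adj_inr_inl x v).symm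

theorem extDominating_not_adj_inr {V : Type*} {G : SimpleGraph V} {ℓ : ℕ} (x y : Fin (2 * ℓ)) :
    ¬ (extDominating G ℓ).Adj (Sum.inr x) (Sum.inr y) := by
  simp [extDominating]

/-! ### Linked graphs yield path covers -/

/-- Removing the two ends of a path of `G'` whose only new vertices are its ends leaves a
nonempty path of `G`, as new vertices are pairwise nonadjacent. -/
theorem exists_interior {V : Type*} {G : SimpleGraph V} {ℓ : ℕ} {x y : Fin (2 * ℓ)} (hxy : x ≠ y)
    (p : (extDominating G ℓ).Walk (Sum.inr x) (Sum.inr y)) (hp : p.IsPath)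
    (hx : ∀ z, Sum.inr z ∈ p.support → z = x ∨ z = y) :
    ∃ (a b : V) (q : G.Walk a b), q.IsPath ∧
      ∀ v, v ∈ q.support ↔ (Sum.inl v : V ⊕ Fin (2 * ℓ)) ∈ p.support := by
  have hc := p.isChain_adj_support
  have hnd := hp.support_nodup
  obtain ⟨m, hm⟩ : ∃ m, p.support = Sum.inr x :: (m ++ [Sum.inr y]) := by
    cases p with
    | nil => exact absurd rfl hxy
    | cons h q =>
      refine ⟨q.support.dropLast, ?_⟩
      rw [Walk.support_cons]
      congr 1
      have := List.dropLast_append_getLast q.support_ne_nil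
      rw [Walk.getLast_support] at this
      exact this.symm
  rw [hm] at hc hnd
  obtain ⟨m', rfl⟩ : ∃ m' : List V, m = m'.map Sum.inl := by
    have : m ∈ Set.range (List.map (Sum.inl : V → V ⊕ Fin (2 * ℓ))) := by
      rw [Set.range_list_map]
      intro w hw
      rcases w with v | z
      · exact ⟨v, rfl⟩
      · exfalso
        have hz : Sum.inr z ∈ p.support := by rw [hm]; simp [hw]
        rcases hx z hz with rfl | rfl
        · simp [hw] at hnd
        · simp [List.nodup_append] at hnd
          exact hnd.2.2 z hw rfl
    obtain ⟨m', h⟩ := this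
    exact ⟨m', h.symm⟩
  have hne : m' ≠ [] := by
    rintro rfl
    simp [extDominating_not_adj_inr] at hc
  have hc' : m'.IsChain G.Adj := by
    have h1 := (List.isChain_append.1 hc.of_cons).1
    rw [List.isChain_map] at h1
    simpa only [extDominating_adj_inl] using h1
  have hnd' : m'.Nodup := by
    have h1 := (List.nodup_append.1 (List.nodup_cons.1 hnd).2).1
    exact h1.of_map _
  obtain ⟨q, hq, hs⟩ := exists_path_of_list m' hc' hnd' (List.head?_eq_some_head hne)
    (List.getLast?_eq_some_getLast hne)
  refine ⟨_, _, q, hq, fun v => ?_⟩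
  rw [hs, hm]
  simp

theorem hasPathCover_of_linked {V : Type*} [Fintype V] (G : SimpleGraph V) (ℓ : ℕ)
    (h : HamiltonianLinked (extDominating G ℓ) ℓ) : HasPathCover G ℓ := by
  let e : Fin ℓ ⊕ Fin ℓ ≃ Fin (2 * ℓ) := finSumFinEquiv.trans (finCongr (two_mul ℓ).symm)
  have hinj : Function.Injective (Sum.elim (fun i => (Sum.inr (e (.inl i)) : V ⊕ Fin (2 * ℓ)))
      (fun i => Sum.inr (e (.inr i)))) := by
    rintro (i | i) (j | j) hij <;> simp_all
  obtain ⟨P, hP, hd, hc⟩ := h.2 _ _ hinj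
  -- Each new vertex is an end of some path, so by disjointness path `i` contains only its own ends.
  have key : ∀ i, ∃ (a b : V) (q : G.Walk a b), q.IsPath ∧
      ∀ v, v ∈ q.support ↔ (Sum.inl v : V ⊕ Fin (2 * ℓ)) ∈ (P i).support := by
    intro i
    refine exists_interior (by simp) (P i) (hP i) fun z hz => ?_
    obtain ⟨j | j, rfl⟩ := e.surjective z
    · left
      by_contra hne
      exact hd i j (by rintro rfl; exact hne rfl) _ hz (P j).start_mem_support
    · right
      by_contra hne
      exact hd i j (by rintro rfl; exact hne rfl) _ hz (P j).end_mem_support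
  choose a b q hq hs using key
  refine ⟨a, b, q, hq, fun i j hij v hi hj => ?_, fun v => ?_⟩
  · exact hd i j hij _ ((hs i v).1 hi) ((hs j v).1 hj)
  · obtain ⟨i, hi⟩ := hc (.inl v)
    exact ⟨i, (hs i v).2 hi⟩

/-! ### Cutting a path cover at the terminals -/

/-- A partition of the vertices listed in `l` into paths of `G` of two kinds: the free paths `F`
are nonempty and avoid `T`, and each of the paths `Q` meets `T` in its first vertex only.
Paths are vertex lists; that they are disjoint and do not repeat vertices is encoded in `perm`, for
`l` without repetitions. -/
structure IsCutting {V : Type*} (G : SimpleGraph V) (T : Set V) (l : List V)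
    (F Q : List (List V)) : Prop where
  perm : (F.flatten ++ Q.flatten).Perm l
  free : ∀ f ∈ F, f.IsChain G.Adj ∧ f ≠ [] ∧ ∀ v ∈ f, v ∉ T
  term : ∀ q ∈ Q, q.IsChain G.Adj ∧ ∃ u tl, q = u :: tl ∧ u ∈ T ∧ ∀ v ∈ tl, v ∉ T

/-- Cutting one path just before each of its vertices in `T`. -/
theorem exists_cut_path {V : Type*} (G : SimpleGraph V) (T : Set V) (p : List V)
    (hp : p.IsChain G.Adj) :
    ∃ (f : List V) (Q : List (List V)), p = f ++ Q.flatten ∧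
      (f.IsChain G.Adj ∧ ∀ v ∈ f, v ∉ T) ∧
      ∀ q ∈ Q, q.IsChain G.Adj ∧ ∃ u tl, q = u :: tl ∧ u ∈ T ∧ ∀ v ∈ tl, v ∉ T := by
  induction p with
  | nil => exact ⟨[], [], by simp⟩
  | cons a p ih =>
    obtain ⟨f, Q, rfl, ⟨hf, hfT⟩, hQ⟩ := ih hp.of_cons
    have haf : (a :: f).IsChain G.Adj := by
      rw [← List.cons_append] at hp
      exact (List.isChain_append.1 hp).1
    by_cases ha : a ∈ T
    · refine ⟨[], (a :: f) :: Q, by simp, by simp, ?_⟩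
      intro q hq
      rcases List.mem_cons.1 hq with rfl | hq
      · exact ⟨haf, a, f, rfl, ha, hfT⟩
      · exact hQ q hq
    · refine ⟨a :: f, Q, by simp, ⟨haf, ?_⟩, hQ⟩
      intro v hv
      rcases List.mem_cons.1 hv with rfl | hv
      · exact ha
      · exact hfT v hv

/-- Cutting every path just before its vertices in `T` leaves at most one free path for each. -/
theorem exists_cutting {V : Type*} [DecidableEq V] (G : SimpleGraph V) (T : Set V)
    (L : List (List V)) (hL : ∀ p ∈ L, p.IsChain G.Adj) :
    ∃ F Q, IsCutting G T L.flatten F Q ∧ F.length ≤ L.length := by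
  induction L with
  | nil => exact ⟨[], [], ⟨by simp, by simp, by simp⟩, le_rfl⟩
  | cons p L ih =>
    obtain ⟨F, Q, ⟨h1, h2, h3⟩, hlen⟩ := ih fun q hq => hL q (by simp [hq])
    obtain ⟨f, Q', rfl, hf, hQ'⟩ := exists_cut_path G T p (hL p (by simp))
    have hterm : ∀ q ∈ Q' ++ Q,
        q.IsChain G.Adj ∧ ∃ u tl, q = u :: tl ∧ u ∈ T ∧ ∀ v ∈ tl, v ∉ T := by
      intro q hq
      rcases List.mem_append.1 hq with hq | hq
      · exact hQ' q hq
      · exact h3 q hq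
    rw [List.perm_iff_count] at h1
    by_cases hne : f = []
    · subst hne
      refine ⟨F, Q' ++ Q, ⟨?_, h2, hterm⟩, by simp; omega⟩
      rw [List.perm_iff_count]
      intro a
      have := h1 a
      simp only [List.flatten_cons, List.flatten_append, List.count_append, List.count_nil]
        at this ⊢
      omega
    · refine ⟨f :: F, Q' ++ Q, ⟨?_, ?_, hterm⟩, by simp; omega⟩
      · rw [List.perm_iff_count]
        intro a
        have := h1 a
        simp only [List.flatten_cons, List.flatten_append, List.count_append] at this ⊢
        omega
      · intro g hg
        rcases List.mem_cons.1 hg with rfl | hg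
        · exact ⟨hf.1, hne, hf.2⟩
        · exact h2 g hg

/-- One more cut: some path of the cutting has a second vertex, since otherwise there would be at
least as many free paths as vertices in `S`. Cutting after the first vertex of such a path adds a
free path, because only that vertex can be in `T`. -/
theorem IsCutting.succ {V : Type*} [DecidableEq V] {G : SimpleGraph V} {T : Finset V}
    {l : List V} {F Q : List (List V)} (h : IsCutting G T l F Q) (S : Finset V)
    (hS : ∀ v ∈ S, v ∈ l ∧ v ∉ T) (hlt : F.length < S.card) :
    ∃ F' Q', IsCutting G T l F' Q' ∧ F'.length = F.length + 1 := by
  obtain ⟨h1, h2, h3⟩ := h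
  by_cases hF : ∃ f ∈ F, ∃ a b c, f = a :: b :: c
  · obtain ⟨_, hf, a, b, c, rfl⟩ := hF
    obtain ⟨A, B, rfl⟩ := List.append_of_mem hf
    have h0 := h2 _ hf
    refine ⟨[a] :: (b :: c) :: (A ++ B), Q, ⟨?_, ?_, h3⟩, by simp; omega⟩
    · rw [List.perm_iff_count] at h1 ⊢
      intro v
      have := h1 v
      simp only [List.flatten_cons, List.flatten_append, List.count_append, List.count_cons,
        List.count_nil] at this ⊢
      omega
    · intro g hg
      simp only [List.mem_cons, List.mem_append] at hg
      rcases hg with rfl | rfl | hg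
      · exact ⟨by simp, by simp, fun v hv => h0.2.2 v (by simp_all)⟩
      · exact ⟨h0.1.of_cons, by simp, fun v hv => h0.2.2 v (List.mem_cons_of_mem _ hv)⟩
      · exact h2 g (by simp only [List.mem_append, List.mem_cons]; tauto)
  by_cases hQ : ∃ q ∈ Q, ∃ a b c, q = a :: b :: c
  · obtain ⟨_, hq, a, b, c, rfl⟩ := hQ
    obtain ⟨A, B, rfl⟩ := List.append_of_mem hq
    obtain ⟨hch, u, tl, he, hu, htl⟩ := h3 _ hq
    obtain ⟨rfl, rfl⟩ := List.cons.inj he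
    refine ⟨(b :: c) :: F, [a] :: (A ++ B), ⟨?_, ?_, ?_⟩, by simp⟩
    · rw [List.perm_iff_count] at h1 ⊢
      intro v
      have := h1 v
      simp only [List.flatten_cons, List.flatten_append, List.count_append, List.count_cons,
        List.count_nil] at this ⊢
      omega
    · intro g hg
      rcases List.mem_cons.1 hg with rfl | hg
      · exact ⟨hch.of_cons, by simp, htl⟩
      · exact h2 g hg
    · intro g hg
      simp only [List.mem_cons, List.mem_append] at hg
      rcases hg with rfl | hg
      · exact ⟨by simp, a, [], rfl, hu, by simp⟩
      · exact h3 g (by simp only [List.mem_append, List.mem_cons]; tauto)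
  -- All paths are singletons, so every vertex of `S` is a free path of its own.
  exfalso
  have hsub : S ⊆ (F.flatten).toFinset := by
    intro v hv
    obtain ⟨hvl, hvT⟩ := hS v hv
    rcases List.mem_append.1 (h1.mem_iff.2 hvl) with hv' | hv'
    · simpa using hv'
    · exfalso
      obtain ⟨q, hq, hvq⟩ := List.mem_flatten.1 hv'
      obtain ⟨-, u, tl, rfl, hu, -⟩ := h3 q hq
      cases tl with
      | nil => simp at hvq; subst hvq; exact hvT hu
      | cons b c => exact hQ ⟨_, hq, u, b, c, rfl⟩
  have hlen : F.flatten.length ≤ F.length := by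
    rw [List.length_flatten]
    have : (F.map List.length).sum ≤ (F.map List.length).length • 1 := by
      apply List.sum_le_card_nsmul
      intro n hn
      obtain ⟨f, hf, rfl⟩ := List.mem_map.1 hn
      match f, hf with
      | [], _ => simp
      | [a], _ => simp
      | a :: b :: c, hf => exact absurd ⟨_, hf, a, b, c, rfl⟩ hF
    simpa using this
  have := (Finset.card_le_card hsub).trans (List.toFinset_card_le _)
  omega

/-- A cutting with as many free paths as there were paths to start with. The set `S` witnesses
that enough vertices lie outside `T`. -/
theorem exists_cutting_length {V : Type*} [DecidableEq V] {G : SimpleGraph V} {T : Finset V}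
    (L : List (List V)) (hL : ∀ p ∈ L, p.IsChain G.Adj) (S : Finset V)
    (hS : ∀ v ∈ S, v ∈ L.flatten ∧ v ∉ T) (hle : L.length ≤ S.card) :
    ∃ F Q, IsCutting G T L.flatten F Q ∧ F.length = L.length := by
  obtain ⟨F₀, Q₀, h₀, hlen⟩ := exists_cutting G (T : Set V) L hL
  have : ∀ d, F₀.length + d ≤ L.length →
      ∃ F Q, IsCutting G T L.flatten F Q ∧ F.length = F₀.length + d := by
    intro d
    induction d with
    | zero => exact fun _ => ⟨F₀, Q₀, h₀, rfl⟩
    | succ d ih =>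
      intro hd
      obtain ⟨F, Q, h, hF⟩ := ih (by omega)
      obtain ⟨F', Q', h', hF'⟩ := h.succ S hS (by omega)
      exact ⟨F', Q', h', by omega⟩
  obtain ⟨F, Q, h, hF⟩ := this (L.length - F₀.length) (by omega)
  exact ⟨F, Q, h, by omega⟩

theorem eq_of_mem_of_nodup_flatten {V : Type*} {L : List (List V)} (h : L.flatten.Nodup)
    {p q : List V} (hp : p ∈ L) (hq : q ∈ L) {v : V} (hvp : v ∈ p) (hvq : v ∈ q) : p = q := by
  by_contra hne
  have h2 := (List.nodup_flatten.1 h).2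
  have : Std.Symm (List.Disjoint (α := V)) := ⟨fun _ _ h => h.symm⟩
  exact h2.forall hp hq hne hvp hvq

/-- If `n ≥ 3ℓ`, every path cover with `ℓ` paths can be recut into `ℓ` nonempty free paths `F i` and one path
`W j` for each terminal `e j`: the path `W j` starts at `e j` if that is a vertex of `G`, and is
empty if `e j` is a new vertex. -/
theorem exists_segments {V : Type*} [Fintype V] [DecidableEq V] (G : SimpleGraph V) (ℓ : ℕ)
    (hn : 3 * ℓ ≤ Fintype.card V) (hG : HasPathCover G ℓ) {X : Type*}
    (e : Fin ℓ ⊕ Fin ℓ → V ⊕ X) (he : Function.Injective e) :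
    ∃ (W : Fin ℓ ⊕ Fin ℓ → List V) (F : Fin ℓ → List V),
      (∀ j, (W j).IsChain G.Adj ∧ (W j).Nodup) ∧
      (∀ i, (F i).IsChain G.Adj ∧ (F i).Nodup ∧ F i ≠ []) ∧
      (∀ j u, e j = .inl u → ∃ tl, W j = u :: tl) ∧
      (∀ j x, e j = .inr x → W j = []) ∧
      (∀ j k v, v ∈ W j → v ∈ W k → j = k) ∧
      (∀ j k v, v ∈ F j → v ∈ F k → j = k) ∧
      (∀ j k v, v ∈ W j → v ∉ F k) ∧
      (∀ v, (∃ j, v ∈ W j) ∨ ∃ i, v ∈ F i) := by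
  obtain ⟨s, t, P, hP, hd, hc⟩ := hG
  set L : List (List V) := List.ofFn fun i => (P i).support with hLdef
  have hLlen : L.length = ℓ := by simp [L]
  have hLmem : ∀ v, v ∈ L.flatten := by
    intro v
    obtain ⟨i, hi⟩ := hc v
    exact List.mem_flatten.2 ⟨_, by simp [L, List.mem_ofFn], hi⟩
  have hLnd : L.flatten.Nodup := by
    rw [List.nodup_flatten]
    constructor
    · intro p hp
      obtain ⟨i, rfl⟩ := List.mem_ofFn.1 hp
      exact (hP i).support_nodup
    · rw [List.pairwise_ofFn]
      intro i j hij v hi hj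
      exact hd i j hij.ne v hi hj
  have hLch : ∀ p ∈ L, p.IsChain G.Adj := by
    intro p hp
    obtain ⟨i, rfl⟩ := List.mem_ofFn.1 hp
    exact (P i).isChain_adj_support
  classical
  let T : Finset V := (Finset.univ.image e).preimage Sum.inl Sum.inl_injective.injOn
  have hTmem : ∀ v, v ∈ T ↔ ∃ j, e j = .inl v := by intro v; simp [T]
  have hTcard : T.card ≤ 2 * ℓ := by
    have h1 : (T.map ⟨(Sum.inl : V → V ⊕ X), Sum.inl_injective⟩).card
        ≤ (Finset.univ.image e).card := by
      apply Finset.card_le_card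
      intro w hw
      obtain ⟨v, hv, rfl⟩ := Finset.mem_map.1 hw
      simpa [hTmem] using hv
    have h2 : (Finset.univ.image e).card ≤ 2 * ℓ :=
      Finset.card_image_le.trans (by simp [two_mul])
    simpa using h1.trans h2
  obtain ⟨F, Q, ⟨hperm, hF, hQ⟩, hlen⟩ := exists_cutting_length (G := G) (T := T) L hLch Tᶜ
    (fun v hv => ⟨hLmem v, Finset.mem_compl.1 hv⟩)
    (by rw [Finset.card_compl]; omega)
  have hnd : (F.flatten ++ Q.flatten).Nodup := hperm.nodup_iff.2 hLnd
  have hmem : ∀ v, v ∈ F.flatten ∨ v ∈ Q.flatten := fun v =>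
    List.mem_append.1 (hperm.mem_iff.2 (hLmem v))
  obtain ⟨hFnd, hQnd, hFQ⟩ := List.nodup_append.1 hnd
  have hlen' : F.length = ℓ := hlen.trans hLlen
  have hW : ∀ j, ∃ w : List V, (∀ u, e j = .inl u → w ∈ Q ∧ ∃ tl, w = u :: tl) ∧
      ∀ x, e j = .inr x → w = [] := by
    intro j
    rcases hj : e j with u | x
    · have huT : u ∈ T := (hTmem u).2 ⟨j, hj⟩
      rcases hmem u with hu | hu
      · obtain ⟨f, hf, huf⟩ := List.mem_flatten.1 hu
        exact absurd huT ((hF f hf).2.2 u huf)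
      · obtain ⟨q, hq, huq⟩ := List.mem_flatten.1 hu
        obtain ⟨-, u', tl, rfl, hu', htl⟩ := hQ q hq
        rcases List.mem_cons.1 huq with rfl | h
        · refine ⟨u :: tl, ?_, by simp⟩
          rintro _ ⟨⟩
          exact ⟨hq, tl, rfl⟩
        · exact absurd huT (htl u h)
    · exact ⟨[], by simp, by simp⟩
  choose W hWl hWr using hW
  have hWQ : ∀ j v, v ∈ W j → W j ∈ Q ∧ ∃ u, e j = .inl u := by
    intro j v hv
    rcases hj : e j with u | x
    · exact ⟨(hWl j u hj).1, u, rfl⟩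
    · rw [hWr j x hj] at hv; simp at hv
  have hFnd' : ∀ i : Fin F.length, F.get i ∈ F := fun i => List.get_mem _ _
  refine ⟨W, fun i => F.get (i.cast hlen'.symm), fun j => ?_, fun i => ?_,
    fun j u h => (hWl j u h).2, hWr, ?_, ?_, ?_, ?_⟩
  · rcases hj : e j with u | x
    · have := (hWl j u hj).1
      exact ⟨(hQ _ this).1, (List.nodup_flatten.1 hQnd).1 _ this⟩
    · rw [hWr j x hj]; simp
  · have := hFnd' (i.cast hlen'.symm)
    exact ⟨(hF _ this).1, (List.nodup_flatten.1 hFnd).1 _ this, (hF _ this).2.1⟩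
  · intro j k v hj hk
    obtain ⟨hjQ, u, hu⟩ := hWQ j v hj
    obtain ⟨hkQ, u', hu'⟩ := hWQ k v hk
    have heq := eq_of_mem_of_nodup_flatten hQnd hjQ hkQ hj hk
    obtain ⟨-, tl, h⟩ := hWl j u hu
    obtain ⟨-, tl', h'⟩ := hWl k u' hu'
    rw [h, h'] at heq
    obtain ⟨rfl, -⟩ := List.cons.inj heq
    exact he (hu.trans hu'.symm)
  · intro j k v hj hk
    have h2 := (List.nodup_flatten.1 hFnd).2
    rw [List.pairwise_iff_get] at h2
    by_contra hne
    rcases lt_or_gt_of_ne hne with h | h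
    · exact h2 (j.cast hlen'.symm) (k.cast hlen'.symm) h hj hk
    · exact h2 (k.cast hlen'.symm) (j.cast hlen'.symm) h hk hj
  · intro j k v hj hk
    exact hFQ v (List.mem_flatten.2 ⟨_, hFnd' _, hk⟩) v
      (List.mem_flatten.2 ⟨_, (hWQ j v hj).1, hj⟩) rfl
  · intro v
    rcases hmem v with h | h
    · right
      obtain ⟨f, hf, hvf⟩ := List.mem_flatten.1 h
      obtain ⟨i, rfl⟩ := List.get_of_mem hf
      exact ⟨i.cast hlen', hvf⟩
    · left
      obtain ⟨q, hq, hvq⟩ := List.mem_flatten.1 h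
      obtain ⟨-, u, tl, rfl, hu, -⟩ := hQ q hq
      obtain ⟨j, hj⟩ := (hTmem u).1 hu
      obtain ⟨hjQ, tl', h'⟩ := hWl j u hj
      refine ⟨j, ?_⟩
      rw [eq_of_mem_of_nodup_flatten hQnd hjQ hq (v := u) (by simp [h']) (by simp)]
      exact hvq

/-! ### Assembling the linkage -/

/-- The vertex list consisting of `W₁`, `x`, `F`, `y` and the reverse of `W₂`: the free path `F` is
joined to the terminal paths `W₁` and `W₂` through the new vertices `x` and `y`. -/
def joinList {V : Type*} {ℓ : ℕ} (W₁ F W₂ : List V) (x y : Fin (2 * ℓ)) :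
    List (V ⊕ Fin (2 * ℓ)) :=
  W₁.map .inl ++ (.inr x :: (F.map .inl ++ (.inr y :: W₂.reverse.map .inl)))

theorem inl_mem_joinList {V : Type*} {ℓ : ℕ} {W₁ F W₂ : List V} {x y : Fin (2 * ℓ)} {v : V} :
    .inl v ∈ joinList W₁ F W₂ x y ↔ v ∈ W₁ ∨ v ∈ F ∨ v ∈ W₂ := by
  simp [joinList]

theorem inr_mem_joinList {V : Type*} {ℓ : ℕ} {W₁ F W₂ : List V} {x y z : Fin (2 * ℓ)} :
    .inr z ∈ joinList W₁ F W₂ x y ↔ z = x ∨ z = y := by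
  simp [joinList]

theorem isChain_map_inl {V : Type*} {G : SimpleGraph V} {ℓ : ℕ} {l : List V}
    (h : l.IsChain G.Adj) :
    (l.map (Sum.inl : V → V ⊕ Fin (2 * ℓ))).IsChain (extDominating G ℓ).Adj := by
  rw [List.isChain_map]
  simpa only [extDominating_adj_inl] using h

theorem isChain_joinList {V : Type*} {G : SimpleGraph V} {ℓ : ℕ} {W₁ F W₂ : List V}
    {x y : Fin (2 * ℓ)} (h₁ : W₁.IsChain G.Adj) (hF : F.IsChain G.Adj) (h₂ : W₂.IsChain G.Adj)
    (hne : F ≠ []) : (joinList W₁ F W₂ x y).IsChain (extDominating G ℓ).Adj := by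
  have h₂' : W₂.reverse.IsChain G.Adj := by
    rw [List.isChain_reverse]
    simpa only [flip, SimpleGraph.adj_comm] using h₂
  have e₂ : (Sum.inr y :: W₂.reverse.map Sum.inl).IsChain (extDominating G ℓ).Adj := by
    refine List.IsChain.cons (isChain_map_inl h₂') ?_
    intro w hw
    simp only [List.head?_map, Option.mem_def, Option.map_eq_some_iff] at hw
    obtain ⟨v, -, rfl⟩ := hw
    exact extDominating_adj_inr_inl y v
  have e₁ : (F.map Sum.inl ++ (Sum.inr y :: W₂.reverse.map Sum.inl)).IsChain
      (extDominating G ℓ).Adj := by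
    refine List.isChain_append.2 ⟨isChain_map_inl hF, e₂, ?_⟩
    intro a ha b hb
    simp only [List.getLast?_map, Option.mem_def, Option.map_eq_some_iff] at ha
    obtain ⟨v, -, rfl⟩ := ha
    simp only [List.head?_cons, Option.mem_def, Option.some.injEq] at hb
    subst hb
    exact extDominating_adj_inl_inr y v
  refine List.isChain_append.2 ⟨isChain_map_inl h₁, List.IsChain.cons e₁ ?_, ?_⟩
  · intro w hw
    obtain ⟨f, F', rfl⟩ := List.exists_cons_of_ne_nil hne
    simp only [List.map_cons, List.cons_append, List.head?_cons, Option.mem_def,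
      Option.some.injEq] at hw
    subst hw
    exact extDominating_adj_inr_inl x f
  · intro a ha b hb
    simp only [List.getLast?_map, Option.mem_def, Option.map_eq_some_iff] at ha
    obtain ⟨v, -, rfl⟩ := ha
    simp only [List.head?_cons, Option.mem_def, Option.some.injEq] at hb
    subst hb
    exact extDominating_adj_inl_inr x v

theorem nodup_joinList {V : Type*} {ℓ : ℕ} {W₁ F W₂ : List V} {x y : Fin (2 * ℓ)}
    (h₁ : W₁.Nodup) (hF : F.Nodup) (h₂ : W₂.Nodup) (hxy : x ≠ y)
    (h₁F : ∀ v ∈ W₁, v ∉ F) (h₂F : ∀ v ∈ W₂, v ∉ F) (h₁₂ : ∀ v ∈ W₁, v ∉ W₂) :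
    (joinList W₁ F W₂ x y).Nodup := by
  have hm : ∀ {l : List V}, l.Nodup → (l.map (Sum.inl : V → V ⊕ Fin (2 * ℓ))).Nodup :=
    fun h => h.map Sum.inl_injective
  unfold joinList
  refine List.nodup_append'.2 ⟨hm h₁, List.nodup_cons.2 ⟨by simp [hxy],
    List.nodup_append'.2 ⟨hm hF, List.nodup_cons.2 ⟨by simp, hm (by simpa using h₂)⟩, ?_⟩⟩, ?_⟩
  · intro w hw hw'
    obtain ⟨v, hv, rfl⟩ := List.mem_map.1 hw
    simp at hw'
    exact h₂F v hw' hv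
  · intro w hw hw'
    obtain ⟨v, hv, rfl⟩ := List.mem_map.1 hw
    simp at hw'
    exact hw'.elim (h₁F v hv) (h₁₂ v hv)

theorem linked_of_hasPathCover {V : Type*} [Fintype V] [DecidableEq V] (G : SimpleGraph V)
    (ℓ : ℕ) (hn : 3 * ℓ ≤ Fintype.card V) (hG : HasPathCover G ℓ) :
    HamiltonianLinked (extDominating G ℓ) ℓ := by
  refine ⟨by simp, fun s t hst => ?_⟩
  set e : Fin ℓ ⊕ Fin ℓ → V ⊕ Fin (2 * ℓ) := Sum.elim s t with he
  obtain ⟨W, F, hW, hF, hWl, hWr, hWW, hFF, hWF, hcov⟩ := exists_segments G ℓ hn hG e hst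
  -- A bijection from terminals to new vertices, fixing the terminals that are new vertices.
  obtain ⟨g, hg⟩ : ∃ g : Fin ℓ ⊕ Fin ℓ ≃ Fin (2 * ℓ), ∀ j x, e j = .inr x → g j = x := by
    rcases Nat.eq_zero_or_pos ℓ with rfl | hpos
    · exact ⟨finSumFinEquiv.trans (finCongr (by simp)), fun j => isEmptyElim j⟩
    -- The value `0` at terminals in `G` is arbitrary: only the values at new vertices are extended.
    let f : Fin ℓ ⊕ Fin ℓ → Fin (2 * ℓ) := fun j => Sum.elim (fun _ => ⟨0, by omega⟩) id (e j)
    have hf : ∀ j x, e j = .inr x → f j = x := fun j x h => by simp [f, h]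
    obtain ⟨g, hg⟩ := Finset.exists_equiv_extend_of_card_eq
      (t := (Finset.univ : Finset (Fin (2 * ℓ)))) (α := Fin ℓ ⊕ Fin ℓ) (by simp [two_mul])
      (s := Finset.univ.filter fun j => (e j).isRight) (f := f) (by simp) (by
        intro j hj k hk hjk
        simp only [Finset.coe_filter, Finset.mem_univ, true_and, Set.mem_ofPred_eq,
          Sum.isRight_iff] at hj hk
        obtain ⟨x, hx⟩ := hj
        obtain ⟨y, hy⟩ := hk
        rw [hf j x hx, hf k y hy] at hjk
        exact hst (by rw [hx, hy, hjk]))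
    refine ⟨g.trans (Equiv.subtypeUnivEquiv (by simp)), fun j x h => ?_⟩
    rw [← hf j x h]
    exact hg j (by simp [h])
  let p : Fin ℓ → List (V ⊕ Fin (2 * ℓ)) := fun i =>
    joinList (W (.inl i)) (F i) (W (.inr i)) (g (.inl i)) (g (.inr i))
  have hpath : ∀ i, ∃ P : (extDominating G ℓ).Walk (s i) (t i), P.IsPath ∧ P.support = p i := by
    intro i
    refine exists_path_of_list (p i) ?_ ?_ ?_ ?_
    · exact isChain_joinList (hW _).1 (hF i).1 (hW _).1 (hF i).2.2
    · refine nodup_joinList (hW _).2 (hF i).2.1 (hW _).2 (by simp) (fun v h => hWF _ _ v h)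
        (fun v h => hWF _ _ v h) (fun v h h' => ?_)
      simpa using hWW _ _ v h h'
    · have hs : e (.inl i) = s i := rfl
      rcases hi : s i with u | x
      · obtain ⟨tl, h⟩ := hWl (.inl i) u (hs.trans hi)
        simp [p, joinList, h]
      · have h := hWr (.inl i) x (hs.trans hi)
        have h' := hg (.inl i) x (hs.trans hi)
        simp [p, joinList, h, h']
    · have hs : e (.inr i) = t i := rfl
      rcases hi : t i with u | x
      · obtain ⟨tl, h⟩ := hWl (.inr i) u (hs.trans hi)
        simp [p, joinList, h, List.getLast?_append, List.getLast?_cons]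
      · have h := hWr (.inr i) x (hs.trans hi)
        have h' := hg (.inr i) x (hs.trans hi)
        simp [p, joinList, h, h', List.getLast?_append, List.getLast?_cons]
  choose P hP hs using hpath
  refine ⟨P, hP, fun i j hij v hi hj => hij ?_, fun v => ?_⟩
  · rw [hs] at hi hj
    rcases v with v | z
    · rw [inl_mem_joinList] at hi hj
      rcases hi with hi | hi | hi <;> rcases hj with hj | hj | hj
      · simpa using hWW _ _ v hi hj
      · exact absurd hj (hWF _ _ v hi)
      · simpa using hWW _ _ v hi hj
      · exact absurd hi (hWF _ _ v hj)
      · exact hFF _ _ v hi hj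
      · exact absurd hi (hWF _ _ v hj)
      · simpa using hWW _ _ v hi hj
      · exact absurd hj (hWF _ _ v hi)
      · simpa using hWW _ _ v hi hj
    · rw [inr_mem_joinList] at hi hj
      rcases hi with rfl | rfl <;> rcases hj with hj | hj
      · exact Sum.inl.inj (g.injective hj)
      · exact absurd (g.injective hj) Sum.inl_ne_inr
      · exact absurd (g.injective hj) Sum.inr_ne_inl
      · exact Sum.inr.inj (g.injective hj)
  · rcases v with v | z
    · rcases hcov v with ⟨i | i, h⟩ | ⟨i, h⟩ <;> refine ⟨i, ?_⟩ <;> rw [hs, inl_mem_joinList]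
      · exact .inl h
      · exact .inr (.inr h)
      · exact .inr (.inl h)
    · obtain ⟨i | i, rfl⟩ := g.surjective z <;> refine ⟨i, ?_⟩ <;> rw [hs, inr_mem_joinList]
      · exact .inl rfl
      · exact .inr rfl

/-- For a connected graph `G` with more than `3ℓ` vertices, `G'` is Hamiltonian-`ℓ`-linked
iff the vertices of `G` can be covered by `ℓ` pairwise vertex-disjoint paths. -/
theorem statement8 {V : Type*} [Fintype V] [DecidableEq V] (G : SimpleGraph V)
    (hG : G.Connected) (ℓ : ℕ) (hℓ : 1 ≤ ℓ) (hn : 3 * ℓ < Fintype.card V) :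
    HamiltonianLinked (extDominating G ℓ) ℓ ↔ HasPathCover G ℓ :=
  ⟨hasPathCover_of_linked G ℓ, linked_of_hasPathCover G ℓ hn.le⟩
end

section
/- Let G be a connected finite simple graph with independence number α(G) ≤ 2 (i.e., G is 3K₁-free) and let u, v be distinct vertices of G. Then G has a Hamiltonian path with endpoints u and v if and only if all three of the following hold: (a) neither u nor v is an articulation point of G; (b) for every articulation point x of G, the vertices u and v lie in different connected components of G − {x}; and (c) the set {u, v} is not a vertex cut of G, i.e., G − {u, v} is not disconnected. -/
/-!
Necessity holds in every graph: deleting one or both ends of a Hamiltonian path leaves a path, and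
deleting an inner vertex `x` leaves two paths, one containing `u` and the other containing `v`.

Sufficiency is by induction on the number of vertices. Connectivity is expressed through cuts:
partitions of the vertex set into two nonempty parts with no edge between them. As `α(G) ≤ 2`, both
sides of a cut are cliques. For a vertex set `S` satisfying the conditions for `u, v`, put
`H = S ∖ {u}`; it suffices to find a neighbour `u' ≠ v` of `u` such that `H` satisfies the
conditions for `u', v`.

* If `H` has an articulation point, take an articulation point `x` and a cut `A, B` of `H ∖ {x}`
  with `v ∈ B` and `A` of least size. Condition (b) gives `u` a neighbour `u' ∈ A`, and minimality
  of `A` shows that `u'` is not an articulation point of `H` (`exists_next_of_articulation`).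
* If `H` has no articulation point, the only condition to secure is that `H ∖ {u', v}` is connected.
  If some neighbour `w ≠ v` of `u` violates this, with cut `A, B` of `H ∖ {w, v}`, then by
  `α(G) ≤ 2` the vertex `u` is adjacent to a whole side, say `A`. A vertex `u' ∈ A` for which `w`
  keeps a neighbour in `A ∖ {u'}`, or for which `A = {u'}`, works
  (`exists_next_of_no_articulation`).
-/

open SimpleGraph

/-- `x` is an articulation point of `G`: deleting `x` leaves a disconnected graph. -/
def IsArticulation {V : Type*} (G : SimpleGraph V) (x : V) : Prop :=
  ¬ (G.induce ({x}ᶜ : Set V)).Preconnected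

namespace HamPath

variable {V : Type*} {G : SimpleGraph V}

/-! ### Hamiltonian paths yield the three conditions -/

theorem eq_of_mem_takeUntil_of_mem_dropUntil [DecidableEq V] {u v w x : V} {p : G.Walk u v} (hp : p.IsPath)
    (hw : w ∈ p.support) (h1 : x ∈ (p.takeUntil w hw).support)
    (h2 : x ∈ (p.dropUntil w hw).support) : x = w := by
  have hs := hp.support_nodup
  rw [← p.take_spec hw, Walk.support_append] at hs
  rcases (Walk.mem_support_iff _).1 h2 with h | h
  · exact h
  · exact absurd h (List.disjoint_of_nodup_append hs h1)

theorem reachable_induce {s : Set V} {a b : V} (p : G.Walk a b) (hp : ∀ x ∈ p.support, x ∈ s)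
    (ha : a ∈ s) (hb : b ∈ s) : (G.induce s).Reachable ⟨a, ha⟩ ⟨b, hb⟩ :=
  ⟨p.induce s hp⟩

theorem conditions_of_hamiltonian [DecidableEq V] {u v : V} (p : G.Walk u v) (hp : p.IsPath)
    (hall : ∀ w, w ∈ p.support) :
    (¬ IsArticulation G u ∧ ¬ IsArticulation G v) ∧
      (∀ x : V, IsArticulation G x → ∀ (hu : u ≠ x) (hv : v ≠ x),
        ¬ (G.induce ({x}ᶜ : Set V)).Reachable ⟨u, hu⟩ ⟨v, hv⟩) ∧
      (G.induce ({u, v}ᶜ : Set V)).Preconnected := by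
  have key := fun {w x : V} (h1 : x ∈ (p.takeUntil w (hall w)).support)
    (h2 : x ∈ (p.dropUntil w (hall w)).support) =>
      eq_of_mem_takeUntil_of_mem_dropUntil hp (hall w) h1 h2
  have toV : ∀ x w, (hw : w ≠ x) → (hv : v ≠ x) → x ∉ (p.dropUntil w (hall w)).support →
      (G.induce ({x}ᶜ : Set V)).Reachable ⟨w, hw⟩ ⟨v, hv⟩ := fun x w hw hv h =>
    reachable_induce (p.dropUntil w (hall w)) (fun y hy (hyx : y = x) => h (hyx ▸ hy)) _ _
  have toU : ∀ x w, (hw : w ≠ x) → (hu : u ≠ x) → x ∉ (p.takeUntil w (hall w)).support →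
      (G.induce ({x}ᶜ : Set V)).Reachable ⟨u, hu⟩ ⟨w, hw⟩ := fun x w hw hu h =>
    reachable_induce (p.takeUntil w (hall w)) (fun y hy (hyx : y = x) => h (hyx ▸ hy)) _ _
  refine ⟨⟨not_not.2 ?_, not_not.2 ?_⟩, ?_, ?_⟩
  · rintro ⟨a, ha⟩ ⟨b, hb⟩
    have hu : ∀ w, w ≠ u → u ∉ (p.dropUntil w (hall w)).support := fun w hw h =>
      hw (key (Walk.start_mem_support _) h).symm
    have hv : v ≠ u := by
      rintro rfl
      exact hu a ha (Walk.end_mem_support _)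
    exact (toV u a ha hv (hu a ha)).trans (toV u b hb hv (hu b hb)).symm
  · rintro ⟨a, ha⟩ ⟨b, hb⟩
    have hv : ∀ w, w ≠ v → v ∉ (p.takeUntil w (hall w)).support := fun w hw h =>
      hw (key h (Walk.end_mem_support _)).symm
    have hu : u ≠ v := by
      rintro rfl
      exact hv a ha (Walk.start_mem_support _)
    exact (toU v a ha hu (hv a ha)).symm.trans (toU v b hb hu (hv b hb))
  · intro x hx hu hv huv
    refine hx ?_
    have hw : ∀ w, (hw : w ≠ x) → (G.induce ({x}ᶜ : Set V)).Reachable ⟨u, hu⟩ ⟨w, hw⟩ := by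
      intro w hw
      by_cases h : x ∈ (p.takeUntil w (hall w)).support
      · exact huv.trans (toV x w hw hv fun h' => hw (key h h').symm).symm
      · exact toU x w hw hu h
    rintro ⟨a, ha⟩ ⟨b, hb⟩
    exact (hw a ha).symm.trans (hw b hb)
  · -- `b` comes after `a` on the path; the segment between them avoids both ends
    have seg : ∀ a b, (ha : a ∈ ({u, v}ᶜ : Set V)) → (hb : b ∈ ({u, v}ᶜ : Set V)) →
        b ∈ (p.dropUntil a (hall a)).support →
        (G.induce ({u, v}ᶜ : Set V)).Reachable ⟨a, ha⟩ ⟨b, hb⟩ := by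
      intro a b ha hb h
      refine reachable_induce ((p.dropUntil a (hall a)).takeUntil b h) ?_ _ _
      rintro y hy (rfl | rfl)
      · exact ha (Or.inl (key (Walk.start_mem_support _)
          (Walk.support_takeUntil_subset_support _ _ hy)).symm)
      · exact hb (Or.inr (eq_of_mem_takeUntil_of_mem_dropUntil (hp.dropUntil _) h hy
          (Walk.end_mem_support _)).symm)
    rintro ⟨a, ha⟩ ⟨b, hb⟩
    have hab := hall b
    rw [← p.take_spec (hall a), Walk.mem_support_append_iff] at hab
    rcases hab with h | h
    · refine (seg b a hb ha ?_).symm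
      have hab := hall a
      rw [← p.take_spec (hall b), Walk.mem_support_append_iff] at hab
      rcases hab with hba | hba
      · -- each of `a`, `b` precedes the other, so they coincide
        have : a = b := by
          by_contra hne
          exact Walk.notMem_support_takeUntil_support_takeUntil_subset hne (hall b) hba h
        subst this
        exact Walk.start_mem_support _
      · exact hba
    · exact seg a b ha hb h

/-! ### Cuts -/

/-- `A, B` is a partition of `S` into two nonempty parts with no edge of `G` between them. -/
structure IsCut (G : SimpleGraph V) (S A B : Finset V) : Prop where
  mem : ∀ w, w ∈ S ↔ w ∈ A ∨ w ∈ B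
  disj : ∀ w ∈ A, w ∉ B
  left : A.Nonempty
  right : B.Nonempty
  nadj : ∀ a ∈ A, ∀ b ∈ B, ¬ G.Adj a b

/-- The subgraph induced on `S` is connected or empty, expressed as the absence of cuts. -/
def Conn (G : SimpleGraph V) (S : Finset V) : Prop := ∀ A B, ¬ IsCut G S A B

/-- Independence number at most 2, in terms of triples. -/
def NoTriple (G : SimpleGraph V) : Prop :=
  ∀ a b c, a ≠ b → a ≠ c → b ≠ c → G.Adj a b ∨ G.Adj a c ∨ G.Adj b c

theorem IsCut.symm {S A B : Finset V} (h : IsCut G S A B) : IsCut G S B A :=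
  ⟨fun w => by rw [h.mem, or_comm], fun w hB hA => h.disj w hA hB, h.right, h.left,
    fun b hb a ha hab => h.nadj a ha b hb hab.symm⟩

theorem IsCut.clique {S A B : Finset V} (hα : NoTriple G) (h : IsCut G S A B) :
    ∀ a ∈ A, ∀ a' ∈ A, a ≠ a' → G.Adj a a' := by
  intro a ha a' ha' hne
  obtain ⟨b, hb⟩ := h.right
  have h1 : a ≠ b := fun e => h.disj a ha (e ▸ hb)
  have h2 : a' ≠ b := fun e => h.disj a' ha' (e ▸ hb)
  rcases hα a a' b hne h1 h2 with h' | h' | h'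
  · exact h'
  · exact absurd h' (h.nadj a ha b hb)
  · exact absurd h' (h.nadj a' ha' b hb)

theorem conn_of_preconnected {S : Finset V} {s : Set V} (hs : ∀ w, w ∈ s ↔ w ∈ S)
    (h : (G.induce s).Preconnected) : Conn G S := by
  intro A B hc
  obtain ⟨a, ha⟩ := hc.left
  obtain ⟨b, hb⟩ := hc.right
  have aux : ∀ x y : s, (G.induce s).Walk x y → x.1 ∈ A → y.1 ∈ A := by
    intro x y p
    induction p with
    | nil => exact id
    | @cons x y z hxy _ ih =>
      intro hx
      refine ih ?_
      rcases (hc.mem y.1).1 ((hs _).1 y.2) with h' | h'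
      · exact h'
      · exact absurd hxy (hc.nadj _ hx _ h')
  obtain ⟨p⟩ := h ⟨a, (hs a).2 ((hc.mem a).2 (Or.inl ha))⟩ ⟨b, (hs b).2 ((hc.mem b).2 (Or.inr hb))⟩
  exact hc.disj b (aux _ _ p ha) hb

variable [DecidableEq V]

/-- Two cliques joined through a vertex `x` form a connected graph. -/
theorem conn_of_cliques {S X Y : Finset V} {x : V} (hS : ∀ w, w ∈ S ↔ w ∈ X ∨ w ∈ Y ∨ w = x)
    (hX : ∀ a ∈ X, ∀ a' ∈ X, a ≠ a' → G.Adj a a') (hY : ∀ a ∈ Y, ∀ a' ∈ Y, a ≠ a' → G.Adj a a')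
    (hxX : X.Nonempty → ∃ a ∈ X, G.Adj x a) (hxY : Y.Nonempty → ∃ a ∈ Y, G.Adj x a) :
    Conn G S := by
  -- the side of a cut that contains `x` is everything
  have main : ∀ C D, IsCut G S C D → x ∉ C := by
    intro C D h hx
    have step : ∀ a ∈ C, ∀ b ∈ S, G.Adj a b → b ∈ C := by
      intro a ha b hb hab
      rcases (h.mem b).1 hb with h' | h'
      · exact h'
      · exact absurd hab (h.nadj a ha b h')
    have sub : ∀ Z : Finset V, (∀ z ∈ Z, z ∈ S) → (∀ a ∈ Z, ∀ a' ∈ Z, a ≠ a' → G.Adj a a') →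
        (Z.Nonempty → ∃ a ∈ Z, G.Adj x a) → ∀ z ∈ Z, z ∈ C := by
      intro Z hZS hZ hxZ z hz
      obtain ⟨a, ha, hxa⟩ := hxZ ⟨z, hz⟩
      have haC := step x hx a (hZS a ha) hxa
      by_cases e : a = z
      · exact e ▸ haC
      · exact step a haC z (hZS z hz) (hZ a ha z hz e)
    obtain ⟨d, hd⟩ := h.right
    have hdC : d ∈ C := by
      rcases (hS d).1 ((h.mem d).2 (Or.inr hd)) with h' | h' | h'
      · exact sub X (fun z hz => (hS z).2 (Or.inl hz)) hX hxX d h'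
      · exact sub Y (fun z hz => (hS z).2 (Or.inr (Or.inl hz))) hY hxY d h'
      · exact h' ▸ hx
    exact h.disj d hdC hd
  intro C D h
  rcases (h.mem x).1 ((hS x).2 (Or.inr (Or.inr rfl))) with hx | hx
  · exact main C D h hx
  · exact main D C h.symm hx

/-- If `S` is connected and `A, B` is a cut of `S ∖ {x}`, then `x` has a neighbour in `A`. -/
theorem IsCut.exists_adj {S A B : Finset V} {x : V} (hS : Conn G S) (hx : x ∈ S)
    (h : IsCut G (S.erase x) A B) : ∃ a ∈ A, G.Adj x a := by
  by_contra! hc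
  refine hS A (insert x B) ⟨?_, ?_, h.left, Finset.insert_nonempty _ _, ?_⟩
  · have := h.mem
    grind
  · have h1 := h.mem
    have h2 := h.disj
    grind
  · have h1 := h.nadj
    have := fun a => G.adj_comm a x
    grind

/-! ### The inductive step -/

/-- The hypotheses of the induction for the subgraph induced on `S`. Condition `sep` is condition
(b): no cut of `S ∖ {x}` has `u` and `v` on the same side. -/
structure Good (G : SimpleGraph V) (S : Finset V) (u v : V) : Prop where
  memu : u ∈ S
  memv : v ∈ S
  ne : u ≠ v
  conn : Conn G S
  connu : Conn G (S.erase u)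
  connv : Conn G (S.erase v)
  sep : ∀ x ∈ S, ∀ A B, IsCut G (S.erase x) A B → v ∈ B → u ∉ B
  connuv : Conn G ((S.erase u).erase v)

/-- Inductive step when `S ∖ {u}` has an articulation point: the next vertex is taken in the
smallest side not containing `v` over all cuts of `S ∖ {u, x}`, with `x` an articulation point. -/
theorem exists_next_of_articulation (hα : NoTriple G) {S : Finset V} {u v : V} (h : Good G S u v)
    {x₀ : V} (hx₀ : x₀ ∈ S.erase u) (hart : ¬ Conn G ((S.erase u).erase x₀)) :
    ∃ u', G.Adj u u' ∧ Good G (S.erase u) u' v := by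
  obtain ⟨memu, memv, ne, conn, connu, connv, sep, connuv⟩ := h
  set H := S.erase u with hH
  have hvH : v ∈ H := by grind
  have huH : u ∉ H := by grind
  have hS : ∀ w, w ∈ S ↔ w ∈ H ∨ w = u := by grind
  have ex : ∃ n x A B, x ∈ H ∧ IsCut G (H.erase x) A B ∧ v ∈ B ∧ A.card = n := by
    unfold Conn at hart
    push Not at hart
    obtain ⟨A, B, hc⟩ := hart
    have hxv : v ≠ x₀ := by
      rintro rfl
      exact connuv A B hc
    rcases (hc.mem v).1 (by grind) with h' | h'
    · exact ⟨_, x₀, B, A, hx₀, hc.symm, h', rfl⟩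
    · exact ⟨_, x₀, A, B, hx₀, hc, h', rfl⟩
  classical
  obtain ⟨x, A, B, hx, hc, hvB, hcard⟩ := Nat.find_spec ex
  have hmin : ∀ y C D, y ∈ H → IsCut G (H.erase y) C D → v ∈ D → A.card ≤ C.card := by
    intro y C D hy hcd hv
    rw [hcard]
    exact Nat.find_min' ex ⟨y, C, D, hy, hcd, hv, rfl⟩
  clear hcard
  have hA := hc.clique hα
  have hB := hc.symm.clique hα
  obtain ⟨a, haA, hxa⟩ := hc.exists_adj connu hx
  obtain ⟨b, hbB, hxb⟩ := hc.symm.exists_adj connu hx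
  have mem := hc.mem
  have disj := hc.disj
  have nadj := hc.nadj
  -- otherwise `A` and `B ∪ {u}` would be a cut of `S ∖ {x}` with `u` and `v` on the same side
  obtain ⟨u', hu'A, huu'⟩ : ∃ u' ∈ A, G.Adj u u' := by
    by_contra! hno
    refine sep x (by grind) A (insert u B) ⟨?_, ?_, hc.left, Finset.insert_nonempty _ _, ?_⟩
      (by grind) (by grind)
    · grind
    · grind
    · have := fun a => G.adj_comm a u
      grind
  have hu'H : u' ∈ H := by grind
  have hu'v : u' ≠ v := by grind
  have hxu' : x ≠ u' := by grind
  have hxv : x ≠ v := by grind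
  -- for a cut `C, D` of `H ∖ {u'}` with `v ∈ D`, also `B ∪ {x} ⊆ D`, so `C` is smaller than `A`
  have hconnu' : Conn G (H.erase u') := by
    have aux : ∀ C D, IsCut G (H.erase u') C D → v ∉ D := by
      intro C D hcd hvD
      have m := hcd.mem
      have n := hcd.nadj
      have hBD : ∀ w ∈ B, w ∈ D := by
        intro w hw
        by_cases e : w = v
        · exact e ▸ hvD
        · have := hB w hw v hvB e
          grind
      have hxD : x ∈ D := by
        have := hBD b hbB
        grind
      have d := hcd.disj
      have hCA : C ⊆ A.erase u' := by
        intro w hw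
        grind
      have := hmin u' C D hu'H hcd hvD
      have := Finset.card_le_card hCA
      have := Finset.card_erase_lt_of_mem hu'A
      omega
    intro C D hcd
    rcases (hcd.mem v).1 (by grind) with h' | h'
    · exact aux D C hcd.symm h'
    · exact aux C D hcd h'
  refine ⟨u', huu', hu'H, hvH, hu'v, connu, hconnu', connuv, ?_, ?_⟩
  · -- `u'` and `v` on the same side `D` forces `C ⊆ {x}`, but `x` has neighbours in `A` and in `B`
    intro y hy C D hcd hvD hu'D
    have m := hcd.mem
    have n := hcd.nadj
    have d := hcd.disj
    have hBD : ∀ w ∈ B, w ≠ y → w ∈ D := by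
      intro w hw hwy
      by_cases e : w = v
      · exact e ▸ hvD
      · have := hB w hw v hvB e
        grind
    have hAD : ∀ w ∈ A, w ≠ y → w ∈ D := by
      intro w hw hwy
      by_cases e : w = u'
      · exact e ▸ hu'D
      · have := hA w hw u' hu'A e
        grind
    obtain ⟨c, hcC⟩ := hcd.left
    have hcx : c = x := by grind
    subst hcx
    by_cases e : a = y
    · exact n c hcC b (hBD b hbB (by grind)) hxb
    · exact n c hcC a (hAD a haA e) hxa
  · refine conn_of_cliques (X := A.erase u') (Y := B.erase v) (x := x) (by grind) (by grind)
      (by grind) ?_ ?_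
    · intro hne
      by_contra! hno
      refine hconnu' (A.erase u') (insert x B) ⟨by grind, by grind, hne,
        Finset.insert_nonempty _ _, ?_⟩
      have := fun a => G.adj_comm a x
      grind
    · intro hne
      by_contra! hno
      refine connuv (B.erase v) (insert x A) ⟨by grind, by grind, hne,
        Finset.insert_nonempty _ _, ?_⟩
      have := fun a => G.adj_comm a x
      have := fun a b => G.adj_comm a b
      grind

/-- Inductive step when `S ∖ {u}` has no articulation point, so that `sep` holds vacuously for
`S ∖ {u}`. -/
theorem exists_next_of_no_articulation (hα : NoTriple G) {S : Finset V} {u v : V}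
    (h : Good G S u v) (hbig : ((S.erase u).erase v).Nonempty)
    (hart : ∀ x ∈ S.erase u, Conn G ((S.erase u).erase x)) :
    ∃ u', G.Adj u u' ∧ Good G (S.erase u) u' v := by
  obtain ⟨memu, memv, ne, conn, connu, connv, sep, connuv⟩ := h
  set H := S.erase u with hH
  have hvH : v ∈ H := by grind
  have huH : u ∉ H := by grind
  have hS : ∀ w, w ∈ S ↔ w ∈ H ∨ w = u := by grind
  suffices ∃ u' ∈ H, u' ≠ v ∧ G.Adj u u' ∧ Conn G ((H.erase v).erase u') by
    obtain ⟨u', h1, h2, h3, h4⟩ := this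
    refine ⟨u', h3, h1, hvH, h2, connu, hart u' h1, connuv, ?_, ?_⟩
    · intro x hx A B hc
      exact absurd hc (hart x hx A B)
    · rwa [Finset.erase_right_comm]
  obtain ⟨w, hwH, hwv, huw⟩ : ∃ w ∈ H, w ≠ v ∧ G.Adj u w := by
    by_contra! hno
    exact connv {u} (H.erase v) ⟨by grind, by grind, Finset.singleton_nonempty _, hbig, by grind⟩
  by_cases hw : Conn G ((H.erase v).erase w)
  · exact ⟨w, hwH, hwv, huw, hw⟩
  have aux : ∀ A B, IsCut G ((H.erase v).erase w) A B → (∀ a ∈ A, G.Adj u a) →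
      ∃ u' ∈ H, u' ≠ v ∧ G.Adj u u' ∧ Conn G ((H.erase v).erase u') := by
    intro A B hc huA
    have hA := hc.clique hα
    have hB := hc.symm.clique hα
    obtain ⟨a, haA, hwa⟩ := hc.exists_adj connuv (by grind)
    obtain ⟨b, hbB, hwb⟩ := hc.symm.exists_adj connuv (by grind)
    have mem := hc.mem
    have disj := hc.disj
    -- `w` keeps its neighbour `a` after `u'` is deleted, unless `A` is the single vertex `a`
    obtain ⟨u', hu'A, hu'⟩ : ∃ u' ∈ A, (A.erase u').Nonempty → u' ≠ a := by
      by_cases hsub : (A.erase a).Nonempty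
      · obtain ⟨c, hcA⟩ := hsub
        exact ⟨c, by grind, by grind⟩
      · exact ⟨a, haA, fun h => absurd h hsub⟩
    refine ⟨u', by grind, by grind, huA u' hu'A, ?_⟩
    refine conn_of_cliques (X := A.erase u') (Y := B) (x := w) (by grind) (by grind) hB ?_
      (fun _ => ⟨b, hbB, hwb⟩)
    intro hne
    exact ⟨a, by grind, hwa⟩
  unfold Conn at hw
  push Not at hw
  obtain ⟨A, B, hc⟩ := hw
  by_cases huA : ∀ a ∈ A, G.Adj u a
  · exact aux A B hc huA
  · refine aux B A hc.symm ?_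
    push Not at huA
    obtain ⟨a, haA, hua⟩ := huA
    intro b hbB
    have mem := hc.mem
    have disj := hc.disj
    have nadj := hc.nadj
    have := hα u a b (by grind) (by grind) (by grind)
    grind

theorem exists_path_of_good (hα : NoTriple G) (n : ℕ) :
    ∀ (S : Finset V) (u v : V), S.card = n → Good G S u v →
      ∃ p : G.Walk u v, p.IsPath ∧ ∀ w, w ∈ p.support ↔ w ∈ S := by
  induction n with
  | zero =>
    intro S u v hS h
    rw [Finset.card_eq_zero] at hS
    exact absurd h.memu (by simp [hS])
  | succ n ih =>
    intro S u v hS h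
    have hmemu := h.memu
    have hmemv := h.memv
    have hne := h.ne
    by_cases hbig : ((S.erase u).erase v).Nonempty
    · obtain ⟨u', huu', hg⟩ : ∃ u', G.Adj u u' ∧ Good G (S.erase u) u' v := by
        by_cases hart : ∀ x ∈ S.erase u, Conn G ((S.erase u).erase x)
        · exact exists_next_of_no_articulation hα h hbig hart
        · push Not at hart
          obtain ⟨x, hx, hx'⟩ := hart
          exact exists_next_of_articulation hα h hx hx'
      obtain ⟨p, hp, hps⟩ := ih (S.erase u) u' v (by grind) hg
      refine ⟨Walk.cons huu' p, ?_, ?_⟩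
      · rw [Walk.cons_isPath_iff]
        exact ⟨hp, by simp [hps]⟩
      · intro w
        rw [Walk.support_cons, List.mem_cons, hps]
        grind
    · have hmem : ∀ w, w ∈ S ↔ w = u ∨ w = v := by
        intro w
        have hw : w ∉ (S.erase u).erase v := fun h' => hbig ⟨w, h'⟩
        grind
      have hadj : G.Adj u v := by
        by_contra hno
        exact h.conn {u} {v} ⟨by simpa using hmem, by grind, by simp, by simp, by grind⟩
      refine ⟨hadj.toWalk, ?_, ?_⟩
      · simp [Walk.cons_isPath_iff, hne]
      · simp [hmem]

end HamPath

open HamPath in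
/-- For a connected `3K₁`-free graph `G` (independence number at most 2) and distinct
vertices `u, v`, there is a Hamiltonian path with endpoints `u` and `v` iff
(a) neither `u` nor `v` is an articulation point, (b) for every articulation point `x`,
the vertices `u` and `v` lie in different components of `G − {x}`, and (c) `{u, v}` is
not a vertex cut, i.e. `G − {u, v}` is not disconnected. -/
theorem statement9 {V : Type*} [Fintype V] [DecidableEq V] (G : SimpleGraph V)
    (hG : G.Connected)
    (hα : ∀ S : Finset V, ((S : Set V)).Pairwise (fun a b => ¬ G.Adj a b) → S.card ≤ 2)
    (u v : V) (huv : u ≠ v) :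
    (∃ p : G.Walk u v, p.IsHamiltonian) ↔
      (¬ IsArticulation G u ∧ ¬ IsArticulation G v) ∧
      (∀ x : V, IsArticulation G x → ∀ (hu : u ≠ x) (hv : v ≠ x),
        ¬ (G.induce ({x}ᶜ : Set V)).Reachable ⟨u, hu⟩ ⟨v, hv⟩) ∧
      (G.induce ({u, v}ᶜ : Set V)).Preconnected := by
  constructor
  · rintro ⟨p, hp⟩
    exact conditions_of_hamiltonian p hp.isPath hp.mem_support
  · rintro ⟨⟨hu, hv⟩, hsep, hcut⟩
    have hT : NoTriple G := by
      intro a b c hab hac hbc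
      by_contra! hno
      obtain ⟨h1, h2, h3⟩ := hno
      have := hα {a, b, c} (by
        intro x hx y hy _
        have := fun a b => G.adj_comm a b
        simp only [Finset.coe_insert, Finset.coe_singleton, Set.mem_insert_iff,
          Set.mem_singleton_iff] at hx hy
        grind)
      rw [Finset.card_eq_three.2 ⟨a, b, c, hab, hac, hbc, rfl⟩] at this
      omega
    have hgood : Good G Finset.univ u v := by
      refine ⟨Finset.mem_univ _, Finset.mem_univ _, huv, ?_, ?_, ?_, ?_, ?_⟩
      · intro A B hc
        refine conn_of_preconnected (s := Set.univ) (by simp) ?_ A B hc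
        exact (induceUnivIso G).symm.preconnected_iff.1 hG.preconnected
      · exact conn_of_preconnected (s := {u}ᶜ) (by simp) (not_not.1 hu)
      · exact conn_of_preconnected (s := {v}ᶜ) (by simp) (not_not.1 hv)
      · -- the sides of a cut are cliques, so vertices on the same side are adjacent
        intro x _ A B hc hvB huB
        have hux : u ≠ x := by
          have := (hc.mem u).2 (Or.inr huB)
          grind
        have hvx : v ≠ x := by
          have := (hc.mem v).2 (Or.inr hvB)
          grind
        have hart : IsArticulation G x := fun h =>
          conn_of_preconnected (s := {x}ᶜ) (by simp) h A B hc
        refine hsep x hart hux hvx (Adj.reachable ?_)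
        exact hc.symm.clique hT u huB v hvB huv
      · exact conn_of_preconnected (s := {u, v}ᶜ) (by intro w; simp; tauto) hcut
    obtain ⟨p, hp, hps⟩ := exists_path_of_good hT _ Finset.univ u v rfl hgood
    exact ⟨p, hp.isHamiltonian_of_mem fun w => (hps w).2 (Finset.mem_univ w)⟩
end

section
/- Let G be a connected finite simple graph with independence number α(G) ≤ 2 (i.e., G is 3K₁-free) and let u be a vertex of G. Then G has a Hamiltonian path having u as an endpoint if and only if u is not an articulation point of G. -/
/-!
If `p` is a Hamiltonian path starting at `u`, then its tail is a walk in `G - u` through all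
vertices of `G - u`, which is therefore connected.

For the converse, the path is built greedily from `u`, keeping the set `S` of unvisited vertices
connected and adjacent to the current endpoint (`exists_path`). The step is
`exists_adj_erase_cutConnected`: if `S` is connected, `u ∉ S` and `u` has a neighbour in `S`, then
`u` has a neighbour `v ∈ S` with `S \ {v}` connected. Suppose a neighbour `v` fails, and split
`S \ {v}` into nonempty parts `A` and `B` with no edges between them. As there are no three
independent vertices, `A` and `B` are cliques, and `u` is complete to one of them, say to `A`.
Both parts contain a neighbour of `v`, since `S` is connected. So some neighbour `a' ∈ A` of `u`
can be deleted from `S`: any vertex of `A` other than a chosen neighbour `a₀` of `v`, or `a₀` if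
`A = {a₀}`.
-/

open SimpleGraph

/-- Connectedness of the subgraph induced on `S`, phrased through cuts: the only nonempty subset
of `S` without edges to the rest of `S` is `S` itself. The empty set counts as connected. -/
def CutConnected {V : Type*} (G : SimpleGraph V) (S : Finset V) : Prop :=
  ∀ A ⊆ S, A.Nonempty → (∀ x ∈ A, ∀ y ∈ S, y ∉ A → ¬ G.Adj x y) → A = S

theorem cutConnected_of_preconnected {V : Type*} (G : SimpleGraph V) (S : Finset V)
    (h : (G.induce (S : Set V)).Preconnected) : CutConnected G S := by
  intro A hAS ⟨a, ha⟩ hA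
  refine Finset.Subset.antisymm hAS fun b hb => ?_
  by_contra hbA
  obtain ⟨p⟩ := h ⟨a, hAS ha⟩ ⟨b, hb⟩
  obtain ⟨d, -, h1, h2⟩ := p.exists_boundary_dart {x | (x : V) ∈ A} ha hbA
  exact hA _ h1 _ d.snd.2 h2 d.adj

/-- `α(G) ≤ 2` as an adjacency statement about three distinct vertices. -/
theorem adj_of_three {V : Type*} [DecidableEq V] (G : SimpleGraph V)
    (hα : ∀ S : Finset V, ((S : Set V)).Pairwise (fun a b => ¬ G.Adj a b) → S.card ≤ 2)
    {a b c : V} (hab : a ≠ b) (hac : a ≠ c) (hbc : b ≠ c) :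
    G.Adj a b ∨ G.Adj a c ∨ G.Adj b c := by
  by_contra! h
  obtain ⟨h1, h2, h3⟩ := h
  have := hα {a, b, c} (by
    intro x hx y hy hxy
    simp only [Finset.coe_insert, Finset.coe_singleton, Set.mem_insert_iff,
      Set.mem_singleton_iff] at hx hy
    rcases hx with rfl | rfl | rfl <;> rcases hy with rfl | rfl | rfl <;>
      simp_all [G.adj_comm])
  rw [Finset.card_eq_three.2 ⟨a, b, c, hab, hac, hbc, rfl⟩] at this
  omega

/-- If `S = A ∪ {v} ∪ B` with cliques `A` and `B`, each containing a neighbour of `v`, then some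
vertex of `A` can be deleted from `S` without disconnecting it. -/
theorem exists_erase_cutConnected {V : Type*} [DecidableEq V] (G : SimpleGraph V)
    {S A B : Finset V} {v a₀ b₀ : V}
    (hS : ∀ x, x ∈ S ↔ x = v ∨ x ∈ A ∨ x ∈ B)
    (hvA : v ∉ A) (hAB : Disjoint A B)
    (hA : ∀ x ∈ A, ∀ y ∈ A, x ≠ y → G.Adj x y) (hB : ∀ x ∈ B, ∀ y ∈ B, x ≠ y → G.Adj x y)
    (ha₀ : a₀ ∈ A) (hb₀ : b₀ ∈ B) (hva : G.Adj v a₀) (hvb : G.Adj v b₀) :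
    ∃ a ∈ A, CutConnected G (S.erase a) := by
  obtain ⟨a', ha', hor⟩ : ∃ a' ∈ A, a' ≠ a₀ ∨ ∀ x ∈ A, x = a' := by
    by_cases h : ∃ a' ∈ A, a' ≠ a₀
    · obtain ⟨a', h1, h2⟩ := h
      exact ⟨a', h1, Or.inl h2⟩
    · push Not at h
      exact ⟨a₀, ha₀, Or.inr h⟩
  have hABd : ∀ x ∈ A, x ∉ B := fun x hx hx' => Finset.disjoint_left.1 hAB hx hx'
  refine ⟨a', ha', fun T hT ⟨t, ht⟩ hcl => ?_⟩
  have hcl' : ∀ x ∈ T, ∀ y ∈ S, y ≠ a' → G.Adj x y → y ∈ T := by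
    intro x hx y hy hne hadj
    by_contra hyT
    exact hcl x hx y (Finset.mem_erase.2 ⟨hne, hy⟩) hyT hadj
  have hTS : ∀ x ∈ T, x ≠ a' ∧ x ∈ S := fun x hx => Finset.mem_erase.1 (hT hx)
  have hva' : v ≠ a' := fun h => hvA (h ▸ ha')
  have hvT : v ∈ T := by
    have hva2 := hva.symm
    have hvb2 := hvb.symm
    obtain ⟨h1, h2⟩ := hTS t ht
    rcases (hS t).1 h2 with rfl | h | h
    · exact ht
    · have h0 : a' ≠ a₀ := by grind
      have : a₀ ∈ T := by grind
      exact hcl' _ this _ (by grind) hva' hva2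
    · have : b₀ ∈ T := by grind
      exact hcl' _ this _ (by grind) hva' hvb2
  refine Finset.Subset.antisymm hT fun x hx => ?_
  obtain ⟨h1, h2⟩ := Finset.mem_erase.1 hx
  rcases (hS x).1 h2 with rfl | h | h
  · exact hvT
  · have h0 : a' ≠ a₀ := by grind
    have : a₀ ∈ T := hcl' v hvT a₀ (by grind) h0.symm hva
    grind
  · have : b₀ ∈ T := hcl' v hvT b₀ (by grind) (by grind) hvb
    grind

theorem exists_adj_erase_cutConnected {V : Type*} [DecidableEq V] (G : SimpleGraph V)
    (hα : ∀ S : Finset V, ((S : Set V)).Pairwise (fun a b => ¬ G.Adj a b) → S.card ≤ 2)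
    {S : Finset V} {u v : V} (hS : CutConnected G S) (hu : u ∉ S) (hv : v ∈ S)
    (huv : G.Adj u v) : ∃ a ∈ S, G.Adj u a ∧ CutConnected G (S.erase a) := by
  by_cases hc : CutConnected G (S.erase v)
  · exact ⟨v, hv, huv, hc⟩
  unfold CutConnected at hc
  push Not at hc
  obtain ⟨A, hAS, ⟨a, ha⟩, hA, hne⟩ := hc
  obtain ⟨B, hBdef⟩ : ∃ B, B = S.erase v \ A := ⟨_, rfl⟩
  have hmemB : ∀ x, x ∈ B ↔ (x ≠ v ∧ x ∈ S) ∧ x ∉ A := by simp [hBdef]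
  have hmemA : ∀ x ∈ A, x ≠ v ∧ x ∈ S := fun x hx => Finset.mem_erase.1 (hAS hx)
  obtain ⟨b, hb⟩ : B.Nonempty := by
    rw [Finset.nonempty_iff_ne_empty]
    intro h0
    rw [hBdef, Finset.sdiff_eq_empty_iff_subset] at h0
    exact hne (Finset.Subset.antisymm hAS h0)
  have hnAB : ∀ x ∈ A, ∀ y ∈ B, ¬ G.Adj x y := fun x hx y hy =>
    hA x hx y (by grind) (by grind)
  have hABne : ∀ x ∈ A, ∀ y ∈ B, x ≠ y := by grind
  have hdisj : Disjoint A B := by rw [hBdef]; exact Finset.disjoint_sdiff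
  have hcA : ∀ x ∈ A, ∀ y ∈ A, x ≠ y → G.Adj x y := by
    intro x hx y hy hxy
    have := adj_of_three G hα hxy (hABne x hx b hb) (hABne y hy b hb)
    have := hnAB x hx b hb
    have := hnAB y hy b hb
    tauto
  have hcB : ∀ x ∈ B, ∀ y ∈ B, x ≠ y → G.Adj x y := by
    intro x hx y hy hxy
    have := adj_of_three G hα (hABne a ha x hx) (hABne a ha y hy) hxy
    have := hnAB a ha x hx
    have := hnAB a ha y hy
    tauto
  -- Neither part is separated from the rest of `S`, so each contains a neighbour of `v`.
  obtain ⟨a₀, ha₀, hva⟩ : ∃ a₀ ∈ A, G.Adj v a₀ := by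
    by_contra! h
    have := hS A (fun x hx => (hmemA x hx).2) ⟨a, ha⟩ (by
      intro x hx y hy hyA hadj
      by_cases hyv : y = v
      · exact h x hx (hyv ▸ hadj.symm)
      · exact hnAB x hx y (by grind) hadj)
    grind
  obtain ⟨b₀, hb₀, hvb⟩ : ∃ b₀ ∈ B, G.Adj v b₀ := by
    by_contra! h
    have := hS B (fun x hx => ((hmemB x).1 hx).1.2) ⟨b, hb⟩ (by
      intro x hx y hy hyB hadj
      by_cases hyv : y = v
      · exact h x hx (hyv ▸ hadj.symm)
      · exact hnAB y (by grind) x hx hadj.symm)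
    grind
  have hSd : ∀ x, x ∈ S ↔ x = v ∨ x ∈ A ∨ x ∈ B := by grind
  by_cases hall : ∀ x ∈ A, G.Adj u x
  · obtain ⟨a', ha', h⟩ := exists_erase_cutConnected G hSd (by grind) hdisj hcA hcB
      ha₀ hb₀ hva hvb
    exact ⟨a', (hmemA a' ha').2, hall a' ha', h⟩
  · push Not at hall
    obtain ⟨c, hc, huc⟩ := hall
    -- A non-neighbour `c ∈ A` of `u` forces `u` to be complete to `B`.
    have hall' : ∀ x ∈ B, G.Adj u x := by
      intro x hx
      have h1 : u ≠ c := by grind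
      have h2 : u ≠ x := by grind
      have := adj_of_three G hα h1 h2 (hABne c hc x hx)
      have := hnAB c hc x hx
      tauto
    obtain ⟨b', hb', h⟩ := exists_erase_cutConnected G (S := S) (A := B) (B := A) (v := v)
      (by grind) (by grind) hdisj.symm hcB hcA hb₀ ha₀ hvb hva
    exact ⟨b', ((hmemB b').1 hb').1.2, hall' b' hb', h⟩

/-- A connected set `S` adjacent to a vertex `u ∉ S` is traversed by a path starting at `u`. -/
theorem exists_path {V : Type*} [DecidableEq V] (G : SimpleGraph V)
    (hα : ∀ S : Finset V, ((S : Set V)).Pairwise (fun a b => ¬ G.Adj a b) → S.card ≤ 2)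
    (n : ℕ) : ∀ (S : Finset V) (u : V), S.card = n → CutConnected G S → u ∉ S →
      (S.Nonempty → ∃ v ∈ S, G.Adj u v) →
      ∃ (w : V) (p : G.Walk u w), p.IsPath ∧ ∀ x, x ∈ p.support ↔ x = u ∨ x ∈ S := by
  induction n with
  | zero =>
    intro S u hn _ _ _
    rw [Finset.card_eq_zero] at hn
    subst hn
    exact ⟨u, .nil, by simp, by simp⟩
  | succ n ih =>
    intro S u hn hS hu hadj
    obtain ⟨v, hv, huv⟩ := hadj (Finset.card_pos.1 (by omega))
    obtain ⟨a, haS, hua, hca⟩ := exists_adj_erase_cutConnected G hα hS hu hv huv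
    obtain ⟨w, p, hp, hsupp⟩ := ih (S.erase a) a (by rw [Finset.card_erase_of_mem haS]; omega) hca
      (by simp) (by
        rintro ⟨t, ht⟩
        by_contra! h
        have := hS {a} (by simpa using haS) ⟨a, by simp⟩ (by
          intro x hx y hy hya
          rw [Finset.mem_singleton] at hx hya
          subst hx
          exact h y (Finset.mem_erase.2 ⟨hya, hy⟩))
        rw [← this] at ht
        simp at ht)
    refine ⟨w, .cons hua p, ?_, fun x => ?_⟩
    · rw [Walk.cons_isPath_iff]
      refine ⟨hp, ?_⟩
      rw [hsupp]
      grind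
    · rw [Walk.support_cons, List.mem_cons, hsupp]
      grind

/-- A connected `3K₁`-free graph `G` (independence number at most 2) has a Hamiltonian
path with endpoint `u` iff `u` is not an articulation point of `G`. -/
theorem statement10 {V : Type*} [Fintype V] [DecidableEq V] (G : SimpleGraph V)
    (hG : G.Connected)
    (hα : ∀ S : Finset V, ((S : Set V)).Pairwise (fun a b => ¬ G.Adj a b) → S.card ≤ 2)
    (u : V) :
    (∃ (w : V) (p : G.Walk u w), p.IsHamiltonian) ↔ ¬ IsArticulation G u := by
  unfold IsArticulation
  rw [not_not]
  constructor
  · rintro ⟨w, p, hp⟩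
    have hpath := hp.isPath
    have hmem := hp.mem_support
    cases p with
    | nil =>
      rintro ⟨x, hx⟩
      exact absurd (by simpa using hmem x) hx
    | @cons _ v _ h q =>
      rw [Walk.cons_isPath_iff] at hpath
      have hv : v ∈ ({u}ᶜ : Set V) := fun e => h.ne (Set.mem_singleton_iff.1 e).symm
      have key : ∀ x : ({u}ᶜ : Set V),
          (G.induce ({u}ᶜ : Set V)).Reachable ⟨v, hv⟩ x := by
        rintro ⟨x, hx⟩
        have hxq : x ∈ q.support := by
          have := hmem x
          rw [Walk.support_cons, List.mem_cons] at this
          exact this.resolve_left hx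
        refine ⟨(q.takeUntil x hxq).induce ({u}ᶜ : Set V) fun y hy (e : y ∈ ({u} : Set V)) => hpath.2 ?_⟩
        rw [← Set.mem_singleton_iff.1 e]
        exact q.support_takeUntil_subset_support hxq hy
      exact fun x y => (key x).symm.trans (key y)
  · intro h
    have hS : CutConnected G (Finset.univ.erase u) := by
      apply cutConnected_of_preconnected
      have e : ((Finset.univ.erase u : Finset V) : Set V) = {u}ᶜ := by ext; simp
      rw [e]
      exact h
    obtain ⟨w, p, hp, hsupp⟩ := exists_path G hα _ (Finset.univ.erase u) u rfl hS (by simp) (by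
      rintro ⟨t, ht⟩
      obtain ⟨p⟩ := hG.preconnected u t
      obtain ⟨d, -, h1, h2⟩ := p.exists_boundary_dart {u} rfl (Finset.ne_of_mem_erase ht)
      have h3 := d.adj
      rw [Set.mem_singleton_iff.1 h1] at h3
      exact ⟨d.snd, Finset.mem_erase.2 ⟨h2, Finset.mem_univ _⟩, h3⟩)
    refine ⟨w, p, hp.isHamiltonian_iff.2 fun x => (hsupp x).2 ?_⟩
    simp [em]
end

section
/- Let G be a connected finite simple graph with independence number α(G) ≤ 2 (i.e., G is 3K₁-free) and let u, v be distinct vertices of G. Then G has a path cover PC(u, v): there exist at most two pairwise vertex-disjoint paths in G whose union contains all vertices of G such that u is an endpoint of one of the paths and v is an endpoint of a different path (or, if a single Hamiltonian path suffices, it can be split into two such paths). -/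
/-!
Consider pairs of disjoint paths `p` from `u` and `q` from `v` that together miss some vertex `w`;
such a pair can always be replaced by one that covers one more vertex (`Good.step`), so some pair
covers everything.

Let `a` and `b` be the far ends of `p` and `q`. If `w` is adjacent to `a` or `b`, the path ending
there is extended by `w`. Otherwise `a` and `b` are adjacent, since `{a, b, w}` is not independent,
so `p`, the edge `ab` and the reverse of `q` form a single path `X` from `u` to `v` on the same
vertices. By connectivity some vertex `x` of `X` is adjacent to a vertex `y` off `X`. Cutting `X`
at an edge incident to `x` makes `x` a far end of one of the two pieces, which is then extended
by `y` (`good_of_path`).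
-/

open SimpleGraph

/-- There are vertex-disjoint paths starting at `u` and `v` with `n` edges in total (so covering
`n + 2` vertices). Disjointness and both path conditions are encoded as the concatenated supports
having no repetition. -/
def Good {V : Type*} (G : SimpleGraph V) (u v : V) (n : ℕ) : Prop :=
  ∃ (a b : V) (p : G.Walk u a) (q : G.Walk v b),
    (p.support ++ q.support).Nodup ∧ p.length + q.length = n

theorem Good.symm {V : Type*} {G : SimpleGraph V} {u v : V} {n : ℕ} (h : Good G u v n) :
    Good G v u n := by
  obtain ⟨a, b, p, q, h, hn⟩ := h
  exact ⟨b, a, q, p, List.nodup_append_comm.1 h, by omega⟩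

theorem Good.extend {V : Type*} {G : SimpleGraph V} {u v a b w : V}
    (p : G.Walk u a) (q : G.Walk v b) (h : (p.support ++ q.support).Nodup)
    (hw : w ∉ p.support ++ q.support) (haw : G.Adj a w) :
    Good G u v (p.length + q.length + 1) := by
  refine ⟨w, b, p.concat haw, q, ?_, by simp; omega⟩
  rw [Walk.support_concat]
  simp only [List.nodup_append, List.mem_append] at *
  grind

/-- Cut the path `X` right after `x`, and extend the first piece by `y`. -/
theorem good_of_path_of_ne {V : Type*} {G : SimpleGraph V} {u v x y : V} (X : G.Walk u v)
    (hX : X.IsPath) (hx : x ∈ X.support) (hy : y ∉ X.support) (hxy : G.Adj x y) (hxv : x ≠ v) :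
    Good G u v X.length := by
  obtain ⟨p, r, rfl⟩ := Walk.mem_support_iff_exists_append.1 hx
  cases r with
  | nil => exact absurd rfl hxv
  | cons h r =>
    rw [Walk.isPath_def] at hX
    simp only [Walk.support_append, Walk.support_cons, List.tail_cons] at hX hy
    have := Good.extend (w := y) p r.reverse
      (by simp only [Walk.support_reverse, List.nodup_append, List.nodup_reverse,
            List.mem_reverse] at *; exact hX)
      (by simpa using hy) hxy
    simpa [Walk.length_append, add_assoc] using this

theorem good_of_path {V : Type*} {G : SimpleGraph V} {u v x y : V} (huv : u ≠ v) (X : G.Walk u v)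
    (hX : X.IsPath) (hx : x ∈ X.support) (hy : y ∉ X.support) (hxy : G.Adj x y) :
    Good G u v X.length := by
  by_cases hxv : x = v
  · have := good_of_path_of_ne X.reverse hX.reverse (by simpa using hx) (by simpa using hy) hxy
      (hxv ▸ huv.symm)
    simpa using this.symm
  · exact good_of_path_of_ne X hX hx hy hxy hxv

theorem Good.step {V : Type*} [DecidableEq V] {G : SimpleGraph V} (hG : G.Connected)
    (hα : ∀ S : Finset V, ((S : Set V)).Pairwise (fun a b => ¬ G.Adj a b) → S.card ≤ 2)
    {u v a b w : V} (huv : u ≠ v) (p : G.Walk u a) (q : G.Walk v b)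
    (h : (p.support ++ q.support).Nodup) (hw : w ∉ p.support ++ q.support) :
    Good G u v (p.length + q.length + 1) := by
  by_cases haw : G.Adj a w
  · exact Good.extend p q h hw haw
  by_cases hbw : G.Adj b w
  · have := Good.extend q p (List.nodup_append_comm.1 h) (by simpa [and_comm] using hw) hbw
    rw [add_comm p.length]
    exact this.symm
  have ha := p.end_mem_support
  have hb := q.end_mem_support
  have hab : G.Adj a b := by
    by_contra hab
    have hne : a ≠ b := by
      rintro rfl
      exact List.disjoint_of_nodup_append h ha hb
    have hwa : a ≠ w := by rintro rfl; exact hw (List.mem_append_left _ ha)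
    have hwb : b ≠ w := by rintro rfl; exact hw (List.mem_append_right _ hb)
    have := hα {a, b, w} (by
      intro s hs t ht _
      simp only [Finset.coe_insert, Finset.coe_singleton, Set.mem_insert_iff,
        Set.mem_singleton_iff] at hs ht
      rcases hs with rfl | rfl | rfl <;> rcases ht with rfl | rfl | rfl <;>
        simp_all [G.adj_comm])
    rw [Finset.card_eq_three.2 ⟨a, b, w, hne, hwa, hwb, rfl⟩] at this
    omega
  let X : G.Walk u v := p.append (Walk.cons hab q.reverse)
  have hXs : X.support = p.support ++ q.support.reverse := by
    simp [X, Walk.support_append]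
  have hX : X.IsPath := by
    rw [Walk.isPath_def, hXs]
    simp only [List.nodup_append, List.nodup_reverse, List.mem_reverse] at *
    exact h
  have hwX : w ∉ X.support := by simpa [hXs] using hw
  obtain ⟨c⟩ := hG.preconnected u w
  obtain ⟨d, -, hd, hd'⟩ := c.exists_boundary_dart {x | x ∈ X.support} X.start_mem_support hwX
  have := good_of_path huv X hX hd hd' d.adj
  simpa [X, Walk.length_append, add_assoc] using this

/-- For a connected `3K₁`-free graph `G` (independence number at most 2) and distinct
vertices `u, v`, there is a path cover `PC(u, v)`: two vertex-disjoint paths whose vertex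
sets partition the vertices of `G`, one starting at `u` and the other starting at `v`. -/
theorem statement11 {V : Type*} [Fintype V] [DecidableEq V] (G : SimpleGraph V)
    (hG : G.Connected)
    (hα : ∀ S : Finset V, ((S : Set V)).Pairwise (fun a b => ¬ G.Adj a b) → S.card ≤ 2)
    (u v : V) (huv : u ≠ v) :
    ∃ (a b : V) (p : G.Walk u a) (q : G.Walk v b),
      p.IsPath ∧ q.IsPath ∧
      (∀ w, w ∈ p.support → w ∉ q.support) ∧
      (∀ w, w ∈ p.support ∨ w ∈ q.support) := by
  by_contra hno
  -- Without a cover, disjoint pairs of paths would exist with arbitrarily many edges.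
  have key : ∀ n, Good G u v n := by
    intro n
    induction n with
    | zero => exact ⟨u, v, Walk.nil, Walk.nil, by simpa using huv, rfl⟩
    | succ n ih =>
      obtain ⟨a, b, p, q, h, rfl⟩ := ih
      have : ∃ w, w ∉ p.support ++ q.support := by
        by_contra! hall
        exact hno ⟨a, b, p, q, p.isPath_def.2 h.of_append_left, q.isPath_def.2 h.of_append_right,
          fun w hp hq => List.disjoint_of_nodup_append h hp hq,
          fun w => List.mem_append.1 (hall w)⟩
      obtain ⟨w, hw⟩ := this
      exact Good.step hG hα huv p q h hw
  obtain ⟨a, b, p, q, h, hn⟩ := key (Fintype.card V)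
  have := h.length_le_card
  simp only [List.length_append, Walk.length_support] at this
  omega
end

section
/- Let G be a connected finite simple graph with independence number α(G) ≤ 3 (i.e., G is 4K₁-free). Then G has a Hamiltonian path if and only if both of the following hold: (a) for every articulation point x of G, the graph G − {x} has exactly 2 connected components; and (b) there do not exist three articulation points of G that are pairwise adjacent (i.e., induce a triangle in G). -/
/-!
The proof splits on whether the connected `4K₁`-free graph `G` has an articulation point.

*Necessity.* Deleting a vertex from a Hamiltonian path leaves at most two pieces, so an
articulation point leaves exactly two components (`card_components`). Of three pairwise adjacent
vertices, the middle one along the path lies between two adjacent vertices, and that edge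
reconnects the two pieces, so it is not an articulation point (`no_triangle`).

*No articulation point.* This is the Chvátal–Erdős rotation argument. If a longest path misses a
vertex, a component `H` of the rest is attached to the path at two or more vertices, and the
successors of two attachments form with a vertex of `H` an independent triple
(`exists_indep_of_maximal`). The first vertex of the path extends it to an independent set of
size 4 (`exists_hPath_of_two_connected`). Only maximality among paths with the same start is
needed for the triple, so a connected graph without cut vertex and with independence number at
most 2 has a Hamiltonian path from every vertex (`exists_hPath_from`).

*An articulation point `x`.* By (a), `G - x` has two components `A` and `B`, each with independence
number at most 2. It suffices to find in each a Hamiltonian path starting at a neighbour of `x`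
(`exists_hPath_beyond`) and to join them through `x`. Take `B`. If it has no cut vertex,
`exists_hPath_from` applies. If `y` is a cut vertex of `B`, the rest of `B` consists of two
cliques `C` and `D`, and the path should visit `C, y, D` or `D, y, C`. The first order works unless
`x` has no neighbour in `C`, or `C` has at least two vertices and `x` and `y` attach to it at one and
the same single vertex `c` (`attach_clique`); the second order is symmetric. If both orders fail,
then one of the following holds.

* Both cliques have such a single attachment vertex. Then a vertex of `A`, the vertex `y`, and a
  further vertex of each clique are independent.
* One has, and `x` has no neighbour in the other. Then `c` is an articulation point, and either
  `x, y, c` is a triangle of articulation points or `c` leaves three components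
  (`Branching.not_bad`).
* `x` has no neighbour in either clique. Then deleting `y` leaves three components
  (`Branching.false_of_no_neighbor`).
-/

open SimpleGraph

namespace FourK1

variable {V : Type*} {G : SimpleGraph V}

/-! ### Connectivity of induced subgraphs through cuts -/

/-- `G[S]` is connected, expressed through cuts: a nonempty `T ⊆ S` that no edge of `G[S]`
leaves is all of `S`. The empty set counts as connected. -/
def CutConn (G : SimpleGraph V) (S : Set V) : Prop :=
  ∀ T ⊆ S, T.Nonempty → (∀ a ∈ T, ∀ b ∈ S, G.Adj a b → b ∈ T) → S ⊆ T

theorem preconnected_induce_iff (S : Set V) :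
    (G.induce S).Preconnected ↔ CutConn G S := by
  constructor
  · rintro h T hTS ⟨a, ha⟩ hcl b hb
    obtain ⟨p⟩ := h ⟨a, hTS ha⟩ ⟨b, hb⟩
    have key : ∀ (u v : S) (_ : (G.induce S).Walk u v), u.1 ∈ T → v.1 ∈ T := by
      intro u v p
      induction p with
      | nil => exact id
      | cons hadj _ ih => exact fun hu => ih (hcl _ hu _ (Subtype.property _) hadj)
    exact key _ _ p ha
  · rintro h ⟨a, ha⟩ ⟨b, hb⟩
    have := h {v | ∃ hv : v ∈ S, (G.induce S).Reachable ⟨a, ha⟩ ⟨v, hv⟩} (fun v hv => hv.1)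
      ⟨a, ha, Reachable.rfl⟩ (by
        rintro c ⟨hc, hr⟩ d hd hcd
        refine ⟨hd, hr.trans (Adj.reachable ?_)⟩
        exact hcd) hb
    exact this.2

theorem isArticulation_iff (x : V) : IsArticulation G x ↔ ¬ CutConn G ({x}ᶜ) :=
  not_congr (preconnected_induce_iff _)

theorem cutConn_univ (hG : G.Connected) : CutConn G Set.univ := by
  rw [← preconnected_induce_iff]
  exact ((SimpleGraph.induceUnivIso G).connected_iff.2 hG).preconnected

/-- Two vertices in the same component of `G[S]` are the ends of a path inside `S`, given as a
list of vertices. -/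
theorem exists_list_of_reachable {S : Set V} {a b : V} (ha : a ∈ S) (hb : b ∈ S)
    (h : (G.induce S).Reachable ⟨a, ha⟩ ⟨b, hb⟩) :
    ∃ m : List V, m.Nodup ∧ m.IsChain G.Adj ∧ (∀ v ∈ m, v ∈ S) ∧ m.head? = some a ∧
      m.getLast? = some b := by
  classical
  obtain ⟨p, hp⟩ := h.exists_isPath
  refine ⟨p.support.map Subtype.val, ?_, ?_, ?_, ?_, ?_⟩
  · exact hp.support_nodup.map Subtype.val_injective
  · rw [List.isChain_map]
    exact p.isChain_adj_support
  · simp only [List.mem_map]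
    rintro v ⟨w, -, rfl⟩
    exact w.2
  · rw [List.head?_map, List.head?_eq_some_head p.support_ne_nil]
    simp
  · rw [List.getLast?_map, List.getLast?_eq_some_getLast p.support_ne_nil]
    simp

/-! ### Longest paths and rotations -/

theorem split_two {l : List V} {p q : V} (hp : p ∈ l) (hq : q ∈ l) (hpq : p ≠ q) :
    (∃ s t u, l = s ++ p :: (t ++ q :: u)) ∨ (∃ s t u, l = s ++ q :: (t ++ p :: u)) := by
  obtain ⟨s, r, rfl⟩ := List.append_of_mem hp
  simp only [List.mem_append, List.mem_cons] at hq
  rcases hq with hq | hq | hq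
  · obtain ⟨s', t, rfl⟩ := List.append_of_mem hq
    right; exact ⟨s', t, r, by simp⟩
  · exact absurd hq.symm hpq
  · obtain ⟨t, u, rfl⟩ := List.append_of_mem hq
    left; exact ⟨s, t, u, rfl⟩

theorem exists_max [Fintype V] (P : List V → Prop) (hP : ∀ l, P l → l.Nodup) {l₀ : List V}
    (h₀ : P l₀) : ∃ l, P l ∧ ∀ l', P l' → l'.length ≤ l.length := by
  classical
  let Q : ℕ → Prop := fun n => ∃ l, P l ∧ l.length = n
  have hb : ∀ l, P l → l.length ≤ Fintype.card V := fun l hl => (hP l hl).length_le_card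
  obtain ⟨l, hl, hlen⟩ : Q (Nat.findGreatest Q (Fintype.card V)) :=
    Nat.findGreatest_spec (P := Q) (hb l₀ h₀) ⟨l₀, h₀, rfl⟩
  refine ⟨l, hl, fun l' hl' => ?_⟩
  rw [hlen]
  exact Nat.le_findGreatest (hb l' hl') ⟨l', hl', rfl⟩

/-- On the path `l`, the vertex `a` comes directly after some vertex `p` that has a neighbour
`w ∈ S` lying off the path. -/
def IsSuccOfOutside (G : SimpleGraph V) (S : Set V) (l : List V) (a : V) : Prop :=
  ∃ (s : List V) (p : V) (r : List V) (w : V), l = s ++ p :: a :: r ∧ w ∈ S ∧ w ∉ l ∧ G.Adj w p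

/-- The rotation argument of Chvátal and Erdős. Let `G[S]` be connected without cut vertex, and
let `l` be a longest path of `G[S]` among those with the same first vertex. If `l` misses a
vertex, let `H` be a component of the part of `G[S]` off `l`. At least two vertices of `l` have
neighbours in `H`, and none of these is the last one; their successors on `l` together with a
vertex `h` of `H` are pairwise nonadjacent, since any edge among them would allow a detour
through `H` to give a longer path from the same start. -/
theorem exists_indep_of_maximal {S : Set V} (hS : CutConn G S)
    (hcut : ∀ x ∈ S, CutConn G (S \ {x})) {l : List V} (hne : l ≠ []) (hnd : l.Nodup)
    (hch : l.IsChain G.Adj) (hlS : ∀ v ∈ l, v ∈ S) (hnot : ¬ ∀ v ∈ S, v ∈ l)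
    (hmax : ∀ l' : List V, l'.Nodup → l'.IsChain G.Adj → (∀ v ∈ l', v ∈ S) →
      l'.head? = l.head? → l'.length ≤ l.length) :
    ∃ h a c, h ∈ S ∧ h ∉ l ∧ a ≠ c ∧ ¬ G.Adj h a ∧ ¬ G.Adj h c ∧ ¬ G.Adj a c ∧
      IsSuccOfOutside G S l a ∧ IsSuccOfOutside G S l c := by
  push Not at hnot
  obtain ⟨h, hhS, hhl⟩ := hnot
  have hhR : h ∈ {v | v ∈ S ∧ v ∉ l} := ⟨hhS, hhl⟩
  set R : Set V := {v | v ∈ S ∧ v ∉ l} with hR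
  -- `H` is the component of `h` off the path, and `N` below is its set of neighbours on the path
  let H : Set V := {w | ∃ hw : w ∈ R, (G.induce R).Reachable ⟨h, hhR⟩ ⟨w, hw⟩}
  have hHR : H ⊆ R := fun w hw => hw.1
  have hhH : h ∈ H := ⟨hhR, Reachable.rfl⟩
  have hHcl : ∀ w ∈ H, ∀ v ∈ R, G.Adj w v → v ∈ H := by
    rintro w ⟨hw, hr⟩ v hv hwv
    exact ⟨hv, hr.trans (Adj.reachable (by exact hwv))⟩
  have hHpath : ∀ w ∈ H, ∀ w' ∈ H, ∃ m : List V, m.Nodup ∧ m.IsChain G.Adj ∧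
      (∀ v ∈ m, v ∈ R) ∧ m.head? = some w ∧ m.getLast? = some w' := by
    rintro w ⟨hw, hr⟩ w' ⟨hw', hr'⟩
    exact exists_list_of_reachable hw hw' (hr.symm.trans hr')
  let N : Set V := {p | p ∈ l ∧ ∃ w ∈ H, G.Adj w p}
  -- the last vertex has no neighbour in `H`
  have hlast : ∀ s p, l = s ++ [p] → p ∉ N := by
    rintro s p rfl ⟨-, w, hw, hwp⟩
    have hwR := hHR hw
    have := hmax (s ++ [p] ++ [w]) ?_ ?_ ?_ ?_
    · simp at this
    · rw [List.nodup_append]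
      refine ⟨hnd, by simp, ?_⟩
      rintro x hx y hy rfl
      simp only [List.mem_singleton] at hy
      subst hy
      exact hwR.2 hx
    · rw [List.isChain_append]
      refine ⟨hch, by simp, ?_⟩
      simp [hwp.symm]
    · intro v hv
      rw [List.mem_append] at hv
      rcases hv with hv | hv
      · exact hlS v hv
      · simp only [List.mem_singleton] at hv
        exact hv ▸ hwR.1
    · cases s <;> simp
  -- consecutive vertices do not both have neighbours in `H`: insert a detour between them
  have hsucc : ∀ s p a r, l = s ++ p :: a :: r → p ∈ N → a ∉ N := by
    rintro s p a r rfl ⟨-, w, hw, hwp⟩ ⟨-, w', hw', hwa⟩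
    obtain ⟨m, hmn, hmc, hmR, hmh, hml⟩ := hHpath w hw w' hw'
    have hmne : m ≠ [] := by rintro rfl; simp at hmh
    have hpos := List.length_pos_iff.2 hmne
    have hperm : (s ++ [p] ++ m ++ a :: r).Perm ((s ++ p :: a :: r) ++ m) := by
      have : s ++ p :: a :: r = (s ++ [p]) ++ a :: r := by simp
      rw [this, List.append_assoc, List.append_assoc _ _ m]
      exact List.Perm.append_left _ List.perm_append_comm
    have := hmax (s ++ [p] ++ m ++ a :: r) ?_ ?_ ?_ ?_
    · have := hperm.length_eq ▸ this
      rw [List.length_append] at this; omega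
    · rw [hperm.nodup_iff, List.nodup_append]
      refine ⟨hnd, hmn, ?_⟩
      rintro x hx y hy rfl
      exact (hmR x hy).2 hx
    · have h1 : (s ++ [p] ++ a :: r).IsChain G.Adj := by simpa using hch
      rw [List.isChain_append] at h1
      rw [List.isChain_append, List.isChain_append]
      refine ⟨⟨h1.1, hmc, ?_⟩, h1.2.1, ?_⟩
      · simp [hmh, hwp.symm]
      · rw [List.getLast?_append, hml]
        simp [hwa]
    · intro v hv
      rw [hperm.mem_iff, List.mem_append] at hv
      exact hv.elim (hlS v) (fun hv => (hmR v hv).1)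
    · cases s <;> simp
  -- If the successors `a` of `p` and `c` of `q` were adjacent, the path could run to `p`, through
  -- `H` to `q`, backwards to `a`, and from `c` onwards.
  have hcross : ∀ s p a t q c u, l = s ++ p :: a :: (t ++ q :: c :: u) → p ∈ N → q ∈ N →
      ¬ G.Adj a c := by
    rintro s p a t q c u rfl ⟨-, w, hw, hwp⟩ ⟨-, w', hw', hwq⟩ hac
    obtain ⟨m, hmn, hmc, hmR, hmh, hml⟩ := hHpath w hw w' hw'
    have hmne : m ≠ [] := by rintro rfl; simp at hmh
    have hpos := List.length_pos_iff.2 hmne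
    have e1 : s ++ p :: a :: (t ++ q :: c :: u) = (s ++ [p]) ++ ((a :: t ++ [q]) ++ c :: u) := by
      simp
    have hperm : ((s ++ [p]) ++ (m ++ ((a :: t ++ [q]).reverse ++ c :: u))).Perm
        ((s ++ p :: a :: (t ++ q :: c :: u)) ++ m) := by
      rw [e1, List.append_assoc _ _ m]
      refine List.Perm.append_left _ (List.perm_append_comm.trans (List.Perm.append_right _ ?_))
      exact List.Perm.append_right _ (List.reverse_perm _)
    have := hmax _ (hperm.nodup_iff.2 ?_) ?_ ?_ ?_
    · have := hperm.length_eq ▸ this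
      rw [List.length_append] at this; omega
    · rw [List.nodup_append]
      refine ⟨hnd, hmn, ?_⟩
      rintro x hx y hy rfl
      exact (hmR x hy).2 hx
    · rw [e1] at hch
      obtain ⟨c1, c23, -⟩ := List.isChain_append.1 hch
      obtain ⟨c2, c3, -⟩ := List.isChain_append.1 c23
      refine List.isChain_append.2 ⟨c1, List.isChain_append.2 ⟨hmc, List.isChain_append.2
        ⟨List.isChain_reverse.2 (c2.imp fun _ _ h => h.symm), c3, ?_⟩, ?_⟩, ?_⟩
      · rw [List.getLast?_reverse]; simp [hac]
      · simp [hml, hwq]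
      · simp [List.head?_append, hmh, hwp.symm]
    · intro v hv
      rw [hperm.mem_iff, List.mem_append] at hv
      exact hv.elim (hlS v) (fun hv => (hmR v hv).1)
    · cases s <;> simp
  -- `N` has two elements: otherwise `H` is cut off in `S`, or in `S` minus one vertex
  obtain ⟨p, hpN⟩ : N.Nonempty := by
    by_contra hN
    obtain ⟨b, hb⟩ := List.exists_mem_of_ne_nil l hne
    have := hS H (fun v hv => (hHR hv).1) ⟨h, hhH⟩ (by
      intro v hv x hx hvx
      by_cases hxl : x ∈ l
      · exact absurd ⟨x, hxl, v, hv, hvx⟩ hN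
      · exact hHcl v hv x ⟨hx, hxl⟩ hvx) (hlS b hb)
    exact (hHR this).2 hb
  obtain ⟨q, hqN, hqp⟩ : ∃ q ∈ N, p ≠ q := by
    by_contra! hN
    obtain ⟨b, hb, hbp⟩ : ∃ b ∈ l, b ≠ p := by
      by_contra! hall
      obtain ⟨s, r, hsr⟩ := List.append_of_mem hpN.1
      cases r with
      | nil => exact hlast s p hsr hpN
      | cons a r =>
        have ha := hall a (by simp [hsr])
        subst ha
        rw [hsr] at hnd
        simp [List.nodup_append] at hnd
    have := hcut p (hlS p hpN.1) H
      (fun v hv => ⟨(hHR hv).1, by rintro rfl; exact (hHR hv).2 hpN.1⟩) ⟨h, hhH⟩ (by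
      rintro v hv x ⟨hx, hxp⟩ hvx
      by_cases hxl : x ∈ l
      · exact absurd (hN x ⟨hxl, v, hv, hvx⟩).symm hxp
      · exact hHcl v hv x ⟨hx, hxl⟩ hvx) ⟨hlS b hb, hbp⟩
    exact (hHR this).2 hb
  have fin : ∀ p q, p ∈ N → q ∈ N → (∃ s t u, l = s ++ p :: (t ++ q :: u)) →
      ∃ h a c, h ∈ S ∧ h ∉ l ∧ a ≠ c ∧ ¬ G.Adj h a ∧ ¬ G.Adj h c ∧ ¬ G.Adj a c ∧
      IsSuccOfOutside G S l a ∧ IsSuccOfOutside G S l c := by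
    rintro p q hp hq ⟨s, t, u, hl⟩
    cases t with
    | nil => exact absurd hq (hsucc s p q u hl hp)
    | cons a t =>
      cases u with
      | nil => exact absurd hq (hlast (s ++ p :: a :: t) q (by simp [hl]))
      | cons c u =>
        have hl1 : l = s ++ p :: a :: (t ++ q :: c :: u) := by simp [hl]
        have hl2 : l = (s ++ p :: a :: t) ++ q :: c :: u := by simp [hl]
        obtain ⟨-, w, hw, hwp⟩ := id hp
        obtain ⟨-, w', hw', hwq⟩ := id hq
        refine ⟨h, a, c, hhS, hhl, ?_, fun hha => ?_, fun hhc => ?_,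
          hcross s p a t q c u hl1 hp hq,
          ⟨_, _, _, w, hl1, (hHR hw).1, (hHR hw).2, hwp⟩,
          ⟨_, _, _, w', hl2, (hHR hw').1, (hHR hw').2, hwq⟩⟩
        · rintro rfl
          rw [hl1] at hnd
          simp [List.nodup_append] at hnd
        · exact hsucc _ _ _ _ hl1 hp ⟨by simp [hl1], h, hhH, hha⟩
        · exact hsucc _ _ _ _ hl2 hq ⟨by simp [hl2], h, hhH, hhc⟩
  rcases split_two hpN.1 hqN.1 hqp with h1 | h1
  · exact fin p q hpN hqN h1
  · exact fin q p hqN hpN h1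

/-- There is a Hamiltonian path of `G[S]` from `a` to `b`, given as a list of vertices. -/
def HPath (G : SimpleGraph V) (S : Set V) (a b : V) : Prop :=
  ∃ l : List V, l.Nodup ∧ l.IsChain G.Adj ∧ (∀ v, v ∈ l ↔ v ∈ S) ∧ l.head? = some a ∧
    l.getLast? = some b

theorem HPath.glue {S T : Set V} {a b c d : V} (h : HPath G S a b) (h' : HPath G T c d)
    (hbc : G.Adj b c) (hST : Disjoint S T) : HPath G (S ∪ T) a d := by
  obtain ⟨l, h1, h2, h3, h4, h5⟩ := h
  obtain ⟨m, k1, k2, k3, k4, k5⟩ := h'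
  refine ⟨l ++ m, ?_, ?_, ?_, ?_, ?_⟩
  · rw [List.nodup_append]
    refine ⟨h1, k1, ?_⟩
    rintro x hx y hy rfl
    exact Set.disjoint_left.1 hST ((h3 x).1 hx) ((k3 x).1 hy)
  · rw [List.isChain_append]
    refine ⟨h2, k2, ?_⟩
    simp [h5, k4, hbc]
  · intro v; simp [h3, k3]
  · simp [List.head?_append, h4]
  · simp [List.getLast?_append, k5]

theorem HPath.symm {S : Set V} {a b : V} (h : HPath G S a b) : HPath G S b a := by
  obtain ⟨l, h1, h2, h3, h4, h5⟩ := h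
  refine ⟨l.reverse, List.nodup_reverse.2 h1, List.isChain_reverse.2 (h2.imp fun _ _ h => h.symm),
    by simpa using h3, by simpa using h5, by simpa using h4⟩

theorem HPath.single (x : V) : HPath G {x} x x :=
  ⟨[x], by simp, by simp, by simp, by simp, by simp⟩

theorem HPath.of_list {S : Set V} {l : List V} (hne : l ≠ []) (h1 : l.Nodup)
    (h2 : l.IsChain G.Adj) (h3 : ∀ v, v ∈ l ↔ v ∈ S) :
    HPath G S (l.head hne) (l.getLast hne) :=
  ⟨l, h1, h2, h3, List.head?_eq_some_head hne, List.getLast?_eq_some_getLast hne⟩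

theorem HPath.exists_walk [DecidableEq V] {a b : V} (h : HPath G Set.univ a b) :
    ∃ (u v : V) (p : G.Walk u v), p.IsHamiltonian := by
  obtain ⟨l, h1, h2, h3, h4, -⟩ := h
  have hne : l ≠ [] := by rintro rfl; simp at h4
  refine ⟨_, _, Walk.ofSupport l hne h2, fun v => ?_⟩
  rw [Walk.support_ofSupport]
  exact List.count_eq_one_of_mem h1 ((h3 v).2 trivial)

/-- A clique has a Hamiltonian path between any two distinct vertices; a single vertex is a
Hamiltonian path from itself to itself. -/
theorem HPath.of_clique [Fintype V] {S : Set V} (hS : ∀ a ∈ S, ∀ b ∈ S, a ≠ b → G.Adj a b)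
    {a b : V} (ha : a ∈ S) (hb : b ∈ S) (hab : a ≠ b ∨ S = {a}) : HPath G S a b := by
  classical
  by_cases hab' : a = b
  · subst hab'
    have : S = {a} := by simpa using hab
    rw [this]
    exact HPath.single a
  · have hmem : ∀ v, v ∈ (S \ {a, b}).toFinset.toList ↔ v ∈ S ∧ v ≠ a ∧ v ≠ b := by
      intro v; simp
    have hnd : (a :: ((S \ {a, b}).toFinset.toList ++ [b])).Nodup := by
      rw [List.nodup_cons, List.nodup_append]
      refine ⟨?_, Finset.nodup_toList _, by simp, ?_⟩
      · simp [hab']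
      · rintro x hx y hy rfl
        simp only [List.mem_singleton] at hy
        exact ((hmem x).1 hx).2.2 hy
    have hm : ∀ v, v ∈ (a :: ((S \ {a, b}).toFinset.toList ++ [b])) ↔ v ∈ S := by
      intro v
      rw [List.mem_cons, List.mem_append, hmem, List.mem_singleton]
      constructor
      · rintro (rfl | h | rfl)
        exacts [ha, h.1, hb]
      · intro hv
        by_cases h1 : v = a <;> by_cases h2 : v = b <;> simp_all
    refine ⟨_, hnd, ?_, hm, by simp, ?_⟩
    · refine List.Pairwise.isChain ?_
      refine List.Pairwise.imp_of_mem ?_ hnd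
      intro x y hx hy hxy
      exact hS x ((hm x).1 hx) y ((hm y).1 hy) hxy
    · rw [← List.cons_append, List.getLast?_append]
      simp

/-- A connected `G[S]` without cut vertex and with independence number at most 2 has a
Hamiltonian path from any prescribed vertex. -/
theorem exists_hPath_from [Fintype V] {S : Set V} (hS : CutConn G S)
    (hcut : ∀ x ∈ S, CutConn G (S \ {x}))
    (hα : ∀ a ∈ S, ∀ b ∈ S, ∀ c ∈ S, a ≠ b → a ≠ c → b ≠ c →
      ¬ G.Adj a b → ¬ G.Adj a c → ¬ G.Adj b c → False) {b : V} (hb : b ∈ S) :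
    ∃ e, HPath G S b e := by
  obtain ⟨l, ⟨h1, h2, h3, h4⟩, hmax⟩ := exists_max
    (fun l : List V => l.Nodup ∧ l.IsChain G.Adj ∧ (∀ v ∈ l, v ∈ S) ∧ l.head? = some b)
    (fun l hl => hl.1) (l₀ := [b]) ⟨by simp, by simp, by simpa using hb, by simp⟩
  have hne : l ≠ [] := by rintro rfl; simp at h4
  by_cases hall : ∀ v ∈ S, v ∈ l
  · refine ⟨l.getLast hne, l, h1, h2, fun v => ⟨h3 v, hall v⟩, h4,
      List.getLast?_eq_some_getLast hne⟩
  · exfalso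
    obtain ⟨h, a, c, hhS, hhl, hac, n1, n2, n3, ⟨s, p, r, w, hl, -⟩, ⟨s', p', r', w', hl', -⟩⟩ :=
      exists_indep_of_maximal hS hcut hne h1 h2 h3 hall
        (fun l' k1 k2 k3 k4 => hmax l' ⟨k1, k2, k3, k4.trans h4⟩)
    have hal : a ∈ l := by simp [hl]
    have hcl : c ∈ l := by simp [hl']
    exact hα h hhS a (h3 a hal) c (h3 c hcl) (by rintro rfl; exact hhl hal)
      (by rintro rfl; exact hhl hcl) hac n1 n2 n3

/-- A connected `4K₁`-free graph without articulation point has a Hamiltonian path. For a longest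
path, the first vertex is nonadjacent to all of the independent triple produced by
`exists_indep_of_maximal`: to the outside vertex because the path cannot be extended, to the
successors because the path can be rotated. -/
theorem exists_hPath_of_two_connected [Fintype V] [Nonempty V] (hS : CutConn G Set.univ)
    (hcut : ∀ x, CutConn G ({x}ᶜ))
    (hα : ∀ a b c d : V, a ≠ b → a ≠ c → a ≠ d → b ≠ c → b ≠ d → c ≠ d →
      ¬ G.Adj a b → ¬ G.Adj a c → ¬ G.Adj a d → ¬ G.Adj b c → ¬ G.Adj b d → ¬ G.Adj c d →
      False) :
    ∃ b e, HPath G Set.univ b e := by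
  obtain ⟨x⟩ := ‹Nonempty V›
  obtain ⟨l, ⟨h1, h2⟩, hmax⟩ := exists_max
    (fun l : List V => l.Nodup ∧ l.IsChain G.Adj)
    (fun l hl => hl.1) (l₀ := [x]) ⟨by simp, by simp⟩
  have hne : l ≠ [] := by rintro rfl; simpa using hmax [x] ⟨by simp, by simp⟩
  by_cases hall : ∀ v ∈ Set.univ, v ∈ l
  · exact ⟨_, _, HPath.of_list hne h1 h2 fun v => ⟨fun _ => trivial, hall v⟩⟩
  · exfalso
    obtain ⟨h, a, c, hhS, hhl, hac, n1, n2, n3, sa, sc⟩ :=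
      exists_indep_of_maximal hS (fun x _ => by simpa [Set.compl_eq_univ_sdiff] using hcut x)
        hne h1 h2 (fun _ _ => trivial) hall
        (fun l' k1 k2 k3 k4 => hmax l' ⟨k1, k2⟩)
    obtain ⟨z, l', rfl⟩ := List.exists_cons_of_ne_nil hne
    -- prepending a vertex outside the path is impossible
    have hpre : ∀ w, w ∉ z :: l' → ¬ G.Adj w z := by
      intro w hw hwz
      have := hmax (w :: z :: l') ⟨List.nodup_cons.2 ⟨hw, h1⟩, List.isChain_cons_cons.2 ⟨hwz, h2⟩⟩
      simp at this
    have hsa : ∀ a, IsSuccOfOutside G Set.univ (z :: l') a →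
        a ∈ z :: l' ∧ z ≠ a ∧ ¬ G.Adj z a := by
      rintro a ⟨s, p, r, w, hl, -, hwl, hwp⟩
      refine ⟨by simp [hl], ?_, fun hza => ?_⟩
      · rintro rfl
        rw [hl] at h1
        cases s with
        | nil =>
          simp only [List.nil_append, List.cons.injEq] at hl
          obtain ⟨rfl, -⟩ := hl
          simp at h1
        | cons y s =>
          simp only [List.cons_append, List.cons.injEq] at hl
          obtain ⟨rfl, -⟩ := hl
          simp at h1
      -- the longer path: `w`, then back from `p` to the first vertex `z`, then on from `a`
      · have e1 : z :: l' = (s ++ [p]) ++ a :: r := by simp [hl]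
        have hperm : (w :: ((s ++ [p]).reverse ++ a :: r)).Perm (w :: z :: l') := by
          rw [e1]
          exact (List.Perm.append_right _ (List.reverse_perm _)).cons w
        have := hmax (w :: ((s ++ [p]).reverse ++ a :: r))
          ⟨hperm.nodup_iff.2 (List.nodup_cons.2 ⟨hwl, h1⟩), ?_⟩
        · have := hperm.length_eq ▸ this
          simp at this
        · have hlast : (s ++ [p]).head? = some z := by
            have : ((s ++ [p]) ++ a :: r).head? = some z := by rw [← e1]; simp
            cases s <;> simpa using this
          rw [e1, List.isChain_append] at h2
          rw [List.isChain_cons, List.isChain_append, List.isChain_reverse]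
          refine ⟨?_, h2.1.imp fun _ _ h => h.symm, h2.2.1, ?_⟩
          · simp [hwp]
          · rw [List.getLast?_reverse, hlast]
            simp [hza]
    obtain ⟨ha, hza, nza⟩ := hsa a sa
    obtain ⟨hc, hzc, nzc⟩ := hsa c sc
    exact hα h z a c (by rintro rfl; simp at hhl) (by rintro rfl; exact hhl ha)
      (by rintro rfl; exact hhl hc) hza hzc hac (hpre h hhl) n1 n2 nza nzc n3

/-! ### Counting components, and necessity of the two conditions -/

/-- `T` is a nonempty union of components of `G[S]`. -/
def Closed (G : SimpleGraph V) (S T : Set V) : Prop :=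
  T ⊆ S ∧ T.Nonempty ∧ ∀ a ∈ T, ∀ b ∈ S, G.Adj a b → b ∈ T

theorem exists_split {S : Set V} (h : ¬ CutConn G S) :
    ∃ A B : Set V, A.Nonempty ∧ B.Nonempty ∧ Disjoint A B ∧ A ∪ B = S ∧
      ∀ a ∈ A, ∀ b ∈ B, ¬ G.Adj a b := by
  unfold CutConn at h
  push Not at h
  obtain ⟨T, hTS, hT, hcl, hn⟩ := h
  obtain ⟨b, hb, hbT⟩ := Set.not_subset.1 hn
  refine ⟨T, S \ T, hT, ⟨b, hb, hbT⟩, Set.disjoint_sdiff_right, Set.union_sdiff_cancel hTS, ?_⟩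
  exact fun a ha b hb hab => hb.2 (hcl a ha b hb.1 hab)

/-- If `G - x` has only two components, it has no three disjoint nonempty unions of components. -/
theorem no_three_closed [Finite V] {x : V}
    (h : Nat.card ((G.induce ({x}ᶜ : Set V)).ConnectedComponent) = 2) {A B C : Set V}
    (hA : Closed G {x}ᶜ A) (hB : Closed G {x}ᶜ B) (hC : Closed G {x}ᶜ C)
    (hAB : Disjoint A B) (hAC : Disjoint A C) (hBC : Disjoint B C) : False := by
  have key : ∀ {T : Set V}, Closed G {x}ᶜ T → ∀ u v : ({x}ᶜ : Set V),
      (G.induce ({x}ᶜ : Set V)).connectedComponentMk u =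
        (G.induce ({x}ᶜ : Set V)).connectedComponentMk v → u.1 ∈ T → v.1 ∈ T := by
    intro T hT u v huv
    obtain ⟨p⟩ := ConnectedComponent.exact huv
    clear huv
    induction p with
    | nil => exact id
    | cons hadj _ ih => exact fun hu => ih (hT.2.2 _ hu _ (Subtype.property _) hadj)
  obtain ⟨a, ha⟩ := hA.2.1
  obtain ⟨b, hb⟩ := hB.2.1
  obtain ⟨c, hc⟩ := hC.2.1
  have hab := fun e => Set.disjoint_left.1 hAB (key hA ⟨a, hA.1 ha⟩ ⟨b, hB.1 hb⟩ e ha) hb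
  have hac := fun e => Set.disjoint_left.1 hAC (key hA ⟨a, hA.1 ha⟩ ⟨c, hC.1 hc⟩ e ha) hc
  have hbc := fun e => Set.disjoint_left.1 hBC (key hB ⟨b, hB.1 hb⟩ ⟨c, hC.1 hc⟩ e hb) hc
  classical
  have := Fintype.ofFinite ((G.induce ({x}ᶜ : Set V)).ConnectedComponent)
  rw [Nat.card_eq_fintype_card] at h
  have h3 : (2 : ℕ) < Fintype.card ((G.induce ({x}ᶜ : Set V)).ConnectedComponent) :=
    Fintype.two_lt_card_iff.2 ⟨_, _, _, hab, hac, hbc⟩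
  omega

/-- A path inside `S` cannot leave a union of components of `G[S]`. -/
theorem mem_of_chain {T S : Set V} (hT : Closed G S T) {l : List V} (hl : l.IsChain G.Adj)
    (hlS : ∀ v ∈ l, v ∈ S) {a b : V} (ha : a ∈ l) (hb : b ∈ l) (haT : a ∈ T) : b ∈ T := by
  induction l generalizing a b with
  | nil => simp at ha
  | cons z l ih =>
    rw [List.isChain_cons] at hl
    have ih' := @ih hl.2 (fun v hv => hlS v (List.mem_cons_of_mem _ hv))
    cases l with
    | nil => simp_all
    | cons y l =>
      have hzy : G.Adj z y := hl.1 y (by simp)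
      have hy : y ∈ T := by
        rcases List.mem_cons.1 ha with rfl | ha
        · exact hT.2.2 _ haT y (hlS y (by simp)) hzy
        · exact ih' ha (by simp) haT
      rcases List.mem_cons.1 hb with rfl | hb
      · exact hT.2.2 _ hy _ (hlS _ (by simp)) hzy.symm
      · exact ih' (by simp) hb hy

/-- An articulation point `y` of a graph with a Hamiltonian path cannot lie between two adjacent
vertices on that path: the edge `xz` would join the two pieces left after deleting `y`. -/
theorem not_separated {l : List V} (hch : l.IsChain G.Adj) (hall : ∀ v, v ∈ l) (hnd : l.Nodup)
    {x z : V} (y : V) (hy : IsArticulation G y) (hxz : G.Adj x z) (s t : List V)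
    (hl : l = s ++ y :: t) (hx : x ∈ s) (hz : z ∈ t) : False := by
  rw [isArticulation_iff] at hy
  apply hy
  intro T hT hTne hcl
  have hC : Closed G {y}ᶜ T := ⟨hT, hTne, hcl⟩
  subst hl
  have hys : ∀ v ∈ s, v ∈ ({y}ᶜ : Set V) := by
    rintro v hv rfl
    simp [List.nodup_append] at hnd
    exact hnd.2.2 v hv |>.1 rfl
  have hyt : ∀ v ∈ t, v ∈ ({y}ᶜ : Set V) := by
    rintro v hv rfl
    simp [List.nodup_append] at hnd
    exact hnd.2.1.1 hv
  have cs : s.IsChain G.Adj := hch.left_of_append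
  have ct : t.IsChain G.Adj := hch.right_of_append.of_cons
  have hxT : x ∈ T := by
    obtain ⟨v, hv⟩ := hTne
    have hvl := hall v
    rw [List.mem_append, List.mem_cons] at hvl
    rcases hvl with h | rfl | h
    · exact mem_of_chain hC cs hys h hx hv
    · exact absurd rfl (hT hv)
    · exact hcl z (mem_of_chain hC ct hyt h hz hv) x (hys x hx) hxz.symm
  have hzT : z ∈ T := hcl x hxT z (hyt z hz) hxz
  intro v hv
  have hvl := hall v
  rw [List.mem_append, List.mem_cons] at hvl
  rcases hvl with h | rfl | h
  · exact mem_of_chain hC cs hys hx h hxT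
  · exact absurd rfl hv
  · exact mem_of_chain hC ct hyt hz h hzT

/-- Condition (b) is necessary: of three pairwise adjacent vertices on a Hamiltonian path, the
middle one separates the other two along the path, so it is not an articulation point. -/
theorem no_triangle {l : List V} (hch : l.IsChain G.Adj) (hall : ∀ v, v ∈ l) (hnd : l.Nodup)
    {x y z : V} (hx : IsArticulation G x) (hy : IsArticulation G y) (hz : IsArticulation G z)
    (hxy : G.Adj x y) (hyz : G.Adj y z) (hxz : G.Adj x z) : False := by
  obtain ⟨s, t, hl⟩ := List.append_of_mem (hall y)
  have hxm := hall x
  have hzm := hall z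
  rw [hl, List.mem_append, List.mem_cons] at hxm hzm
  have sep := @not_separated V G l hch hall hnd
  rcases hxm with hxs | rfl | hxt
  · rcases hzm with hzs | rfl | hzt
    · rcases split_two hxs hzs hxz.ne with ⟨a, b, c, rfl⟩ | ⟨a, b, c, rfl⟩
      · exact sep z hz hxy (a ++ x :: b) (c ++ y :: t) (by simp [hl]) (by simp) (by simp)
      · exact sep x hx hyz.symm (a ++ z :: b) (c ++ y :: t) (by simp [hl]) (by simp) (by simp)
    · exact hyz.ne rfl
    · exact sep y hy hxz s t hl hxs hzt
  · exact hxy.ne rfl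
  · rcases hzm with hzs | rfl | hzt
    · exact sep y hy hxz.symm s t hl hzs hxt
    · exact hyz.ne rfl
    · rcases split_two hxt hzt hxz.ne with ⟨a, b, c, rfl⟩ | ⟨a, b, c, rfl⟩
      · exact sep x hx hyz (s ++ y :: a) (b ++ z :: c) (by simp [hl]) (by simp) (by simp)
      · exact sep z hz hxy.symm (s ++ y :: a) (b ++ x :: c) (by simp [hl]) (by simp) (by simp)

/-- Condition (a) is necessary: deleting `x` from a Hamiltonian path leaves at most two pieces. -/
theorem card_components [Finite V] {l : List V} (hch : l.IsChain G.Adj) (hall : ∀ v, v ∈ l)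
    (hnd : l.Nodup) {x : V} (hx : IsArticulation G x) :
    Nat.card ((G.induce ({x}ᶜ : Set V)).ConnectedComponent) = 2 := by
  classical
  obtain ⟨s, t, rfl⟩ := List.append_of_mem (hall x)
  have hxs : ∀ v ∈ s, v ∈ ({x}ᶜ : Set V) := by
    rintro v hv rfl
    simp [List.nodup_append] at hnd
    exact hnd.2.2 v hv |>.1 rfl
  have hxt : ∀ v ∈ t, v ∈ ({x}ᶜ : Set V) := by
    rintro v hv rfl
    simp [List.nodup_append] at hnd
    exact hnd.2.1.1 hv
  have cs : s.IsChain G.Adj := hch.left_of_append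
  have ct : t.IsChain G.Adj := hch.right_of_append.of_cons
  have hreach : ∀ m : List V, m.IsChain G.Adj → ∀ hm : (∀ v ∈ m, v ∈ ({x}ᶜ : Set V)),
      ∀ a (ha : a ∈ m) b (hb : b ∈ m),
      (G.induce ({x}ᶜ : Set V)).Reachable ⟨a, hm a ha⟩ ⟨b, hm b hb⟩ := by
    intro m hmc hm a ha b hb
    have : Closed G {x}ᶜ
        {v | ∃ hv : v ∈ ({x}ᶜ : Set V), (G.induce ({x}ᶜ : Set V)).Reachable ⟨a, hm a ha⟩ ⟨v, hv⟩} :=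
      ⟨fun v hv => hv.1, ⟨a, hm a ha, Reachable.rfl⟩, by
        rintro c ⟨hc, hr⟩ d hd hcd
        exact ⟨hd, hr.trans (Adj.reachable (by exact hcd))⟩⟩
    exact (mem_of_chain this hmc hm ha hb ⟨hm a ha, Reachable.rfl⟩).2
  have := Fintype.ofFinite ((G.induce ({x}ᶜ : Set V)).ConnectedComponent)
  rw [Nat.card_eq_fintype_card]
  have hmem : ∀ v : ({x}ᶜ : Set V), v.1 ∈ s ∨ v.1 ∈ t := by
    rintro ⟨v, hv⟩
    have := hall v
    rw [List.mem_append, List.mem_cons] at this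
    exact this.imp_right (fun h => h.resolve_left hv)
  apply le_antisymm
  · by_contra hlt
    push Not at hlt
    obtain ⟨a, b, c, hab, hac, hbc⟩ := Fintype.two_lt_card_iff.1 hlt
    induction a using ConnectedComponent.ind with | _ a
    induction b using ConnectedComponent.ind with | _ b
    induction c using ConnectedComponent.ind with | _ c
    have e : ∀ u v : ({x}ᶜ : Set V), (u.1 ∈ s ∧ v.1 ∈ s) ∨ (u.1 ∈ t ∧ v.1 ∈ t) →
        (G.induce ({x}ᶜ : Set V)).connectedComponentMk u =
        (G.induce ({x}ᶜ : Set V)).connectedComponentMk v := by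
      rintro u v (⟨h, h'⟩ | ⟨h, h'⟩)
      · exact ConnectedComponent.sound (hreach s cs hxs _ h _ h')
      · exact ConnectedComponent.sound (hreach t ct hxt _ h _ h')
    rcases hmem a with ha | ha <;> rcases hmem b with hb | hb
    · exact hab (e a b (Or.inl ⟨ha, hb⟩))
    · rcases hmem c with hc | hc
      · exact hac (e a c (Or.inl ⟨ha, hc⟩))
      · exact hbc (e b c (Or.inr ⟨hb, hc⟩))
    · rcases hmem c with hc | hc
      · exact hbc (e b c (Or.inl ⟨hb, hc⟩))
      · exact hac (e a c (Or.inr ⟨ha, hc⟩))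
    · exact hab (e a b (Or.inr ⟨ha, hb⟩))
  · by_contra hlt
    apply hx
    intro u v
    apply ConnectedComponent.exact
    exact Fintype.card_le_one_iff.1 (by omega) _ _

/-! ### Sufficiency in the presence of an articulation point -/

/-- Let `x` and `y` both have neighbours in the clique `C`. Either `C` has a Hamiltonian path that
starts next to `x` and ends next to `y`, or `C` is *bad*: it has at least two vertices, and
a single vertex `c` of it is the only neighbour in `C` of both `x` and `y`. -/
theorem attach_clique [Fintype V] {C : Set V} (hC : ∀ a ∈ C, ∀ b ∈ C, a ≠ b → G.Adj a b)
    {x y : V} (hx : ∃ c ∈ C, G.Adj x c) (hy : ∃ c ∈ C, G.Adj y c) :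
    (∃ c c', HPath G C c c' ∧ G.Adj x c ∧ G.Adj y c') ∨
    ∃ c ∈ C, ∃ c' ∈ C, c' ≠ c ∧ G.Adj x c ∧ G.Adj y c ∧ (∀ v ∈ C, G.Adj x v → v = c) ∧
      (∀ v ∈ C, G.Adj y v → v = c) := by
  by_cases h : ∃ c ∈ C, ∃ c' ∈ C, G.Adj x c ∧ G.Adj y c' ∧ (c ≠ c' ∨ C = {c})
  · obtain ⟨c, hc, c', hc', h1, h2, h3⟩ := h
    exact Or.inl ⟨c, c', HPath.of_clique hC hc hc' h3, h1, h2⟩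
  · push Not at h
    obtain ⟨c, hc, hxc⟩ := hx
    obtain ⟨d, hd, hyd⟩ := hy
    obtain ⟨rfl, hne⟩ := h c hc d hd hxc hyd
    have : ∃ c' ∈ C, c' ≠ c := by
      by_contra! hh
      exact hne (Set.eq_singleton_iff_unique_mem.2 ⟨hc, hh⟩)
    obtain ⟨c', hc', hcc⟩ := this
    exact Or.inr ⟨c, hc, c', hc', hcc, hxc, hyd, fun v hv hxv => (h v hv c hc hxv hyd).1,
      fun v hv hyv => (h c hc v hv hxc hyv).1.symm⟩

/-- The path of `B = C ∪ {y} ∪ D` that runs through `C`, then `y`, then `D`. -/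
theorem path_through {x y : V} {B C D : Set V} (hCD : Disjoint C D) (hU : C ∪ D = B \ {y})
    (hy : y ∈ B) {c c' d e : V} (h : HPath G C c c') (hyc : G.Adj y c')
    (h' : HPath G D d e) (hyd : G.Adj y d) (hxc : G.Adj x c) :
    ∃ b e, G.Adj x b ∧ HPath G B b e := by
  have hyC : y ∉ C := fun hh => (hU.subset (Or.inl hh)).2 rfl
  have hyD : y ∉ D := fun hh => (hU.subset (Or.inr hh)).2 rfl
  have h1 := (h.glue (HPath.single y) hyc.symm (by simpa using hyC)).glue h' hyd
    (Set.disjoint_union_left.2 ⟨hCD, by simpa using hyD⟩)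
  have : C ∪ {y} ∪ D = B := by
    rw [Set.union_right_comm, hU]
    exact Set.sdiff_union_of_subset (by simpa using hy)
  exact ⟨c, e, hxc, this ▸ h1⟩

theorem HPath.of_clique_from [Fintype V] {C : Set V}
    (hC : ∀ a ∈ C, ∀ b ∈ C, a ≠ b → G.Adj a b) {c : V} (hc : c ∈ C) : ∃ e, HPath G C c e := by
  by_cases h : ∃ e ∈ C, c ≠ e
  · obtain ⟨e, he, hce⟩ := h
    exact ⟨e, HPath.of_clique hC hc he (Or.inl hce)⟩
  · push Not at h
    exact ⟨c, HPath.of_clique hC hc hc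
      (Or.inr (Set.eq_singleton_iff_unique_mem.2 ⟨hc, fun v hv => (h v hv).symm⟩))⟩

theorem isArticulation_of_closed {x b : V} {T : Set V} (hT : Closed G {x}ᶜ T) (hb : b ≠ x)
    (hbT : b ∉ T) : IsArticulation G x := by
  rw [isArticulation_iff]
  exact fun h => hbT (h T hT.1 hT.2.1 hT.2.2 hb)

/-- The vertices of `G` are partitioned as `A ∪ {x} ∪ C ∪ {y} ∪ D` with `A`, `C`, `D` nonempty,
without edges between two of `A`, `C`, `D` or from `A` to `y`. Thus `A` is one side of the
articulation point `x`, and on the other side `y` separates `C` from `D`. -/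
structure Branching (G : SimpleGraph V) (x y : V) (A C D : Set V) : Prop where
  cover : ∀ v, v = x ∨ v ∈ A ∨ v = y ∨ v ∈ C ∨ v ∈ D
  ne : x ≠ y
  xA : x ∉ A
  xC : x ∉ C
  xD : x ∉ D
  yA : y ∉ A
  yC : y ∉ C
  yD : y ∉ D
  AC : Disjoint A C
  AD : Disjoint A D
  CD : Disjoint C D
  neA : A.Nonempty
  neC : C.Nonempty
  neD : D.Nonempty
  nAC : ∀ a ∈ A, ∀ c ∈ C, ¬ G.Adj a c
  nAD : ∀ a ∈ A, ∀ d ∈ D, ¬ G.Adj a d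
  nCD : ∀ c ∈ C, ∀ d ∈ D, ¬ G.Adj c d
  nAy : ∀ a ∈ A, ¬ G.Adj a y

theorem Branching.swap {x y : V} {A C D : Set V} (h : Branching G x y A C D) :
    Branching G x y A D C where
  cover v := by have := h.cover v; tauto
  ne := h.ne
  xA := h.xA
  xC := h.xD
  xD := h.xC
  yA := h.yA
  yC := h.yD
  yD := h.yC
  AC := h.AD
  AD := h.AC
  CD := h.CD.symm
  neA := h.neA
  neC := h.neD
  neD := h.neC
  nAC := h.nAD
  nAD := h.nAC
  nCD c hc d hd hcd := h.nCD d hd c hc hcd.symm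
  nAy := h.nAy

/-- If `x` has no neighbour in `D` and `C` is bad (a single `c ∈ C` is the only neighbour in `C` of
`x` and of `y`, and `C ≠ {c}`), then `c` is an articulation point and one of the two conditions
fails. When `x` and `y` are adjacent, `y` is an articulation point as well and `x, y, c` is a
triangle; otherwise `A ∪ {x}`, `C \ {c}` and `D ∪ {y}` are separated by `c`. -/
theorem Branching.not_bad [Finite V] {x y : V} {A C D : Set V} (h : Branching G x y A C D)
    (hcard : ∀ x : V, IsArticulation G x →
      Nat.card ((G.induce ({x}ᶜ : Set V)).ConnectedComponent) = 2)
    (htri : ∀ x y z : V, IsArticulation G x → IsArticulation G y → IsArticulation G z →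
      G.Adj x y → G.Adj y z → G.Adj x z → False)
    (hx : IsArticulation G x) {c c' : V} (hc : c ∈ C) (hc' : c' ∈ C) (hcc : c' ≠ c)
    (hxc : G.Adj x c) (hyc : G.Adj y c) (hxu : ∀ v ∈ C, G.Adj x v → v = c)
    (hyu : ∀ v ∈ C, G.Adj y v → v = c) (hxD : ∀ d ∈ D, ¬ G.Adj x d) : False := by
  obtain ⟨cover, ne, xA, xC, xD, yA, yC, yD, AC, AD, CD, ⟨a, ha⟩, neC, ⟨d, hd⟩, nAC, nAD, nCD,
    nAy⟩ := h
  rw [Set.disjoint_left] at AC AD CD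
  have symm : ∀ u v, G.Adj u v → G.Adj v u := fun _ _ h => h.symm
  have k1 : Closed G {c}ᶜ (C \ {c}) := by
    refine ⟨fun v hv => hv.2, ⟨c', hc', hcc⟩, ?_⟩
    rintro u ⟨hu, huc⟩ v hv huv
    simp only [Set.mem_compl_iff, Set.mem_singleton_iff, Set.mem_sdiff] at huc hv ⊢
    refine ⟨?_, hv⟩
    grind
  have hca : IsArticulation G c :=
    isArticulation_of_closed k1 (b := x) (by rintro rfl; exact xC hc) (fun h => xC h.1)
  by_cases hxy : G.Adj x y
  · have k2 : Closed G {y}ᶜ D := by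
      refine ⟨?_, ⟨d, hd⟩, ?_⟩
      · rintro v hv rfl; exact yD hv
      · intro u hu v hv huv
        simp only [Set.mem_compl_iff, Set.mem_singleton_iff] at hv
        grind
    have hya : IsArticulation G y := isArticulation_of_closed k2 ne xD
    exact htri x y c hx hya hca hxy hyc hxc
  · refine no_three_closed (hcard c hca) (A := insert x A) (B := C \ {c}) (C := insert y D)
      ⟨?_, ⟨x, by simp⟩, ?_⟩ k1 ⟨?_, ⟨y, by simp⟩, ?_⟩ ?_ ?_ ?_
    · intro v hv; simp only [Set.mem_compl_iff, Set.mem_singleton_iff, Set.mem_insert_iff] at *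
      grind
    · intro u hu v hv huv
      simp only [Set.mem_compl_iff, Set.mem_singleton_iff, Set.mem_insert_iff] at *
      grind
    · intro v hv; simp only [Set.mem_compl_iff, Set.mem_singleton_iff, Set.mem_insert_iff] at *
      grind
    · intro u hu v hv huv
      simp only [Set.mem_compl_iff, Set.mem_singleton_iff, Set.mem_insert_iff] at *
      grind
    · rw [Set.disjoint_left]; intro v hv
      simp only [Set.mem_sdiff, Set.mem_singleton_iff, Set.mem_insert_iff] at *
      grind
    · rw [Set.disjoint_left]; intro v hv
      simp only [Set.mem_insert_iff] at *
      grind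
    · rw [Set.disjoint_left]; intro v hv
      simp only [Set.mem_sdiff, Set.mem_singleton_iff, Set.mem_insert_iff] at *
      grind

/-- If `x` has no neighbour in `C ∪ D`, then deleting `y` leaves the three mutually separated
parts `A ∪ {x}`, `C`, `D`. -/
theorem Branching.false_of_no_neighbor [Finite V] {x y : V} {A C D : Set V}
    (h : Branching G x y A C D)
    (hcard : ∀ x : V, IsArticulation G x →
      Nat.card ((G.induce ({x}ᶜ : Set V)).ConnectedComponent) = 2)
    (hxC : ∀ c ∈ C, ¬ G.Adj x c) (hxD : ∀ d ∈ D, ¬ G.Adj x d) : False := by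
  obtain ⟨cover, ne, xA, xC, xD, yA, yC, yD, AC, AD, CD, -, hC, hD, nAC, nAD, nCD, nAy⟩ := h
  have AC' := Set.disjoint_left.1 AC
  have AD' := Set.disjoint_left.1 AD
  have symm : ∀ u v, G.Adj u v → G.Adj v u := fun _ _ h => h.symm
  have k1 : Closed G {y}ᶜ C := by
    refine ⟨?_, hC, ?_⟩
    · rintro v hv rfl; exact yC hv
    · intro u hu v hv huv
      simp only [Set.mem_compl_iff, Set.mem_singleton_iff] at hv
      grind
  have k2 : Closed G {y}ᶜ D := by
    refine ⟨?_, hD, ?_⟩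
    · rintro v hv rfl; exact yD hv
    · intro u hu v hv huv
      simp only [Set.mem_compl_iff, Set.mem_singleton_iff] at hv
      grind
  have k3 : Closed G {y}ᶜ (insert x A) := by
    refine ⟨?_, ⟨x, by simp⟩, ?_⟩
    · intro v hv
      simp only [Set.mem_compl_iff, Set.mem_singleton_iff, Set.mem_insert_iff] at *
      grind
    · intro u hu v hv huv
      simp only [Set.mem_compl_iff, Set.mem_singleton_iff, Set.mem_insert_iff] at *
      grind
  have hya : IsArticulation G y := isArticulation_of_closed k1 ne xC
  exact no_three_closed (hcard y hya) k3 k1 k2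
    (Set.disjoint_insert_left.2 ⟨xC, AC⟩) (Set.disjoint_insert_left.2 ⟨xD, AD⟩) CD

/-- Under conditions (a) and (b), if an articulation point `x` separates `A` from `B`, then `G[B]`
has a Hamiltonian path starting at a neighbour of `x`. When `G[B]` has a cut vertex `y`, the two
sides `C`, `D` of `y` in `B` are cliques, and the path visits `C, y, D` or `D, y, C`. Both orders
are blocked only if each of `C`, `D` is bad or without a neighbour of `x`; two bad sides give an
independent set of size 4, and the remaining cases are `Branching.not_bad` and
`Branching.false_of_no_neighbor`. -/
theorem exists_hPath_beyond [Fintype V] (hconn : CutConn G Set.univ)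
    (hα : ∀ a b c d : V, a ≠ b → a ≠ c → a ≠ d → b ≠ c → b ≠ d → c ≠ d →
      ¬ G.Adj a b → ¬ G.Adj a c → ¬ G.Adj a d → ¬ G.Adj b c → ¬ G.Adj b d → ¬ G.Adj c d →
      False)
    (hcard : ∀ x : V, IsArticulation G x →
      Nat.card ((G.induce ({x}ᶜ : Set V)).ConnectedComponent) = 2)
    (htri : ∀ x y z : V, IsArticulation G x → IsArticulation G y → IsArticulation G z →
      G.Adj x y → G.Adj y z → G.Adj x z → False)
    {x : V} (hx : IsArticulation G x) {A B : Set V} (hA : A.Nonempty) (hB : B.Nonempty)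
    (hAB : Disjoint A B) (hU : A ∪ B = {x}ᶜ) (hn : ∀ a ∈ A, ∀ b ∈ B, ¬ G.Adj a b) :
    ∃ b e, G.Adj x b ∧ HPath G B b e := by
  obtain ⟨a, ha⟩ := hA
  have hmem : ∀ v, v ≠ x ↔ v ∈ A ∨ v ∈ B := fun v => (Set.ext_iff.1 hU v).symm
  have hα3 : ∀ u ∈ B, ∀ v ∈ B, ∀ w ∈ B, u ≠ v → u ≠ w → v ≠ w →
      ¬ G.Adj u v → ¬ G.Adj u w → ¬ G.Adj v w → False := by
    intro u hu v hv w hw h1 h2 h3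
    have hne : ∀ u ∈ B, a ≠ u := by
      rintro u hu rfl; exact Set.disjoint_left.1 hAB ha hu
    exact hα a u v w (hne u hu) (hne v hv) (hne w hw) h1 h2 h3 (hn a ha u hu) (hn a ha v hv)
      (hn a ha w hw)
  have hAcl : Closed G {x}ᶜ A := by
    refine ⟨hU ▸ Set.subset_union_left, ⟨a, ha⟩, fun u hu v hv huv => ?_⟩
    exact ((hmem v).1 hv).resolve_right fun hvB => hn u hu v hvB huv
  have hxB' : ∃ b ∈ B, G.Adj x b := by
    by_contra! hno
    refine (hmem x).2 (Or.inr (hconn B (Set.subset_univ _) hB ?_ (Set.mem_univ x))) rfl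
    intro u hu v _ huv
    have hvx : v ≠ x := by rintro rfl; exact hno u hu huv.symm
    exact ((hmem v).1 hvx).resolve_left fun hvA => hn v hvA u hu huv.symm
  -- otherwise `G - x` would have at least three components
  have hBconn : CutConn G B := by
    by_contra hnot
    obtain ⟨C, D, hC, hD, hCD, rfl, hnCD⟩ := exists_split hnot
    have hcl : ∀ C D : Set V, C.Nonempty → (∀ v, v ≠ x ↔ v ∈ A ∨ v ∈ C ∨ v ∈ D) →
        (∀ a ∈ A, ∀ c ∈ C, ¬ G.Adj a c) → (∀ c ∈ C, ∀ d ∈ D, ¬ G.Adj c d) →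
        Closed G {x}ᶜ C := by
      intro C D hC hm h1 h2
      refine ⟨fun v hv => (hm v).2 (Or.inr (Or.inl hv)), hC, fun u hu v hv huv => ?_⟩
      rcases (hm v).1 hv with h | h | h
      · exact absurd huv.symm (h1 v h u hu)
      · exact h
      · exact absurd huv (h2 u hu v h)
    rw [Set.disjoint_union_right] at hAB
    exact no_three_closed (hcard x hx) hAcl
      (hcl C D hC (fun v => by rw [hmem]; simp) (fun a ha c hc => hn a ha c (Or.inl hc)) hnCD)
      (hcl D C hD (fun v => by rw [hmem, Set.mem_union, or_comm (a := v ∈ C)])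
        (fun a ha c hc => hn a ha c (Or.inr hc)) (fun d hd c hc h => hnCD c hc d hd h.symm))
      hAB.1 hAB.2 hCD
  by_cases hcut : ∀ y ∈ B, CutConn G (B \ {y})
  · obtain ⟨b, hb, hxb⟩ := hxB'
    obtain ⟨e, he⟩ := exists_hPath_from hBconn hcut hα3 hb
    exact ⟨b, e, hxb, he⟩
  push Not at hcut
  obtain ⟨y, hyB, hy⟩ := hcut
  obtain ⟨C, D, hC, hD, hCD, hCDU, hnCD⟩ := exists_split hy
  have hmB : ∀ v, v ∈ B ↔ v = y ∨ v ∈ C ∨ v ∈ D := by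
    intro v
    have := Set.ext_iff.1 hCDU v
    simp only [Set.mem_union, Set.mem_sdiff, Set.mem_singleton_iff] at this
    by_cases hvy : v = y
    · subst hvy; simp [hyB]
    · simp [this, hvy]
  have hxA : x ∉ A := fun h => (hmem x).2 (Or.inl h) rfl
  have hxB : x ∉ B := fun h => (hmem x).2 (Or.inr h) rfl
  have hAB' := Set.disjoint_left.1 hAB
  have hCB : C ⊆ B := fun v hv => (hmB v).2 (Or.inr (Or.inl hv))
  have hDB : D ⊆ B := fun v hv => (hmB v).2 (Or.inr (Or.inr hv))
  have br : Branching G x y A C D :=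
    { cover := fun v => by
        have h1 := hmem v
        have h2 := hmB v
        by_cases hvx : v = x
        · exact Or.inl hvx
        · exact Or.inr ((h1.1 hvx).imp_right h2.1)
      ne := by rintro rfl; exact hxB hyB
      xA := hxA
      xC := fun h => hxB (hCB h)
      xD := fun h => hxB (hDB h)
      yA := fun h => hAB' h hyB
      yC := fun hh => (hCDU.subset (Or.inl hh)).2 rfl
      yD := fun hh => (hCDU.subset (Or.inr hh)).2 rfl
      AC := hAB.mono_right hCB
      AD := hAB.mono_right hDB
      CD := hCD
      neA := ⟨a, ha⟩
      neC := hC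
      neD := hD
      nAC := fun a ha c hc => hn a ha c (hCB hc)
      nAD := fun a ha c hc => hn a ha c (hDB hc)
      nCD := hnCD
      nAy := fun a ha => hn a ha y hyB }
  -- an independent pair in one side and a vertex of the other side would be a triple
  have hclique : ∀ C D : Set V, C ⊆ B → D ⊆ B → Disjoint C D → D.Nonempty →
      (∀ c ∈ C, ∀ d ∈ D, ¬ G.Adj c d) → ∀ u ∈ C, ∀ v ∈ C, u ≠ v → G.Adj u v := by
    rintro C D hCB hDB hCD ⟨d, hd⟩ hn u hu v hv huv
    by_contra huv'
    exact hα3 u (hCB hu) v (hCB hv) d (hDB hd) huv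
      (by rintro rfl; exact Set.disjoint_left.1 hCD hu hd)
      (by rintro rfl; exact Set.disjoint_left.1 hCD hv hd) huv' (hn u hu d hd) (hn v hv d hd)
  have hCq := hclique C D hCB hDB hCD hD hnCD
  have hDq := hclique D C hDB hCB hCD.symm hC fun d hd c hc h => hnCD c hc d hd h.symm
  have hynbr : ∀ C D : Set V, C.Nonempty → (∀ v, v ∈ B ↔ v = y ∨ v ∈ C ∨ v ∈ D) → y ∉ C →
      (∀ c ∈ C, ∀ d ∈ D, ¬ G.Adj c d) → ∃ c ∈ C, G.Adj y c := by
    intro C D hC hm hyC hn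
    by_contra! hno
    refine hyC (hBconn C (fun v hv => (hm v).2 (Or.inr (Or.inl hv))) hC ?_ hyB)
    intro u hu v hv huv
    rcases (hm v).1 hv with rfl | h | h
    · exact absurd huv.symm (hno u hu)
    · exact h
    · exact absurd huv (hn u hu v h)
  have hyC := hynbr C D hC hmB br.yC hnCD
  have hyD := hynbr D C hD (fun v => by rw [hmB, or_comm (a := v ∈ C)]) br.yD br.swap.nCD
  obtain ⟨c₀, hc₀, hyc₀⟩ := id hyC
  obtain ⟨d₀, hd₀, hyd₀⟩ := id hyD
  have goC := fun h : ∃ c ∈ C, G.Adj x c => attach_clique hCq h hyC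
  have goD := fun h : ∃ c ∈ D, G.Adj x c => attach_clique hDq h hyD
  have finC : (∃ c c', HPath G C c c' ∧ G.Adj x c ∧ G.Adj y c') →
      ∃ b e, G.Adj x b ∧ HPath G B b e := by
    rintro ⟨c, c', hp, h1, h2⟩
    obtain ⟨e, he⟩ := HPath.of_clique_from hDq hd₀
    exact path_through hCD hCDU hyB hp h2 he hyd₀ h1
  have finD : (∃ c c', HPath G D c c' ∧ G.Adj x c ∧ G.Adj y c') →
      ∃ b e, G.Adj x b ∧ HPath G B b e := by
    rintro ⟨c, c', hp, h1, h2⟩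
    obtain ⟨e, he⟩ := HPath.of_clique_from hCq hc₀
    exact path_through hCD.symm (by rw [Set.union_comm, hCDU]) hyB hp h2 he hyc₀ h1
  by_cases hxC : ∃ c ∈ C, G.Adj x c
  · rcases goC hxC with h | ⟨c, hc, c', hc', hcc, h1, h2, h3, h4⟩
    · exact finC h
    by_cases hxD : ∃ d ∈ D, G.Adj x d
    · rcases goD hxD with h | ⟨d, hd, d', hd', hdd, k1, k2, k3, k4⟩
      · exact finD h
      exfalso
      -- both sides are bad: `a`, `y` and vertices `c'`, `d'` off the attachment points are independent
      refine hα a y c' d' ?_ ?_ ?_ ?_ ?_ ?_ (br.nAy a ha) (br.nAC a ha c' hc')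
        (br.nAD a ha d' hd') (fun h => hcc (h4 c' hc' h)) (fun h => hdd (k4 d' hd' h))
        (hnCD c' hc' d' hd')
      · rintro rfl; exact br.yA ha
      · rintro rfl; exact Set.disjoint_left.1 br.AC ha hc'
      · rintro rfl; exact Set.disjoint_left.1 br.AD ha hd'
      · rintro rfl; exact br.yC hc'
      · rintro rfl; exact br.yD hd'
      · rintro rfl; exact Set.disjoint_left.1 hCD hc' hd'
    · push Not at hxD
      exact (br.not_bad hcard htri hx hc hc' hcc h1 h2 h3 h4 hxD).elim
  push Not at hxC
  by_cases hxD : ∃ d ∈ D, G.Adj x d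
  · rcases goD hxD with h | ⟨d, hd, d', hd', hdd, k1, k2, k3, k4⟩
    · exact finD h
    · exact (br.swap.not_bad hcard htri hx hd hd' hdd k1 k2 k3 k4 hxC).elim
  push Not at hxD
  exact (br.false_of_no_neighbor hcard hxC hxD).elim

/-- The paths of the two sides of an articulation point `x` that start next to `x` are joined
through `x`. -/
theorem exists_hPath_of_articulation [Fintype V] (hconn : CutConn G Set.univ)
    (hα : ∀ a b c d : V, a ≠ b → a ≠ c → a ≠ d → b ≠ c → b ≠ d → c ≠ d →
      ¬ G.Adj a b → ¬ G.Adj a c → ¬ G.Adj a d → ¬ G.Adj b c → ¬ G.Adj b d → ¬ G.Adj c d →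
      False)
    (hcard : ∀ x : V, IsArticulation G x →
      Nat.card ((G.induce ({x}ᶜ : Set V)).ConnectedComponent) = 2)
    (htri : ∀ x y z : V, IsArticulation G x → IsArticulation G y → IsArticulation G z →
      G.Adj x y → G.Adj y z → G.Adj x z → False)
    {x : V} (hx : IsArticulation G x) : ∃ b e, HPath G Set.univ b e := by
  obtain ⟨A, B, hA, hB, hAB, hU, hn⟩ := exists_split ((isArticulation_iff x).1 hx)
  obtain ⟨a, a', hxa, hpA⟩ := exists_hPath_beyond hconn hα hcard htri hx hB hA hAB.symm
    (by rw [Set.union_comm, hU]) fun b hb a ha h => hn a ha b hb h.symm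
  obtain ⟨b, b', hxb, hpB⟩ := exists_hPath_beyond hconn hα hcard htri hx hA hB hAB hU hn
  have hxA : x ∉ A := fun h => hU.subset (Or.inl h) rfl
  have hxB : x ∉ B := fun h => hU.subset (Or.inr h) rfl
  have h := (hpA.symm.glue (HPath.single x) hxa.symm (by simpa using hxA)).glue hpB hxb
    (Set.disjoint_union_left.2 ⟨hAB, by simpa using hxB⟩)
  have hall : A ∪ {x} ∪ B = Set.univ := by
    rw [Set.union_right_comm, hU, Set.compl_union_self]
  exact ⟨a', b', hall ▸ h⟩

end FourK1

/-- A connected `4K₁`-free graph `G` (independence number at most 3) has a Hamiltonian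
path iff (a) for every articulation point `x`, the graph `G − {x}` has exactly 2 connected
components, and (b) no three articulation points are pairwise adjacent (induce a triangle). -/
theorem statement12 {V : Type*} [Fintype V] [DecidableEq V] (G : SimpleGraph V)
    (hG : G.Connected)
    (hα : ∀ S : Finset V, ((S : Set V)).Pairwise (fun a b => ¬ G.Adj a b) → S.card ≤ 3) :
    (∃ (u v : V) (p : G.Walk u v), p.IsHamiltonian) ↔
      ((∀ x : V, IsArticulation G x →
          Nat.card ((G.induce ({x}ᶜ : Set V)).ConnectedComponent) = 2) ∧
        ¬ ∃ x y z : V, IsArticulation G x ∧ IsArticulation G y ∧ IsArticulation G z ∧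
          G.Adj x y ∧ G.Adj y z ∧ G.Adj x z) := by
  constructor
  · rintro ⟨u, v, p, hp⟩
    have hnd : p.support.Nodup := hp.isPath.support_nodup
    refine ⟨fun x hx => FourK1.card_components p.isChain_adj_support hp.mem_support hnd hx, ?_⟩
    rintro ⟨x, y, z, hx, hy, hz, hxy, hyz, hxz⟩
    exact FourK1.no_triangle p.isChain_adj_support hp.mem_support hnd hx hy hz hxy hyz hxz
  · rintro ⟨hcard, htri⟩
    have hα4 : ∀ a b c d : V, a ≠ b → a ≠ c → a ≠ d → b ≠ c → b ≠ d → c ≠ d →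
        ¬ G.Adj a b → ¬ G.Adj a c → ¬ G.Adj a d → ¬ G.Adj b c → ¬ G.Adj b d → ¬ G.Adj c d →
        False := by
      intro a b c d hab hac had hbc hbd hcd nab nac nad nbc nbd ncd
      have h := hα {a, b, c, d} (by
        have symm : ∀ u v, G.Adj u v → G.Adj v u := fun _ _ h => h.symm
        intro u hu v hv huv
        simp only [Finset.coe_insert, Finset.coe_singleton, Set.mem_insert_iff,
          Set.mem_singleton_iff] at hu hv
        grind)
      rw [Finset.card_eq_of_equiv_fin (n := 4) (by
        refine Finset.equivFinOfCardEq ?_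
        simp [*])] at h
      omega
    have hconn := FourK1.cutConn_univ hG
    have : Nonempty V := hG.nonempty
    obtain ⟨b, e, h⟩ : ∃ b e, FourK1.HPath G Set.univ b e := by
      by_cases hcut : ∃ x, IsArticulation G x
      · obtain ⟨x, hx⟩ := hcut
        exact FourK1.exists_hPath_of_articulation hconn hα4 hcard
          (fun x y z h1 h2 h3 h4 h5 h6 => htri ⟨x, y, z, h1, h2, h3, h4, h5, h6⟩) hx
      · push Not at hcut
        refine FourK1.exists_hPath_of_two_connected hconn (fun x => ?_) hα4
        have := hcut x
        rwa [FourK1.isArticulation_iff, not_not] at this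
    exact h.exists_walk
end

section
/- Let G be a connected finite simple graph with independence number α(G) ≤ 3 (i.e., G is 4K₁-free). If G does not have a Hamiltonian path, then G has a path cover of size 2, i.e., the vertices of G can be covered by two pairwise vertex-disjoint paths. -/
/-!
Take a path `l` of maximum length, with ends `a` and `b`, and suppose it misses a vertex. By
maximality neither end has a neighbour off the path. By connectedness some vertex `x` off the path
is adjacent to some `y` on it, so if `a` and `b` were adjacent, the path would close up to a cycle,
which could be cut open at `y` and prolonged by `x`. Hence `a` and `b` are nonadjacent, and two
nonadjacent vertices off the path would form, with `a` and `b`, an independent set of size four.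
So the vertices off the path form a clique, which has a Hamiltonian path: this is the second path.

Paths are handled as duplicate-free lists whose consecutive entries are adjacent.
-/

open SimpleGraph

/-- Duplicate-free lists of successively adjacent vertices, the list form of paths. -/
def IsPathList {V : Type*} (G : SimpleGraph V) (l : List V) : Prop :=
  l.IsChain G.Adj ∧ l.Nodup

lemma IsPathList.exists_walk {V : Type*} {G : SimpleGraph V} {l : List V}
    (h : IsPathList G l) (hne : l ≠ []) :
    ∃ (a b : V) (p : G.Walk a b), p.IsPath ∧ p.support = l := by
  have hs := SimpleGraph.Walk.support_ofSupport hne h.1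
  exact ⟨_, _, .ofSupport l hne h.1, by rw [SimpleGraph.Walk.isPath_def, hs]; exact h.2, hs⟩

lemma exists_longest_isPathList {V : Type*} [Fintype V] (G : SimpleGraph V) :
    ∃ l, IsPathList G l ∧ ∀ l', IsPathList G l' → l'.length ≤ l.length := by
  obtain ⟨l, hl, hmin⟩ := (measure fun l : List V => Fintype.card V - l.length).wf.has_min
    {l | IsPathList G l} ⟨[], by simp [IsPathList]⟩
  refine ⟨l, hl, fun l' hl' => ?_⟩
  have h1 := hmin l' hl'
  have h2 := hl'.2.length_le_card
  have h3 := hl.2.length_le_card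
  simp only [InvImage, WellFoundedRelation.rel] at h1
  omega

/-- A longest path that misses a vertex of a connected graph has distinct nonadjacent ends, neither
of which has a neighbour off the path. -/
lemma ends_of_longest {V : Type*} {G : SimpleGraph V} (hG : G.Connected) {l : List V}
    (hl : IsPathList G l) (hmax : ∀ l', IsPathList G l' → l'.length ≤ l.length)
    {z : V} (hz : z ∉ l) :
    ∃ a b, a ∈ l ∧ b ∈ l ∧ a ≠ b ∧ ¬ G.Adj a b ∧
      ∀ r, r ∉ l → ¬ G.Adj a r ∧ ¬ G.Adj b r := by
  have hne : l ≠ [] := by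
    rintro rfl
    have := hmax [z] (by simp [IsPathList])
    simp at this
  obtain ⟨w, hw⟩ := List.exists_mem_of_ne_nil l hne
  obtain ⟨p⟩ := hG.preconnected w z
  obtain ⟨d, -, hy, hx⟩ := p.exists_boundary_dart {v | v ∈ l} hw hz
  obtain ⟨⟨y, x⟩, hyx⟩ := d
  simp only [Set.mem_ofPred_eq] at hy hx hyx
  obtain ⟨s, t, rfl⟩ := List.append_of_mem hy
  obtain ⟨hc, hn⟩ := hl
  have hhead : ∀ r, r ∉ s ++ y :: t → ∀ c ∈ (s ++ y :: t).head?, ¬ G.Adj c r := by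
    intro r hr c hcm had
    have := hmax (r :: (s ++ y :: t))
      ⟨List.isChain_cons.2 ⟨fun e he => by rw [Option.mem_unique he hcm]; exact had.symm, hc⟩,
        List.nodup_cons.2 ⟨hr, hn⟩⟩
    simp at this
  have hlast : ∀ r, r ∉ s ++ y :: t → ∀ c ∈ (s ++ y :: t).getLast?, ¬ G.Adj c r := by
    intro r hr c hcm had
    have := hmax ((s ++ y :: t) ++ [r])
      ⟨List.isChain_append.2 ⟨hc, by simp, fun e he f hf => by
        rw [Option.mem_unique he hcm]; simp at hf; exact hf ▸ had⟩,
        List.nodup_append.2 ⟨hn, by simp, fun e he f hf hef => by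
          simp at hf; exact hr (hf ▸ hef ▸ he)⟩⟩
    simp at this
  cases s with
  | nil => exact absurd hyx (hhead x hx y (by simp))
  | cons a s =>
    have hb : (y :: t).getLast (by simp) ∈ y :: t := List.getLast_mem _
    have hb' : (y :: t).getLast (by simp) ∈ (y :: t).getLast? := by
      simp [List.getLast?_eq_getLast_of_ne_nil]
    have hblast : (y :: t).getLast (by simp) ∈ (a :: s ++ y :: t).getLast? := by
      rw [List.getLast?_append]; simp [Option.mem_def.1 hb']
    generalize (y :: t).getLast (by simp) = b at hb hb' hblast
    have hn' := List.nodup_append.1 hn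
    have hc' := List.isChain_append.1 hc
    refine ⟨a, b, by simp, List.mem_append_right _ hb, hn'.2.2 a (by simp) b hb, fun hab => ?_,
      fun r hr => ⟨hhead r hr a (by simp), hlast r hr b hblast⟩⟩
    -- The edge `ab` closes the path to a cycle; reopen it at `y` and prolong it by `x`.
    have := hmax (x :: (y :: t ++ a :: s))
      ⟨List.isChain_cons.2 ⟨fun e he => by simp at he; exact he ▸ hyx.symm,
        List.isChain_append.2 ⟨hc'.2.1, hc'.1, fun e he f hf => by
          rw [Option.mem_unique he hb']; simp at hf; exact hf ▸ hab.symm⟩⟩,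
        List.nodup_cons.2 ⟨fun h => hx (List.mem_append.2 (List.mem_append.1 h).symm),
          List.nodup_append_comm.1 hn⟩⟩
    simp at this
    omega

/-- If a connected `4K₁`-free graph `G` (independence number at most 3) has no
Hamiltonian path, then its vertices can be covered by two vertex-disjoint paths. -/
theorem statement13 {V : Type*} [Fintype V] [DecidableEq V] (G : SimpleGraph V)
    (hG : G.Connected)
    (hα : ∀ S : Finset V, ((S : Set V)).Pairwise (fun a b => ¬ G.Adj a b) → S.card ≤ 3)
    (hno : ¬ ∃ (u v : V) (p : G.Walk u v), p.IsHamiltonian) :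
    HasPathCover G 2 := by
  obtain ⟨l, hl, hmax⟩ := exists_longest_isPathList G
  have hne : l ≠ [] := by
    rintro rfl
    obtain ⟨v⟩ := hG.nonempty
    have := hmax [v] (by simp [IsPathList])
    simp at this
  obtain ⟨u, v, p, hp, hpl⟩ := hl.exists_walk hne
  have hz : ∃ z, z ∉ l := by
    by_contra! h
    exact hno ⟨u, v, p, hp.isHamiltonian_of_mem fun w => hpl ▸ h w⟩
  obtain ⟨z, hz⟩ := hz
  obtain ⟨a, b, ha, hb, hab, hnab, hout⟩ := ends_of_longest hG hl hmax hz
  have hclique : ∀ r s, r ∉ l → s ∉ l → r ≠ s → G.Adj r s := by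
    intro r s hr hs hrs
    by_contra hadj
    have har : a ≠ r := fun h => hr (h ▸ ha)
    have has : a ≠ s := fun h => hs (h ▸ ha)
    have hbr : b ≠ r := fun h => hr (h ▸ hb)
    have hbs : b ≠ s := fun h => hs (h ▸ hb)
    have hcard : ({a, b, r, s} : Finset V).card = 4 := by
      rw [Finset.card_insert_of_notMem, Finset.card_insert_of_notMem, Finset.card_pair hrs] <;>
        simp [*]
    have := hα {a, b, r, s} (by
      have h1 := hout r hr
      have h2 := hout s hs
      intro c hc d hd _
      simp only [Finset.coe_insert, Finset.coe_singleton, Set.mem_insert_iff,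
        Set.mem_singleton_iff] at hc hd
      rcases hc with rfl | rfl | rfl | rfl <;> rcases hd with rfl | rfl | rfl | rfl <;>
        simp_all [G.adj_comm])
    omega
  have hmem : ∀ w, w ∈ (Finset.univ \ l.toFinset).toList ↔ w ∉ l := by simp
  have hr : IsPathList G (Finset.univ \ l.toFinset).toList := by
    refine ⟨List.Pairwise.isChain ?_, Finset.nodup_toList _⟩
    exact (Finset.nodup_toList _).imp_of_mem fun hc hd hcd =>
      hclique _ _ ((hmem _).1 hc) ((hmem _).1 hd) hcd
  obtain ⟨u', v', q, hq, hql⟩ := hr.exists_walk (List.ne_nil_of_mem ((hmem z).2 hz))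
  have hpm : ∀ w, w ∈ p.support ↔ w ∈ l := fun w => by rw [hpl]
  have hqm : ∀ w, w ∈ q.support ↔ w ∉ l := fun w => by rw [hql, hmem]
  refine ⟨![u, u'], ![v, v'], Fin.cons p (Fin.cons q finZeroElim), ?_, ?_, ?_⟩
  · exact Fin.forall_fin_two.2 ⟨hp, hq⟩
  · refine Fin.forall_fin_two.2 ⟨Fin.forall_fin_two.2 ⟨fun h => (h rfl).elim, fun _ w h h' => ?_⟩,
      Fin.forall_fin_two.2 ⟨fun _ w h h' => ?_, fun h => (h rfl).elim⟩⟩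
    · exact (hqm w).1 h' ((hpm w).1 h)
    · exact (hqm w).1 h ((hpm w).1 h')
  · intro w
    by_cases h : w ∈ l
    · exact ⟨0, (hpm w).2 h⟩
    · exact ⟨1, (hqm w).2 h⟩
end

section
/- For every finite simple graph G, the path cover number satisfies pc(G) ≤ α(G): the vertices of G can be covered by at most α(G) pairwise vertex-disjoint paths, where α(G) is the independence number of G. -/
/-!
A path cover with the fewest paths has pairwise nonadjacent starting vertices: an edge between the
starts of two of its paths would join them, the first one reversed, into a single path
(`exists_join`), and the cover would lose a path (`HasPathCover.pred`). The paths are disjoint, so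
these starts are distinct, and they form an independent set of size `pathCoverNumber G`.
-/

open SimpleGraph

/-- The path cover number of `G`: the least number of pairwise vertex-disjoint paths
covering all vertices of `G`. -/
noncomputable def pathCoverNumber {V : Type*} (G : SimpleGraph V) : ℕ :=
  sInf {m | HasPathCover G m}

/-- The independence number of `G`: the largest size of a set of pairwise
nonadjacent vertices. -/
noncomputable def indepNumber {V : Type*} [Fintype V] (G : SimpleGraph V) : ℕ :=
  sSup {n | ∃ S : Finset V, ((S : Set V)).Pairwise (fun a b => ¬ G.Adj a b) ∧ S.card = n}

/-- A disjoint family of covering paths may be indexed by any finite type, with the endpoints of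
each walk bundled into the family. -/
lemma hasPathCover_card {V ι : Type*} [Fintype ι] {G : SimpleGraph V}
    (W : ι → Σ a : V, Σ b : V, G.Walk a b)
    (hp : ∀ i, (W i).2.2.IsPath)
    (hd : ∀ i j, i ≠ j → ∀ v, v ∈ (W i).2.2.support → v ∉ (W j).2.2.support)
    (hc : ∀ v, ∃ i, v ∈ (W i).2.2.support) : HasPathCover G (Fintype.card ι) := by
  let e := (Fintype.equivFin ι).symm
  refine ⟨fun i => (W (e i)).1, fun i => (W (e i)).2.1, fun i => (W (e i)).2.2,
    fun i => hp _, fun i j hij => hd _ _ (e.injective.ne hij), fun v => ?_⟩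
  obtain ⟨i, hi⟩ := hc v
  refine ⟨e.symm i, ?_⟩
  change v ∈ (W (e (e.symm i))).2.2.support
  rwa [e.apply_symm_apply]

/-- Two disjoint paths with adjacent starts join into one path, by reversing the first. -/
lemma exists_join {V : Type*} {G : SimpleGraph V} {a b c d : V} (p : G.Walk a b) (q : G.Walk c d)
    (hp : p.IsPath) (hq : q.IsPath) (hd : ∀ v, v ∈ p.support → v ∉ q.support) (h : G.Adj a c) :
    ∃ r : G.Walk b d, r.IsPath ∧ ∀ v, v ∈ r.support ↔ v ∈ p.support ∨ v ∈ q.support := by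
  have hs : (p.reverse.append (Walk.cons h q)).support = p.support.reverse ++ q.support := by
    simp [Walk.support_append]
  refine ⟨p.reverse.append (Walk.cons h q), ?_, fun v => by simp [hs]⟩
  rw [Walk.isPath_def, hs, List.nodup_append']
  refine ⟨List.nodup_reverse.2 hp.support_nodup, hq.support_nodup, fun v hv => ?_⟩
  exact hd v (List.mem_reverse.1 hv)

/-- If the starts of two distinct paths of a cover are adjacent, one path can be saved. -/
lemma HasPathCover.pred {V : Type*} {G : SimpleGraph V} {m : ℕ} {s t : Fin m → V}
    (P : ∀ i, G.Walk (s i) (t i)) (hp : ∀ i, (P i).IsPath)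
    (hd : ∀ i j, i ≠ j → ∀ v, v ∈ (P i).support → v ∉ (P j).support)
    (hc : ∀ v, ∃ i, v ∈ (P i).support) {i j : Fin m} (hij : i ≠ j) (h : G.Adj (s i) (s j)) :
    HasPathCover G (m - 1) := by
  obtain ⟨r, hr, hrs⟩ := exists_join (P i) (P j) (hp i) (hp j) (hd i j hij) h
  -- Index `i` is dropped, and the joined path takes the place of `P j`.
  let W : {x : Fin m // x ≠ i} → Σ a : V, Σ b : V, G.Walk a b :=
    fun x => if x.1 = j then ⟨_, _, r⟩ else ⟨_, _, P x.1⟩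
  have hWj : ∀ x, x.1 = j → W x = ⟨_, _, r⟩ := fun x hx => if_pos hx
  have hWn : ∀ x, x.1 ≠ j → W x = ⟨_, _, P x.1⟩ := fun x hx => if_neg hx
  have key : HasPathCover G (Fintype.card {x : Fin m // x ≠ i}) := by
    refine hasPathCover_card W (fun x => ?_) (fun x y hxy v hx hy => ?_) (fun v => ?_)
    · by_cases hx : x.1 = j
      · rw [hWj x hx]; exact hr
      · rw [hWn x hx]; exact hp _
    · have hne : x.1 ≠ y.1 := fun e => hxy (Subtype.ext e)
      by_cases hxj : x.1 = j <;> by_cases hyj : y.1 = j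
      · exact hne (hxj.trans hyj.symm)
      · rw [hWj x hxj] at hx
        rw [hWn y hyj] at hy
        rcases (hrs v).1 hx with h1 | h1
        · exact hd _ _ y.2.symm v h1 hy
        · exact hd _ _ (Ne.symm hyj) v h1 hy
      · rw [hWn x hxj] at hx
        rw [hWj y hyj] at hy
        rcases (hrs v).1 hy with h1 | h1
        · exact hd _ _ x.2 v hx h1
        · exact hd _ _ hxj v hx h1
      · rw [hWn x hxj] at hx
        rw [hWn y hyj] at hy
        exact hd _ _ hne v hx hy
    · obtain ⟨k, hk⟩ := hc v
      by_cases hkr : k = i ∨ k = j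
      · refine ⟨⟨j, hij.symm⟩, ?_⟩
        rw [hWj _ rfl]
        refine (hrs v).2 ?_
        rcases hkr with rfl | rfl
        · exact Or.inl hk
        · exact Or.inr hk
      · push Not at hkr
        exact ⟨⟨k, hkr.1⟩, by rw [hWn ⟨k, hkr.1⟩ hkr.2]; exact hk⟩
  simpa [Fintype.card_subtype_compl] using key

/-- For every finite simple graph, the path cover number is at most the
independence number. -/
theorem statement14 {V : Type*} [Fintype V] (G : SimpleGraph V) :
    pathCoverNumber G ≤ indepNumber G := by
  classical
  -- Single vertices form a cover, so the infimum is attained.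
  have hne : {m | HasPathCover G m}.Nonempty :=
    ⟨_, hasPathCover_card (fun v : V => ⟨v, v, Walk.nil⟩) (by simp) (by simp) (by simp)⟩
  obtain ⟨s, t, P, hp, hd, hc⟩ : HasPathCover G (pathCoverNumber G) := Nat.sInf_mem hne
  have hs : Function.Injective s := fun i j hij => by
    by_contra hne
    have hmem : ∀ v, v = s j → v ∈ (P j).support := by
      rintro _ rfl
      exact (P j).start_mem_support
    exact hd i j hne (s i) (P i).start_mem_support (hmem _ hij)
  refine le_csSup ⟨Fintype.card V, ?_⟩ ⟨Finset.univ.image s, ?_, ?_⟩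
  · rintro n ⟨S, -, rfl⟩
    exact S.card_le_univ
  · intro a ha b hb hab hadj
    obtain ⟨i, rfl⟩ : ∃ i, s i = a := by simpa using ha
    obtain ⟨j, rfl⟩ : ∃ j, s j = b := by simpa using hb
    have hij : i ≠ j := fun e => hab (congrArg s e)
    have hle : pathCoverNumber G ≤ pathCoverNumber G - 1 :=
      Nat.sInf_le (HasPathCover.pred P hp hd hc hij hadj)
    have := i.pos
    omega
  · rw [Finset.card_image_of_injective _ hs, Finset.card_univ, Fintype.card_fin]
end

section
/- Let G be a connected finite simple graph with independence number α(G) ≤ 2 (i.e., G is 3K₁-free) and let x be an articulation point of G. Then G − {x} has exactly two connected components Q₁ and Q₂, each of Q₁ and Q₂ induces a clique in G, x is adjacent to every vertex of at least one of the two components, and x is adjacent to at least one vertex of the other component. -/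
/-!
Let `u`, `v` be vertices of `G − x` in different components, let `Q₁` be the component of `u`
and `Q₂` the set of all remaining vertices of `G − x`; there is no edge between `Q₁` and `Q₂`.
Two nonadjacent vertices on one side, together with any vertex of the other side, would form an
independent triple, so both sides are cliques; in particular `Q₂` is a single component.
Since `G` is connected, edges leave both `Q₁` and `Q₂`, and such edges can only end at `x`.
Finally, `x` cannot miss a vertex of `Q₁` and a vertex of `Q₂` simultaneously, as these two
vertices and `x` would be independent.
-/

open SimpleGraph

/-- Any three distinct vertices of a graph with independence number at most 2 span an edge. -/
lemma exists_adj_of_three {V : Type*} [DecidableEq V] {G : SimpleGraph V}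
    (hα : ∀ S : Finset V, ((S : Set V)).Pairwise (fun a b => ¬ G.Adj a b) → S.card ≤ 2)
    {a b c : V} (hab : a ≠ b) (hac : a ≠ c) (hbc : b ≠ c) :
    G.Adj a b ∨ G.Adj a c ∨ G.Adj b c := by
  by_contra! h
  obtain ⟨h1, h2, h3⟩ := h
  have hS := hα {a, b, c} (by
    intro p hp q hq _
    simp only [Finset.coe_insert, Finset.coe_singleton, Set.mem_insert_iff,
      Set.mem_singleton_iff] at hp hq
    rcases hp with rfl | rfl | rfl <;> rcases hq with rfl | rfl | rfl <;>
      simp_all [G.adj_comm])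
  rw [Finset.card_eq_three.2 ⟨a, b, c, hab, hac, hbc, rfl⟩] at hS
  omega

lemma connected_induce_of_isClique {V : Type*} {G : SimpleGraph V} {Q : Set V}
    (hQ : G.IsClique Q) (hne : Q.Nonempty) : (G.induce Q).Connected := by
  have := hne.to_subtype
  refine ⟨fun a b => ?_⟩
  by_cases hab : a = b
  · exact hab ▸ Reachable.refl _
  · exact Adj.reachable (show G.Adj a b from hQ a.2 b.2 (fun h => hab (Subtype.ext h)))

/-- In a connected graph, a nonempty set whose only possible outside neighbour is `x` does
contain a neighbour of `x`. -/
lemma exists_adj_mem {V : Type*} {G : SimpleGraph V} (hG : G.Connected) {Q : Set V} {x : V}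
    (hne : Q.Nonempty) (hx : x ∉ Q) (hQ : ∀ a ∈ Q, ∀ b, G.Adj a b → b ∉ Q → b = x) :
    ∃ a ∈ Q, G.Adj x a := by
  obtain ⟨q, hq⟩ := hne
  obtain ⟨p⟩ := hG.preconnected q x
  obtain ⟨d, -, hd1, hd2⟩ := p.exists_boundary_dart Q hq hx
  have hd := hQ _ hd1 _ d.adj hd2
  exact ⟨d.fst, hd1, hd ▸ d.adj.symm⟩

/-- If `G` is a connected `3K₁`-free graph (independence number at most 2) and `x` is an
articulation point, then `G − {x}` has exactly two connected components `Q₁` and `Q₂`,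
each inducing a clique in `G`; moreover `x` is adjacent to every vertex of one of the
components and to at least one vertex of the other. -/
theorem statement15 {V : Type*} [Fintype V] [DecidableEq V] (G : SimpleGraph V)
    (hG : G.Connected)
    (hα : ∀ S : Finset V, ((S : Set V)).Pairwise (fun a b => ¬ G.Adj a b) → S.card ≤ 2)
    (x : V) (hx : IsArticulation G x) :
    ∃ Q₁ Q₂ : Set V, Q₁.Nonempty ∧ Q₂.Nonempty ∧ Disjoint Q₁ Q₂ ∧ Q₁ ∪ Q₂ = {x}ᶜ ∧
      (∀ a ∈ Q₁, ∀ b ∈ Q₂, ¬ G.Adj a b) ∧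
      (G.induce Q₁).Connected ∧ (G.induce Q₂).Connected ∧
      G.IsClique Q₁ ∧ G.IsClique Q₂ ∧
      (((∀ a ∈ Q₁, G.Adj x a) ∧ (∃ b ∈ Q₂, G.Adj x b)) ∨
        ((∀ a ∈ Q₂, G.Adj x a) ∧ (∃ b ∈ Q₁, G.Adj x b))) := by
  unfold IsArticulation Preconnected at hx
  push Not at hx
  obtain ⟨u, v, huv⟩ := hx
  obtain ⟨Q₁, hQ₁⟩ : ∃ Q : Set V, Q =
      {w | ∃ h : w ∈ ({x}ᶜ : Set V), (G.induce ({x}ᶜ : Set V)).Reachable u ⟨w, h⟩} := ⟨_, rfl⟩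
  obtain ⟨Q₂, hQ₂⟩ : ∃ Q : Set V, Q = {x}ᶜ \ Q₁ := ⟨_, rfl⟩
  have hu : (u : V) ∈ Q₁ := hQ₁ ▸ ⟨u.2, Reachable.refl _⟩
  have hv : (v : V) ∈ Q₂ := by
    rw [hQ₂, hQ₁]
    exact ⟨v.2, fun ⟨_, h⟩ => huv h⟩
  have hsub : Q₁ ⊆ {x}ᶜ := by
    rw [hQ₁]
    exact fun w hw => hw.1
  have hx1 : x ∉ Q₁ := fun h => hsub h rfl
  have hx2 : x ∉ Q₂ := fun h => (hQ₂ ▸ h : x ∈ ({x}ᶜ : Set V) \ Q₁).1 rfl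
  have hdisj : Disjoint Q₁ Q₂ := hQ₂ ▸ Set.disjoint_sdiff_right
  have hunion : Q₁ ∪ Q₂ = {x}ᶜ := hQ₂ ▸ Set.union_sdiff_cancel hsub
  have hcover : ∀ w, w ≠ x → w ∈ Q₁ ∨ w ∈ Q₂ := fun w hw =>
    (hunion ▸ hw : w ∈ Q₁ ∪ Q₂)
  have hno : ∀ a ∈ Q₁, ∀ b ∈ Q₂, ¬ G.Adj a b := by
    intro a ha b hb hab
    rw [hQ₂] at hb
    refine hb.2 ?_
    rw [hQ₁] at ha ⊢
    obtain ⟨ha', hr⟩ := ha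
    exact ⟨hb.1, hr.trans (Adj.reachable (show G.Adj a b from hab))⟩
  have hne : ∀ a ∈ Q₁, ∀ b ∈ Q₂, a ≠ b := fun a ha b hb =>
    Set.disjoint_iff_forall_ne.1 hdisj ha hb
  have hc1 : G.IsClique Q₁ := by
    intro a ha b hb hab
    rcases exists_adj_of_three hα hab (hne a ha v hv) (hne b hb v hv) with h | h | h
    · exact h
    · exact absurd h (hno a ha v hv)
    · exact absurd h (hno b hb v hv)
  have hc2 : G.IsClique Q₂ := by
    intro a ha b hb hab
    rcases exists_adj_of_three hα hab (hne u hu a ha).symm (hne u hu b hb).symm with h | h | h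
    · exact h
    · exact absurd h.symm (hno u hu a ha)
    · exact absurd h.symm (hno u hu b hb)
  have hn1 : ∃ b ∈ Q₁, G.Adj x b := by
    refine exists_adj_mem hG ⟨u, hu⟩ hx1 fun a ha b hab hb => ?_
    by_contra hbx
    exact hno a ha b ((hcover b hbx).resolve_left hb) hab
  have hn2 : ∃ b ∈ Q₂, G.Adj x b := by
    refine exists_adj_mem hG ⟨v, hv⟩ hx2 fun a ha b hab hb => ?_
    by_contra hbx
    exact hno b ((hcover b hbx).resolve_right hb) a ha hab.symm
  refine ⟨Q₁, Q₂, ⟨u, hu⟩, ⟨v, hv⟩, hdisj, hunion, hno,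
    connected_induce_of_isClique hc1 ⟨u, hu⟩, connected_induce_of_isClique hc2 ⟨v, hv⟩,
    hc1, hc2, ?_⟩
  by_cases hall : ∀ a ∈ Q₁, G.Adj x a
  · exact Or.inl ⟨hall, hn2⟩
  · push Not at hall
    obtain ⟨a, ha, hxa⟩ := hall
    refine Or.inr ⟨fun b hb => ?_, hn1⟩
    have hxa' : x ≠ a := fun h => hx1 (h ▸ ha)
    have hxb' : x ≠ b := fun h => hx2 (h ▸ hb)
    rcases exists_adj_of_three hα hxa' hxb'
      (hne a ha b hb) with h | h | h
    · exact absurd h hxa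
    · exact h
    · exact absurd h (hno a ha b hb)
end

section
/- Let G be a finite simple graph with n ≥ 1 vertices and let Ḡ denote its complement. Then: (i) λ(G) ≤ n − 1 if and only if pc(Ḡ) = 1 (i.e., Ḡ has a Hamiltonian path); and (ii) for every integer r ≥ 2, λ(G) = n + r − 2 if and only if pc(Ḡ) = r, where λ(G) is the L(2,1)-labelling number of G and pc denotes the path cover number. -/
/-!
Write `n` for the number of vertices and `H = Gᶜ`.

*Upper bound.* Given a cover of `H` by `m` disjoint paths, number the vertices consecutively
along the paths, skipping one label between consecutive paths. This is an injective
`L(2,1)`-labelling of `G` with largest label at most `n + m - 2`.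

*Lower bound.* From a labelling of `G` in `{0, …, k}` one obtains a cover of `H` by `m` paths with
`m = 1` or `m + n ≤ k + 2`. Two vertices whose labels differ by at most one are adjacent in `H`,
and a vertex is `G`-adjacent to at most one vertex of each label class. Among the labellings in
`{0, …, k}` take one whose partition into label classes cannot be properly refined.

* If it is injective, listing the vertices by label breaks into at most one more path than there
  are unused labels, which is the bound `m + n ≤ k + 2`.
* Otherwise some class contains two vertices, and every unused label `h` has at least two
  vertices labelled `h - 1` and at least two labelled `h + 1` (`IsUnrefinable.two_around_hole`).
  If not, one can either move a vertex of a large class to the label `h`, or, when a class with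
  label `i < h` contains a vertex `x` adjacent to the unique vertex labelled `h - 1`, reverse the
  order of the labels strictly between `i` and `h` and give `x` the label `h`; both operations
  refine the partition. With two vertices on both sides of every gap, one can list the classes in
  order and choose first and last vertices so that consecutive vertices are always adjacent in `H`:
  a vertex of one side is non-adjacent in `H` to at most one vertex of the other side.
  So `H` has a Hamiltonian path.

Applied to optimal labellings and covers, the two bounds give the theorem.
-/

open SimpleGraph

/-- `f` is an `L(2,1)`-labelling of `G`: labels of adjacent vertices differ by at least 2,
and vertices at distance exactly 2 receive distinct labels. -/
def IsL21Labelling {V : Type*} (G : SimpleGraph V) (f : V → ℕ) : Prop :=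
  (∀ u v : V, G.Adj u v → 2 ≤ |(f u : ℤ) - (f v : ℤ)|) ∧
    (∀ u v : V, G.dist u v = 2 → f u ≠ f v)

/-- `λ(G)`: the least `k` such that `G` has an `L(2,1)`-labelling using labels in
`{0, …, k}`. -/
noncomputable def lambdaL21 {V : Type*} (G : SimpleGraph V) : ℕ :=
  sInf {k | ∃ f : V → ℕ, IsL21Labelling G f ∧ ∀ v, f v ≤ k}

section Labellings

variable {V : Type*} {G : SimpleGraph V}

/-- The form of the `L(2,1)` condition used below: labels of adjacent vertices are neither equal
nor consecutive (the other order follows by symmetry), and two vertices with a common neighbour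
have distinct labels. -/
def IsLab (G : SimpleGraph V) (f : V → ℕ) : Prop :=
  (∀ u v, G.Adj u v → f u ≠ f v ∧ f u + 1 ≠ f v) ∧
    (∀ u v w, u ≠ v → G.Adj u w → G.Adj v w → f u ≠ f v)

lemma IsLab.compl_adj {f : V → ℕ} (hf : IsLab G f) {u v : V} (hne : u ≠ v)
    (h : f u = f v ∨ f u + 1 = f v ∨ f v + 1 = f u) : Gᶜ.Adj u v := by
  rw [SimpleGraph.compl_adj]
  refine ⟨hne, fun huv => ?_⟩
  have := hf.1 u v huv
  have := hf.1 v u huv.symm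
  omega

lemma dist_eq_two_iff' {u v : V} :
    G.dist u v = 2 ↔ u ≠ v ∧ ¬ G.Adj u v ∧ (G.commonNeighbors u v).Nonempty := by
  rw [← edist_eq_two_iff, SimpleGraph.dist]
  constructor
  · intro h
    have : G.edist u v ≠ ⊤ := by
      intro h'
      simp [h'] at h
    rw [← ENat.natCast_toNat this, h]
    rfl
  · intro h
    rw [h]
    rfl

lemma isL21Labelling_iff {f : V → ℕ} : IsL21Labelling G f ↔ IsLab G f := by
  constructor
  · rintro ⟨h1, h2⟩
    have h3 : ∀ u v, G.Adj u v → f u ≠ f v ∧ f u + 1 ≠ f v := by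
      intro u v huv
      have := h1 u v huv
      rw [le_abs] at this
      omega
    refine ⟨h3, fun u v w huv huw hvw => ?_⟩
    by_cases ha : G.Adj u v
    · exact (h3 u v ha).1
    · exact h2 u v (dist_eq_two_iff'.2 ⟨huv, ha, w, huw, hvw⟩)
  · rintro ⟨h1, h2⟩
    refine ⟨fun u v huv => ?_, fun u v huv => ?_⟩
    · have := h1 u v huv
      have := h1 v u huv.symm
      rw [le_abs]
      omega
    · obtain ⟨hne, -, w, huw, hvw⟩ := dist_eq_two_iff'.1 huv
      exact h2 u v w hne huw hvw

/-- `f` is a labelling in `{0, …, k}` whose partition into label classes is not properly refined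
by that of another such labelling. -/
structure IsUnrefinable (G : SimpleGraph V) (k : ℕ) (f : V → ℕ) : Prop where
  lab : IsLab G f
  le : ∀ v, f v ≤ k
  unref : ∀ g, IsLab G g → (∀ v, g v ≤ k) → (∀ u v, g u = g v → f u = f v) →
    ∀ u v, f u = f v → g u = g v

lemma IsLab.reflect {k : ℕ} {f : V → ℕ} (hf : IsLab G f) (hk : ∀ v, f v ≤ k) :
    IsLab G (fun v => k - f v) := by
  refine ⟨fun u v huv => ?_, fun u v w huv huw hvw => ?_⟩
  · change k - f u ≠ k - f v ∧ k - f u + 1 ≠ k - f v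
    have := hf.1 u v huv
    have := hf.1 v u huv.symm
    have := hk u
    have := hk v
    omega
  · change k - f u ≠ k - f v
    have := hf.2 u v w huv huw hvw
    have := hk u
    have := hk v
    omega

lemma IsUnrefinable.reflect {k : ℕ} {f : V → ℕ} (hf : IsUnrefinable G k f) :
    IsUnrefinable G k (fun v => k - f v) := by
  refine ⟨hf.lab.reflect hf.le, fun v => Nat.sub_le _ _, fun g hg hgk hgf u v huv => ?_⟩
  refine hf.unref g hg hgk (fun u v h => ?_) u v ?_
  · have : k - f u = k - f v := hgf u v h
    have := hf.le u
    have := hf.le v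
    omega
  · have : k - f u = k - f v := huv
    have := hf.le u
    have := hf.le v
    omega

lemma exists_isUnrefinable [Fintype V] {k : ℕ} {f₀ : V → ℕ} (h0 : IsLab G f₀)
    (h0k : ∀ v, f₀ v ≤ k) : ∃ f, IsUnrefinable G k f := by
  classical
  -- Minimise the number of pairs of vertices with equal labels.
  let E : (V → ℕ) → Finset (V × V) := fun f => Finset.univ.filter fun p => f p.1 = f p.2
  let S : Set (V → ℕ) := {f | IsLab G f ∧ ∀ v, f v ≤ k}
  have hS : S.Nonempty := ⟨f₀, h0, h0k⟩
  let f := Function.argminOn (fun f => (E f).card) S hS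
  have hfS : f ∈ S := Function.argminOn_mem _ _ _
  refine ⟨f, hfS.1, hfS.2, fun g hg hgk hgf u v huv => ?_⟩
  have hle : (E f).card ≤ (E g).card :=
    Function.argminOn_le (fun f => (E f).card) S (show g ∈ S from ⟨hg, hgk⟩)
  have hsub : E g ⊆ E f := by
    intro p hp
    simp only [E, Finset.mem_filter, Finset.mem_univ, true_and] at hp ⊢
    exact hgf _ _ hp
  have heq := Finset.eq_of_subset_of_card_le hsub hle
  have : (u, v) ∈ E g := by
    rw [heq]
    simp [E, huv]
  simpa [E] using this

namespace IsUnrefinable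

variable {k h : ℕ} {f : V → ℕ}

/-- Otherwise `x` could be moved to the unused label `h`. -/
lemma exists_adj_of_hole (hf : IsUnrefinable G k f) (hhk : h ≤ k) (hh : ∀ v, f v ≠ h)
    {x y : V} (hxy : x ≠ y) (hfxy : f x = f y) :
    ∃ z, G.Adj x z ∧ (f z + 1 = h ∨ f z = h + 1) := by
  classical
  by_contra! hcon
  let g : V → ℕ := fun v => if v = x then h else f v
  have hgx : g x = h := by simp [g]
  have hgv : ∀ v, v ≠ x → g v = f v := fun v hv => by simp [g, hv]
  have hgf : ∀ u v, g u = g v → f u = f v := by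
    intro u v huv
    by_cases hu : u = x <;> by_cases hv : v = x
    · rw [hu, hv]
    · rw [hu, hgx, hgv v hv] at huv
      exact absurd huv.symm (hh v)
    · rw [hv, hgx, hgv u hu] at huv
      exact absurd huv (hh u)
    · rwa [hgv u hu, hgv v hv] at huv
  have hgl : IsLab G g := by
    refine ⟨fun u v huv => ⟨fun e => (hf.lab.1 u v huv).1 (hgf u v e), ?_⟩,
      fun u v w huv huw hvw e => hf.lab.2 u v w huv huw hvw (hgf u v e)⟩
    by_cases hu : u = x <;> by_cases hv : v = x
    · exact absurd (hu.trans hv.symm) huv.ne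
    · subst hu
      have := hcon v huv
      rw [hgx, hgv v hv]
      omega
    · subst hv
      have := hcon u huv.symm
      rw [hgx, hgv u hu]
      omega
    · rw [hgv u hu, hgv v hv]
      exact (hf.lab.1 u v huv).2
  have := hf.unref g hgl (fun v => by by_cases hv : v = x <;> simp [g, hv, hhk, hf.le]) hgf x y hfxy
  rw [hgx, hgv y hxy.symm] at this
  exact hh y this.symm

/-- Otherwise one could reverse the order of the labels strictly between `f x` and `h` and give
`x` the label `h`. -/
lemma exists_adj_of_hole_of_lt (hf : IsUnrefinable G k f) (hhk : h ≤ k) (hh : ∀ v, f v ≠ h)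
    {x y : V} (hxy : x ≠ y) (hfxy : f x = f y) (hxh : f x < h)
    (hu : ∀ u v, f u + 1 = h → f v = f x → v ≠ x → ¬ G.Adj u v) :
    ∃ z, G.Adj x z ∧ f z = h + 1 := by
  classical
  by_contra! hcon
  let g : V → ℕ := fun v => if v = x then h else if f x < f v ∧ f v < h then f x + h - f v else f v
  have hgx : g x = h := by simp [g]
  have hgv : ∀ v, v ≠ x → (f x < f v ∧ f v < h ∧ g v = f x + h - f v) ∨
      (f v ≤ f x ∧ g v = f v) ∨ (h < f v ∧ g v = f v) := by
    intro v hv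
    have := hh v
    by_cases h1 : f x < f v ∧ f v < h
    · left
      simp [g, hv, h1]
    · right
      have : g v = f v := by simp [g, hv, h1]
      omega
  have hgf : ∀ u v, g u = g v → f u = f v := by
    intro u v huv
    by_cases hu : u = x <;> by_cases hv : v = x
    · rw [hu, hv]
    · subst hu
      have := hgv v hv
      omega
    · subst hv
      have := hgv u hu
      omega
    · have := hgv u hu
      have := hgv v hv
      omega
  have hgl : IsLab G g := by
    refine ⟨fun u v huv => ⟨fun e => (hf.lab.1 u v huv).1 (hgf u v e), ?_⟩,
      fun u v w huv huw hvw e => hf.lab.2 u v w huv huw hvw (hgf u v e)⟩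
    have a1 := hf.lab.1 u v huv
    have a2 := hf.lab.1 v u huv.symm
    by_cases hux : u = x <;> by_cases hvx : v = x
    · exact absurd (hux.trans hvx.symm) huv.ne
    · subst hux
      have := hcon v huv
      have := hgv v hvx
      omega
    · subst hvx
      have := hgv u hux
      omega
    · have b1 := hgv u hux
      have b2 := hgv v hvx
      -- Labels `f x` and `f x + 1` of `g` are the one place where new adjacent classes meet.
      have b3 : f v + 1 = h → f u ≠ f x := fun e1 e2 => hu v u e1 e2 hux huv.symm
      omega
  have hgk : ∀ v, g v ≤ k := by
    intro v
    have := hf.le v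
    by_cases hv : v = x
    · rw [hv, hgx]
      exact hhk
    · have := hgv v hv
      omega
  have := hf.unref g hgl hgk hgf x y hfxy
  have := hgv y hxy.symm
  omega

/-- If at most one vertex is labelled `h - 1` and at most one `h + 1`, a vertex `x` of a class
below `h` not adjacent to the latter can be moved to `h`, after a reversal if it is adjacent to
the former. -/
lemma not_lt_hole (hf : IsUnrefinable G k f) (hhk : h ≤ k) (hh : ∀ v, f v ≠ h)
    (hl : ∀ u u', f u + 1 = h → f u' + 1 = h → u = u')
    (hr : ∀ w w', f w = h + 1 → f w' = h + 1 → w = w')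
    {x y : V} (hxy : x ≠ y) (hfxy : f x = f y) : ¬ f x < h := by
  intro hxh
  have key : ∀ x y, x ≠ y → f x = f y → f x < h → ∃ z, G.Adj x z ∧ f z = h + 1 := by
    intro x y hxy hfxy hxh
    obtain ⟨z, hxz, hz | hz⟩ := hf.exists_adj_of_hole hhk hh hxy hfxy
    · refine hf.exists_adj_of_hole_of_lt hhk hh hxy hfxy hxh fun u v hu hv hvx huv => ?_
      obtain rfl := hl z u hz hu
      exact hf.lab.2 v x z hvx huv.symm hxz hv
    · exact ⟨z, hxz, hz⟩
  obtain ⟨z, hxz, hz⟩ := key x y hxy hfxy hxh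
  obtain ⟨z', hyz, hz'⟩ := key y x hxy.symm hfxy.symm (hfxy ▸ hxh)
  obtain rfl := hr z z' hz hz'
  exact hf.lab.2 x y z hxy hxz hyz hfxy

/-- If at most one vertex is labelled `h - 1`, it is adjacent to at most one of two vertices
labelled `h + 1`, and another one of them can be moved to `h`. -/
lemma right_subsingleton (hf : IsUnrefinable G k f) (hhk : h ≤ k) (hh : ∀ v, f v ≠ h)
    (hl : ∀ u u', f u + 1 = h → f u' + 1 = h → u = u') :
    ∀ w w', f w = h + 1 → f w' = h + 1 → w = w' := by
  intro x y hx hy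
  by_contra hxy
  obtain ⟨z, hxz, hz⟩ := hf.exists_adj_of_hole hhk hh hxy (hx.trans hy.symm)
  obtain ⟨z', hyz, hz'⟩ := hf.exists_adj_of_hole hhk hh (Ne.symm hxy) (hy.trans hx.symm)
  have h1 := hf.lab.1 x z hxz
  have h2 := hf.lab.1 y z' hyz
  obtain rfl := hl z z' (by omega) (by omega)
  exact hf.lab.2 x y z hxy hxz hyz (hx.trans hy.symm)

/-- If an unrefinable labelling is not injective, then on both sides of every unused label there
are at least two vertices. -/
lemma two_around_hole (hf : IsUnrefinable G k f) (hhk : h ≤ k) (hh : ∀ v, f v ≠ h)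
    {a b : V} (hab : a ≠ b) (hfab : f a = f b) :
    (∃ u u', u ≠ u' ∧ f u + 1 = h ∧ f u' + 1 = h) ∧
      (∃ w w', w ≠ w' ∧ f w = h + 1 ∧ f w' = h + 1) := by
  have hk := hf.le
  have hh' : ∀ v, k - f v ≠ k - h := fun v => by
    have := hh v
    have := hk v
    omega
  have hboth : ¬ ((∀ u u', f u + 1 = h → f u' + 1 = h → u = u') ∧
      (∀ w w', f w = h + 1 → f w' = h + 1 → w = w')) := by
    rintro ⟨hl, hr⟩
    have h1 := hf.not_lt_hole hhk hh hl hr hab hfab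
    have h2 := hf.reflect.not_lt_hole (Nat.sub_le k h) hh'
      (fun u u' hu hu' => hr u u' (by have := hk u; omega) (by have := hk u'; omega))
      (fun u u' hu hu' => hl u u' (by have := hk u; omega) (by have := hk u'; omega))
      hab (by simp only [hfab])
    have := hh a
    have := hk a
    omega
  have hlr := hf.right_subsingleton hhk hh
  have hrl : (∀ w w', f w = h + 1 → f w' = h + 1 → w = w') →
      (∀ u u', f u + 1 = h → f u' + 1 = h → u = u') := by
    intro hr u u' hu hu'
    refine hf.reflect.right_subsingleton (Nat.sub_le k h) hh'
      (fun u u' hu hu' => hr u u' (by have := hk u; omega) (by have := hk u'; omega)) u u' ?_ ?_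
    · have := hk u
      omega
    · have := hk u'
      omega
  constructor
  · by_contra! hcon
    have hl : ∀ u u', f u + 1 = h → f u' + 1 = h → u = u' := fun u u' hu hu' => by
      by_contra hne
      exact hcon u u' hne hu hu'
    exact hboth ⟨hl, hlr hl⟩
  · by_contra! hcon
    have hr : ∀ u u', f u = h + 1 → f u' = h + 1 → u = u' := fun u u' hu hu' => by
      by_contra hne
      exact hcon u u' hne hu hu'
    exact hboth ⟨hrl hr, hr⟩

end IsUnrefinable

end Labellings

section PathSystems

variable {V : Type*}

/-- Path covers as lists of vertex lists: every list is the vertex sequence of a walk, no vertex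
is repeated within or between lists, and every vertex occurs. -/
structure IsPathSystem (H : SimpleGraph V) (L : List (List V)) : Prop where
  ne_nil : ∀ p ∈ L, p ≠ []
  chain : ∀ p ∈ L, p.IsChain H.Adj
  nodup : L.flatten.Nodup
  mem : ∀ v, v ∈ L.flatten

lemma IsPathSystem.hasPathCover {H : SimpleGraph V} {L : List (List V)} (hL : IsPathSystem H L) :
    HasPathCover H L.length := by
  have hne : ∀ i : Fin L.length, L[i] ≠ [] := fun i => hL.ne_nil _ (List.getElem_mem _)
  have hch : ∀ i : Fin L.length, L[i].IsChain H.Adj := fun i => hL.chain _ (List.getElem_mem _)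
  obtain ⟨hnd, hdis⟩ := List.nodup_flatten.1 hL.nodup
  refine ⟨_, _, fun i => Walk.ofSupport L[i] (hne i) (hch i), fun i => ?_, fun i j hij v => ?_,
    fun v => ?_⟩
  · rw [Walk.isPath_def, Walk.support_ofSupport]
    exact hnd _ (List.getElem_mem _)
  · rw [Walk.support_ofSupport, Walk.support_ofSupport]
    intro hi hj
    rw [List.pairwise_iff_getElem] at hdis
    rcases lt_or_gt_of_ne (Fin.val_ne_of_ne hij) with h | h
    · exact hdis i j i.2 j.2 h hi hj
    · exact hdis j i j.2 i.2 h hj hi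
  · obtain ⟨p, hp, hv⟩ := List.mem_flatten.1 (hL.mem v)
    obtain ⟨i, hi, rfl⟩ := List.getElem_of_mem hp
    refine ⟨⟨i, hi⟩, ?_⟩
    rw [Walk.support_ofSupport]
    exact hv

lemma HasPathCover.exists_isPathSystem {H : SimpleGraph V} {m : ℕ} (h : HasPathCover H m) :
    ∃ L, IsPathSystem H L ∧ L.length = m := by
  obtain ⟨s, t, P, hP, hdis, hcov⟩ := h
  refine ⟨List.ofFn fun i => (P i).support, ⟨?_, ?_, ?_, ?_⟩, List.length_ofFn⟩
  · intro p hp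
    obtain ⟨i, rfl⟩ := List.mem_ofFn.1 hp
    exact Walk.support_ne_nil _
  · intro p hp
    obtain ⟨i, rfl⟩ := List.mem_ofFn.1 hp
    exact Walk.isChain_adj_support _
  · rw [List.nodup_flatten]
    constructor
    · intro p hp
      obtain ⟨i, rfl⟩ := List.mem_ofFn.1 hp
      exact (Walk.isPath_def _).1 (hP i)
    · rw [List.pairwise_ofFn]
      intro i j hij v hi hj
      exact hdis i j hij.ne v hi hj
  · intro v
    obtain ⟨i, hi⟩ := hcov v
    exact List.mem_flatten.2 ⟨_, List.mem_ofFn.2 ⟨i, rfl⟩, hi⟩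

/-- Consecutive numbering along the lists of `L`, skipping one number between lists. -/
lemma exists_labelling_of_lists {H : SimpleGraph V} (L : List (List V))
    (hch : ∀ p ∈ L, p.IsChain H.Adj) (hnd : L.flatten.Nodup) :
    ∃ f : V → ℕ, (∀ u ∈ L.flatten, ∀ v ∈ L.flatten, f u = f v → u = v) ∧
      (∀ u ∈ L.flatten, ∀ v ∈ L.flatten, f u + 1 = f v → H.Adj u v) ∧
      (∀ u ∈ L.flatten, f u + 2 ≤ L.flatten.length + L.length) := by
  classical
  induction L with
  | nil => exact ⟨fun _ => 0, by simp⟩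
  | cons p t ih =>
    rw [List.flatten_cons, List.nodup_append] at hnd
    obtain ⟨hp, ht, hpt⟩ := hnd
    obtain ⟨f, h1, h2, h3⟩ := ih (fun q hq => hch q (List.mem_cons_of_mem _ hq)) ht
    let g : V → ℕ := fun v => if v ∈ p then p.idxOf v else p.length + 1 + f v
    have gp : ∀ v ∈ p, g v = p.idxOf v ∧ g v < p.length := fun v hv => by
      simp [g, hv, List.idxOf_lt_length_iff]
    have gt : ∀ v ∈ t.flatten, g v = p.length + 1 + f v := fun v hv => by
      have : v ∉ p := fun hv' => hpt v hv' v hv rfl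
      simp [g, this]
    refine ⟨g, ?_, ?_, ?_⟩
    · intro u hu v hv huv
      rw [List.flatten_cons, List.mem_append] at hu hv
      rcases hu with hu | hu <;> rcases hv with hv | hv
      · rw [(gp u hu).1, (gp v hv).1] at huv
        exact (List.idxOf_inj hu).1 huv
      · have := gp u hu
        have := gt v hv
        omega
      · have := gt u hu
        have := gp v hv
        omega
      · have := gt u hu
        have := gt v hv
        exact h1 u hu v hv (by omega)
    · intro u hu v hv huv
      rw [List.flatten_cons, List.mem_append] at hu hv
      rcases hu with hu | hu <;> rcases hv with hv | hv
      · rw [(gp u hu).1, (gp v hv).1] at huv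
        have hlt : p.idxOf u + 1 < p.length := by
          rw [huv]
          exact List.idxOf_lt_length_iff.2 hv
        have := List.isChain_iff_getElem.1 (hch p List.mem_cons_self) (p.idxOf u) hlt
        simpa [huv] using this
      · have := gp u hu
        have := gt v hv
        omega
      · have := gt u hu
        have := gp v hv
        omega
      · have := gt u hu
        have := gt v hv
        exact h2 u hu v hv (by omega)
    · intro u hu
      rw [List.flatten_cons, List.mem_append] at hu
      rw [List.flatten_cons, List.length_append, List.length_cons]
      rcases hu with hu | hu
      · have := gp u hu
        omega
      · have := gt u hu
        have := h3 u hu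
        omega

variable [Fintype V] {G : SimpleGraph V}

lemma IsPathSystem.length_flatten {H : SimpleGraph V} {L : List (List V)} (hL : IsPathSystem H L) :
    L.flatten.length = Fintype.card V := by
  classical
  rw [← List.toFinset_card_of_nodup hL.nodup, ← Finset.card_univ]
  congr 1
  ext v
  simpa using hL.mem v

lemma HasPathCover.exists_isLab {m : ℕ} (h : HasPathCover Gᶜ m) :
    ∃ f, IsLab G f ∧ ∀ v, f v + 2 ≤ Fintype.card V + m := by
  obtain ⟨L, hL, rfl⟩ := h.exists_isPathSystem
  obtain ⟨f, h1, h2, h3⟩ := exists_labelling_of_lists L hL.chain hL.nodup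
  rw [hL.length_flatten] at h3
  refine ⟨f, ⟨fun u v huv => ⟨fun e => huv.ne (h1 u (hL.mem u) v (hL.mem v) e), fun e => ?_⟩,
    fun u v w huv _ _ e => huv (h1 u (hL.mem u) v (hL.mem v) e)⟩, fun v => h3 v (hL.mem v)⟩
  exact ((compl_adj _ _ _).1 (h2 u (hL.mem u) v (hL.mem v) e)).2 huv

/-- Adding the vertices of an injective labelling in increasing order of labels: the lists are kept
in reverse, so that the next vertex is put in front of the first list, or forms a new list. -/
lemma exists_lists_of_injective {f : V → ℕ} (hf : IsLab G f) (hinj : f.Injective) (j : ℕ) :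
    ∃ L : List (List V), (∀ p ∈ L, p ≠ []) ∧ (∀ p ∈ L, p.IsChain Gᶜ.Adj) ∧ L.flatten.Nodup ∧
      (∀ v, v ∈ L.flatten ↔ f v < j) ∧ L.length + L.flatten.length ≤ j + 1 ∧
      (L.length + L.flatten.length ≤ j ∨ ∃ a q t, L = (a :: q) :: t ∧ f a + 1 = j) := by
  induction j with
  | zero => exact ⟨[], by simp⟩
  | succ j ih =>
    obtain ⟨L, hne, hch, hnd, hmem, hlen, hor⟩ := ih
    by_cases hv : ∃ v, f v = j
    · obtain ⟨v, hv⟩ := hv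
      have hvL : v ∉ L.flatten := fun h => by
        have := (hmem v).1 h
        omega
      have hmem' : ∀ u, (u = v ∨ u ∈ L.flatten) ↔ f u < j + 1 := by
        intro u
        rw [hmem]
        constructor
        · rintro (rfl | h) <;> omega
        · intro h
          rcases Nat.lt_succ_iff_lt_or_eq.1 h with h | h
          · exact Or.inr h
          · exact Or.inl (hinj (h.trans hv.symm))
      rcases hor with hor | ⟨a, q, t, rfl, ha⟩
      · refine ⟨[v] :: L, ?_, ?_, ?_, ?_, ?_, Or.inr ⟨v, [], L, rfl, by omega⟩⟩
        · simpa using hne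
        · simpa using hch
        · simpa using ⟨fun p hp hv' => hvL (List.mem_flatten.2 ⟨p, hp, hv'⟩), hnd⟩
        · simpa using hmem'
        · simp only [List.length_cons, List.flatten_cons, List.length_append, List.length_nil]
          omega
      · have hva : Gᶜ.Adj v a := by
          refine hf.compl_adj ?_ (by omega)
          rintro rfl
          omega
        refine ⟨(v :: a :: q) :: t, ?_, ?_, ?_, ?_, ?_, Or.inr ⟨v, a :: q, t, rfl, by omega⟩⟩
        · intro p hp
          rcases List.mem_cons.1 hp with rfl | hp
          · simp
          · exact hne p (List.mem_cons_of_mem _ hp)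
        · intro p hp
          rcases List.mem_cons.1 hp with rfl | hp
          · exact List.isChain_cons_cons.2 ⟨hva, hch _ List.mem_cons_self⟩
          · exact hch p (List.mem_cons_of_mem _ hp)
        · rw [List.flatten_cons, List.cons_append, ← List.flatten_cons]
          exact List.nodup_cons.2 ⟨hvL, hnd⟩
        · intro u
          rw [List.flatten_cons, List.cons_append, ← List.flatten_cons, List.mem_cons]
          exact hmem' u
        · simp only [List.length_cons, List.flatten_cons, List.length_append] at hlen ⊢
          omega
    · push Not at hv
      refine ⟨L, hne, hch, hnd, fun v => ?_, by omega, Or.inl hlen⟩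
      rw [hmem]
      have := hv v
      omega

/-- A list of a label class with prescribed first and last vertices. -/
lemma exists_list_of_class {f : V → ℕ} (hf : IsLab G f) {x w : V} (hw : f w = f x)
    (hxw : x ≠ w ∨ ∀ v, f v = f x → v = x) :
    ∃ q : List V, (x :: q).IsChain Gᶜ.Adj ∧ (x :: q).Nodup ∧ (∀ v, v ∈ x :: q ↔ f v = f x) ∧
      (x :: q).getLast? = some w := by
  classical
  have hchain : ∀ l : List V, l.Nodup → (∀ v, v ∈ l ↔ f v = f x) → l.IsChain Gᶜ.Adj := by
    intro l hl hm
    refine List.Pairwise.isChain (List.Pairwise.imp_of_mem ?_ hl)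
    intro a b ha hb hab
    exact hf.compl_adj hab (Or.inl (((hm a).1 ha).trans ((hm b).1 hb).symm))
  rcases hxw with hxw | hall
  · let B : Finset V := (((Finset.univ.filter fun v => f v = f x).erase x).erase w)
    have hnd : (x :: (B.toList ++ [w])).Nodup := by
      have hd : (B.toList ++ [w]).Nodup := by
        rw [List.nodup_append]
        refine ⟨B.nodup_toList, by simp, ?_⟩
        intro a ha b hb
        rw [List.mem_singleton] at hb
        rw [Finset.mem_toList] at ha
        subst hb
        exact (Finset.mem_erase.1 ha).1
      refine List.nodup_cons.2 ⟨?_, hd⟩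
      simp [B, hxw]
    have hm : ∀ v, v ∈ x :: (B.toList ++ [w]) ↔ f v = f x := by
      intro v
      by_cases h1 : v = x
      · simp [h1]
      · by_cases h2 : v = w
        · simp [h2, hw]
        · simp [B, h1, h2]
    refine ⟨B.toList ++ [w], hchain _ hnd hm, hnd, hm, ?_⟩
    rw [← List.cons_append, List.getLast?_concat]
  · obtain rfl := hall w hw
    refine ⟨[], by simp, by simp, fun v => ?_, rfl⟩
    rw [List.mem_singleton]
    exact ⟨fun h => by rw [h], hall v⟩

/-- If there are two vertices on both sides of every unused label, then the vertices with label at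
most `f x` can be listed along a path of `Gᶜ` starting at `x`. -/
lemma exists_list_of_holes {f : V → ℕ} (hf : IsLab G f) {k : ℕ} (hk : ∀ v, f v ≤ k)
    (hole : ∀ h ≤ k, (∀ v, f v ≠ h) → (∃ u u', u ≠ u' ∧ f u + 1 = h ∧ f u' + 1 = h) ∧
      (∃ w w', w ≠ w' ∧ f w = h + 1 ∧ f w' = h + 1)) (j : ℕ) :
    ∀ x, f x = j → ∃ q : List V, (x :: q).IsChain Gᶜ.Adj ∧ (x :: q).Nodup ∧
      ∀ v, v ∈ x :: q ↔ f v ≤ j := by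
  induction j using Nat.strong_induction_on with
  | _ j ih =>
  intro x hx
  -- `w` is the last vertex of the class of `x`, and `y` the first vertex of the next lower class.
  have glue : ∀ w y, f w = f x → (x ≠ w ∨ ∀ v, f v = f x → v = x) → f y < j →
      (∀ v, f v < j → f v ≤ f y) → Gᶜ.Adj w y → ∃ q : List V, (x :: q).IsChain Gᶜ.Adj ∧
      (x :: q).Nodup ∧ ∀ v, v ∈ x :: q ↔ f v ≤ j := by
    intro w y hw hxw hy hmax hwy
    obtain ⟨q, hqc, hqn, hqm, hql⟩ := exists_list_of_class hf hw hxw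
    obtain ⟨r, hrc, hrn, hrm⟩ := ih (f y) hy y rfl
    refine ⟨q ++ y :: r, ?_, ?_, ?_⟩
    · rw [← List.cons_append, List.isChain_append]
      refine ⟨hqc, hrc, ?_⟩
      intro a ha b hb
      rw [hql] at ha
      simp only [Option.mem_def, Option.some.injEq, List.head?_cons] at ha hb
      rwa [← ha, ← hb]
    · rw [← List.cons_append, List.nodup_append]
      refine ⟨hqn, hrn, ?_⟩
      rintro a ha b hb rfl
      have := (hqm a).1 ha
      have := (hrm a).1 hb
      omega
    · intro v
      rw [← List.cons_append, List.mem_append, hqm, hrm]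
      have := hmax v
      omega
  -- `x` can play the part of `w` only if it is alone in its class.
  have hw0 : ∃ w, f w = f x ∧ (x ≠ w ∨ ∀ v, f v = f x → v = x) := by
    by_cases h : ∀ v, f v = f x → v = x
    · exact ⟨x, rfl, Or.inr h⟩
    · push Not at h
      obtain ⟨w, h1, h2⟩ := h
      exact ⟨w, h1, Or.inl h2.symm⟩
  obtain ⟨w, hw, hxw⟩ := hw0
  rcases Nat.eq_zero_or_pos j with rfl | hj
  · obtain ⟨q, hqc, hqn, hqm, -⟩ := exists_list_of_class hf hw hxw
    refine ⟨q, hqc, hqn, fun v => ?_⟩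
    rw [hqm]
    omega
  by_cases hy : ∃ y, f y + 1 = j
  · obtain ⟨y, hy⟩ := hy
    refine glue w y hw hxw (by omega) (fun v hv => by omega) (hf.compl_adj ?_ (by omega))
    rintro rfl
    omega
  · push Not at hy
    have hxk := hk x
    obtain ⟨⟨u, u', huu, hu, hu'⟩, ⟨a, b, hab, ha, hb⟩⟩ := hole (j - 1) (by omega)
      (fun v => by have := hy v; omega)
    obtain ⟨w, hw, hxw⟩ : ∃ w, f w = f x ∧ x ≠ w := by
      by_cases hxa : x = a
      · exact ⟨b, by omega, hxa ▸ hab⟩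
      · exact ⟨a, by omega, hxa⟩
    have hmax : ∀ v, f v < j → f v ≤ f u := fun v hv => by
      have := hy v
      omega
    by_cases hwu : G.Adj w u
    · have hwu' : ¬ G.Adj w u' := fun h => hf.2 u u' w huu hwu.symm h.symm (by omega)
      refine glue w u' hw (Or.inl hxw) (by omega) (fun v hv => ?_) ?_
      · have := hmax v hv
        omega
      · refine (SimpleGraph.compl_adj _ _ _).2 ⟨?_, hwu'⟩
        rintro rfl
        omega
    · refine glue w u hw (Or.inl hxw) (by omega) hmax ?_
      refine (SimpleGraph.compl_adj _ _ _).2 ⟨?_, hwu⟩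
      rintro rfl
      omega

/-- The lower bound: a labelling of `G` in `{0, …, k}` yields a path cover of `Gᶜ`. -/
lemma IsLab.exists_hasPathCover [Nonempty V] {f : V → ℕ} {k : ℕ} (hf : IsLab G f)
    (hk : ∀ v, f v ≤ k) :
    ∃ m, HasPathCover Gᶜ m ∧ (m = 1 ∨ m + Fintype.card V ≤ k + 2) := by
  obtain ⟨g, hg⟩ := exists_isUnrefinable hf hk
  by_cases hinj : g.Injective
  · obtain ⟨L, hne, hch, hnd, hmem, hlen, -⟩ := exists_lists_of_injective hg.lab hinj (k + 1)
    have hL : IsPathSystem Gᶜ L :=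
      ⟨hne, hch, hnd, fun v => (hmem v).2 (Nat.lt_succ_of_le (hg.le v))⟩
    rw [hL.length_flatten] at hlen
    exact ⟨_, hL.hasPathCover, Or.inr hlen⟩
  · simp only [Function.Injective] at hinj
    push Not at hinj
    obtain ⟨a, b, hgab, hab⟩ := hinj
    obtain ⟨x, hx⟩ := Finite.exists_max g
    obtain ⟨q, hqc, hqn, hqm⟩ := exists_list_of_holes hg.lab hg.le
      (fun h hh hv => hg.two_around_hole hh hv hab hgab) (g x) x rfl
    have hL : IsPathSystem Gᶜ [x :: q] :=
      ⟨by simp, by simpa using hqc, by simpa using hqn, fun v => by simpa using (hqm v).2 (hx v)⟩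
    exact ⟨1, hL.hasPathCover, Or.inl rfl⟩

end PathSystems

/-- For a graph `G` with `n ≥ 1` vertices and complement `Ḡ`:
(i) `λ(G) ≤ n − 1` iff `pc(Ḡ) = 1`, and
(ii) for every `r ≥ 2`, `λ(G) = n + r − 2` iff `pc(Ḡ) = r`. -/
theorem statement18 {V : Type*} [Fintype V] [Nonempty V] (G : SimpleGraph V) :
    (lambdaL21 G ≤ Fintype.card V - 1 ↔ pathCoverNumber Gᶜ = 1) ∧
      (∀ r : ℕ, 2 ≤ r →
        (lambdaL21 G = Fintype.card V + r - 2 ↔ pathCoverNumber Gᶜ = r)) := by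
  classical
  have hn : 0 < Fintype.card V := Fintype.card_pos
  -- Both infima are over nonempty sets: the one-vertex paths cover `Gᶜ`.
  have hne : {m | HasPathCover Gᶜ m}.Nonempty := by
    let e := (Fintype.equivFin V).symm
    refine ⟨Fintype.card V, fun i => e i, fun i => e i, fun i => Walk.nil, fun i => Walk.IsPath.nil,
      ?_, fun v => ⟨e.symm v, by simp⟩⟩
    intro i j hij v hi hj
    simp only [Walk.support_nil, List.mem_singleton] at hi hj
    exact hij (e.injective (hi.symm.trans hj))
  have hpc : HasPathCover Gᶜ (pathCoverNumber Gᶜ) := Nat.sInf_mem hne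
  have hpos : 1 ≤ pathCoverNumber Gᶜ := by
    by_contra h0
    obtain ⟨s, t, P, -, -, hcov⟩ := hpc
    obtain ⟨i, -⟩ := hcov (Classical.arbitrary V)
    exact h0 (Nat.one_le_of_lt i.2)
  obtain ⟨f, hf, hfk⟩ := hpc.exists_isLab
  have hfmem : Fintype.card V + pathCoverNumber Gᶜ - 2 ∈
      {k | ∃ f : V → ℕ, IsL21Labelling G f ∧ ∀ v, f v ≤ k} :=
    ⟨f, isL21Labelling_iff.2 hf, fun v => by have := hfk v; omega⟩
  have hup : lambdaL21 G ≤ Fintype.card V + pathCoverNumber Gᶜ - 2 := Nat.sInf_le hfmem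
  obtain ⟨g, hg, hgk⟩ : ∃ g : V → ℕ, IsL21Labelling G g ∧ ∀ v, g v ≤ lambdaL21 G :=
    Nat.sInf_mem ⟨_, hfmem⟩
  obtain ⟨m, hm, hmk⟩ := (isL21Labelling_iff.1 hg).exists_hasPathCover hgk
  have hle : pathCoverNumber Gᶜ ≤ m := Nat.sInf_le hm
  refine ⟨?_, fun r hr => ?_⟩ <;> omega
end
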